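/- arXiv:math-ph/9904013 — 2 statements merged into one kernel-verified Lean document; each statement's English description precedes it below -/
import Mathlib

section
/- Let n ≥ 4 be an integer and let I(x,t) = −∂_t φ(x,t) + ∂_x²(φ(x,t) − κ|x|/√t) − (2 ū(x,t) φ(x,t) + φ(x,t)²)^n. Then there exists a constant c_I > 0 such that for all t ≥ 1, ∫_ℝ |I(√t x, t)| dx ≤ c_I t^{−1−4γ}. -/
noncomputable def kap : ℝ := 1 / Real.sqrt Real.pi

noncomputable def kap3 : ℝ := -kap / 12

noncomputable def gam (n : ℕ) : ℝ := 1 / (2 * (n : ℝ) + 1)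

noncomputable def eps (n : ℕ) : ℝ := 1 / ((n : ℝ) - 1)

noncomputable def alph (n : ℕ) : ℝ := 1 / 2 - gam n

noncomputable def del (n : ℕ) : ℝ := ((n : ℝ) + 2) / ((n : ℝ) - 1)

noncomputable def lam (n : ℕ) : ℝ :=
  (del n * (del n + 1) / (2 * kap) ^ n) ^ (1 / ((n : ℝ) - 1))

noncomputable def lam0 (n : ℕ) : ℝ :=
  (lam n / (2 * kap)) *
    (-2 * (n : ℝ) * kap3 * del n * (del n + 1) - kap * (del n - 2 * eps n)) /
    (((n : ℝ) - 1) * del n * (del n + 1) + 2 * (2 * del n - 1))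

def IsReactiveProfile (n : ℕ) (η : ℝ → ℝ) : Prop :=
  ContDiffOn ℝ 2 η (Set.Ici 0) ∧
  (∀ z ∈ Set.Ici (0:ℝ), 0 < η z) ∧
  (∀ z ∈ Set.Ici (0:ℝ),
    derivWithin (derivWithin η (Set.Ici 0)) (Set.Ici 0) z
      = (2 * kap * z * η z + (η z) ^ 2) ^ n) ∧
  derivWithin η (Set.Ici 0) 0 = -kap ∧
  Filter.Tendsto η Filter.atTop (nhds 0)

/-- The corrector h: C² on [0,∞), satisfies
h'' + γη + αzη' = n(2κzη+η²)^{n−1}((2κz+2η)h + 2κ₃z³η), h'(0) = 0,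
h(z) − λ₀ z^{2−δ} → 0 as z → ∞. -/
def IsCorrector (n : ℕ) (η h : ℝ → ℝ) : Prop :=
  ContDiffOn ℝ 2 h (Set.Ici 0) ∧
  (∀ z ∈ Set.Ici (0:ℝ),
    derivWithin (derivWithin h (Set.Ici 0)) (Set.Ici 0) z + gam n * η z
        + alph n * z * derivWithin η (Set.Ici 0) z
      = (n : ℝ) * (2 * kap * z * η z + (η z) ^ 2) ^ (n - 1)
          * ((2 * kap * z + 2 * η z) * h z + 2 * kap3 * z ^ 3 * η z)) ∧
  derivWithin h (Set.Ici 0) 0 = 0 ∧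
  Filter.Tendsto (fun z : ℝ => h z - lam0 n * z ^ (2 - del n)) Filter.atTop (nhds 0)

noncomputable def mu1 (y : ℝ) : ℝ :=
  (2 / Real.sqrt Real.pi) * ∫ σ in (0:ℝ)..(y / 2), Real.exp (-σ ^ 2)

def IsDiffusiveProfile (n : ℕ) (μ : ℝ → ℝ) : Prop :=
  ContDiffOn ℝ 2 μ (Set.Ioi 0) ∧
  (∀ y ∈ Set.Ioi (0:ℝ), 0 < μ y) ∧
  (∀ y ∈ Set.Ioi (0:ℝ),
    deriv (deriv μ) y + y / 2 * deriv μ y + eps n * μ y = (2 * mu1 y * μ y) ^ n) ∧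
  Filter.Tendsto (fun y : ℝ => y ^ del n * μ y) (nhdsWithin 0 (Set.Ioi 0)) (nhds (lam n)) ∧
  Filter.Tendsto (fun y : ℝ => y ^ (2 * eps n) * μ y) Filter.atTop (nhds 0)

/-- u(x,t) = −erf(x/(2√t)). -/
noncomputable def uu (x t : ℝ) : ℝ := -mu1 (x / Real.sqrt t)

/-- ū(x,t) = μ₁(|x|/√t). -/
noncomputable def ubar (x t : ℝ) : ℝ := mu1 (|x| / Real.sqrt t)

/-- φ₁(z) = η(z) − λ z^{−δ}. -/
noncomputable def phi1 (n : ℕ) (η : ℝ → ℝ) (z : ℝ) : ℝ := η z - lam n * z ^ (-(del n))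

/-- φ₂(z) = −λ₀ z^{2−δ} + h(z). -/
noncomputable def phi2 (n : ℕ) (h : ℝ → ℝ) (z : ℝ) : ℝ := -lam0 n * z ^ (2 - del n) + h z

/-- μ₃(y) = μ₂(y) − λ y^{−δ}. -/
noncomputable def mu3 (n : ℕ) (μ : ℝ → ℝ) (y : ℝ) : ℝ := μ y - lam n * y ^ (-(del n))

/-- The asymptotic profile v_∞. -/
noncomputable def vInf (n : ℕ) (η μ h : ℝ → ℝ) (x t : ℝ) : ℝ :=
  mu1 (|x| / Real.sqrt t) + t ^ (-(eps n)) * μ (|x| / Real.sqrt t)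
    + t ^ (-(gam n)) * phi1 n η (|x| / t ^ alph n)
    + t ^ (-(3 * gam n)) * phi2 n h (|x| / t ^ alph n)

/-- φ(x,t) = t^{−γ} η(|z|) + t^{−ε} μ₃(|y|) + t^{−3γ} φ₂(|z|). -/
noncomputable def phiFun (n : ℕ) (η μ h : ℝ → ℝ) (x t : ℝ) : ℝ :=
  t ^ (-(gam n)) * η (|x| / t ^ alph n) + t ^ (-(eps n)) * mu3 n μ (|x| / Real.sqrt t)
    + t ^ (-(3 * gam n)) * phi2 n h (|x| / t ^ alph n)

/-- The inhomogeneous term I(x,t) = −∂ₜφ(x,t) + ∂ₓ²(φ(x,t) − κ|x|/√t)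
 − (2ū(x,t)φ(x,t) + φ(x,t)²)ⁿ. -/
noncomputable def IFun (n : ℕ) (η μ h : ℝ → ℝ) (x t : ℝ) : ℝ :=
  -(deriv (fun s : ℝ => phiFun n η μ h x s) t)
    + deriv (deriv (fun x' : ℝ => phiFun n η μ h x' t - kap * |x'| / Real.sqrt t)) x
    - (2 * ubar x t * phiFun n η μ h x t + phiFun n η μ h x t ^ 2) ^ n

section
open Filter Topology Set

/-! ### Generic calculus lemmas -/

lemma aux_second_deriv_nonpos {f f1 : ℝ → ℝ} {f2 c : ℝ} (hmax : IsLocalMax f c)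
    (h1 : ∀ᶠ z in 𝓝 c, HasDerivAt f (f1 z) z) (h2 : HasDerivAt f1 f2 c) :
    f1 c = 0 ∧ f2 ≤ 0 := by
  have hc := h1.self_of_nhds
  have h0 : f1 c = 0 := hmax.hasDerivAt_eq_zero hc
  refine ⟨h0, ?_⟩
  by_contra hpos
  push Not at hpos
  have hd : deriv f =ᶠ[𝓝 c] f1 := h1.mono fun z hz => hz.deriv
  have hdd : deriv (deriv f) c = f2 := by rw [hd.deriv_eq]; exact h2.deriv
  have hmin := isLocalMin_of_deriv_deriv_pos (f := f) (x₀ := c) (by rw [hdd]; exact hpos)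
    (by rw [hc.deriv, h0]) hc.continuousAt
  have hconst : f =ᶠ[𝓝 c] fun _ => f c := by
    filter_upwards [hmax, hmin] with z hz1 hz2
    exact le_antisymm hz1 hz2
  have hd0 : deriv f =ᶠ[𝓝 c] fun _ => (0:ℝ) := by
    have := hconst.deriv
    simpa using this
  have : deriv (deriv f) c = 0 := by rw [hd0.deriv_eq]; simp
  linarith

/-- Maximum principle on a compact interval. -/
lemma aux_maxP {f f1 f2 : ℝ → ℝ} {a b : ℝ} (hab : a ≤ b) (hc : ContinuousOn f (Icc a b))
    (h1 : ∀ z ∈ Ioo a b, HasDerivAt f (f1 z) z) (h2 : ∀ z ∈ Ioo a b, HasDerivAt f1 (f2 z) z)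
    (ha : f a ≤ 0) (hb : f b ≤ 0)
    (hpos : ∀ z ∈ Ioo a b, 0 < f z → f1 z = 0 → 0 < f2 z) :
    ∀ z ∈ Icc a b, f z ≤ 0 := by
  obtain ⟨c, hcm, hmax⟩ := isCompact_Icc.exists_isMaxOn (nonempty_Icc.2 hab) hc
  have key : f c ≤ 0 := by
    by_contra hcp
    push Not at hcp
    have hca : c ≠ a := by rintro rfl; linarith
    have hcb : c ≠ b := by rintro rfl; linarith
    have hcI : c ∈ Ioo a b := ⟨lt_of_le_of_ne hcm.1 (Ne.symm hca), lt_of_le_of_ne hcm.2 hcb⟩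
    have hl : IsLocalMax f c := hmax.isLocalMax (Icc_mem_nhds hcI.1 hcI.2)
    obtain ⟨e1, e2⟩ := aux_second_deriv_nonpos hl
      (by filter_upwards [Ioo_mem_nhds hcI.1 hcI.2] with z hz using h1 z hz) (h2 c hcI)
    have := hpos c hcI hcp e1
    linarith
  intro z hz
  exact (hmax hz).trans key

/-- Maximum principle on a half line. -/
lemma aux_maxP_infty {f f1 f2 : ℝ → ℝ} {a : ℝ} (hc : ContinuousOn f (Ici a))
    (h1 : ∀ z > a, HasDerivAt f (f1 z) z) (h2 : ∀ z > a, HasDerivAt f1 (f2 z) z)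
    (ha : f a ≤ 0) (hlim : Tendsto f atTop (𝓝 0))
    (hpos : ∀ z > a, 0 < f z → 0 < f2 z) :
    ∀ z ≥ a, f z ≤ 0 := by
  intro z0 hz0
  by_contra hcp
  push Not at hcp
  have hev : ∀ᶠ z in atTop, f z < f z0 / 2 := hlim.eventually_lt_const (by linarith)
  obtain ⟨b, hb1, hb2⟩ := (hev.and (eventually_ge_atTop z0)).exists
  have := aux_maxP (f := fun z => f z - f z0 / 2) (f1 := f1) (f2 := f2) (a := a) (b := b)
    (hz0.le.trans hb2)
    ((hc.mono Icc_subset_Ici_self).sub continuousOn_const)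
    (fun z hz => (h1 z hz.1).sub_const _) (fun z hz => h2 z hz.1)
    (by linarith) (by linarith) (fun z hz hp _ => hpos z hz.1 (by linarith)) z0 ⟨hz0, hb2⟩
  linarith

lemma aux_hasDerivAt_rpow (p : ℝ) {z : ℝ} (hz : 0 < z) :
    HasDerivAt (fun x : ℝ => x ^ p) (p * (z ^ p / z)) z := by
  have := Real.hasDerivAt_rpow_const (x := z) (p := p) (Or.inl hz.ne')
  rwa [Real.rpow_sub_one hz.ne'] at this

lemma aux_hasDerivAt_rpow2 (p : ℝ) {z : ℝ} (hz : 0 < z) :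
    HasDerivAt (fun x : ℝ => p * (x ^ p / x)) (p * (p - 1) * (z ^ p / z ^ 2)) z := by
  have h := ((aux_hasDerivAt_rpow p hz).div (hasDerivAt_id z) hz.ne').const_mul p
  refine h.congr_deriv ?_
  simp only [id]
  field_simp

/-- Linear comparison at infinity. -/
lemma aux_decay {u u1 u2 : ℝ → ℝ} {a k K ρ : ℝ} (ha : 0 < a) (hρ : 0 < ρ)
    (hk : ρ * (ρ + 1) < k) (hc : ContinuousOn u (Ici a))
    (h1 : ∀ z > a, HasDerivAt u (u1 z) z) (h2 : ∀ z > a, HasDerivAt u1 (u2 z) z)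
    (hlim : Tendsto u atTop (𝓝 0))
    (hpos : ∀ z > a, 0 < u z → k * (u z / z ^ 2) - K * (z ^ (-ρ) / z ^ 2) ≤ u2 z) :
    ∃ C > 0, ∀ z ≥ a, u z ≤ C * z ^ (-ρ) := by
  have hap : 0 < a ^ (-ρ) := Real.rpow_pos_of_pos ha _
  set C : ℝ := |K| / (k - ρ * (ρ + 1)) + |u a| / a ^ (-ρ) + 1 with hC
  have hk' : 0 < k - ρ * (ρ + 1) := by linarith
  have e1 : 0 ≤ |K| / (k - ρ * (ρ + 1)) := by positivity
  have e2 : 0 ≤ |u a| / a ^ (-ρ) := by positivity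
  have hCpos : 0 < C := by linarith
  have hCK : K < C * (k - ρ * (ρ + 1)) := by
    have : |K| / (k - ρ * (ρ + 1)) < C := by linarith
    rw [div_lt_iff₀ hk'] at this
    exact (le_abs_self K).trans_lt this
  have hCa : u a ≤ C * a ^ (-ρ) := by
    have : |u a| / a ^ (-ρ) ≤ C := by linarith
    rw [div_le_iff₀ hap] at this
    exact (le_abs_self _).trans this
  refine ⟨C, hCpos, ?_⟩
  have := aux_maxP_infty (f := fun z => u z - C * z ^ (-ρ))
    (f1 := fun z => u1 z - C * (-ρ * (z ^ (-ρ) / z)))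
    (f2 := fun z => u2 z - C * (-ρ * (-ρ - 1) * (z ^ (-ρ) / z ^ 2))) (a := a)
    (hc.sub (continuousOn_const.mul (continuousOn_id.rpow_const
      (fun x hx => Or.inl (ha.trans_le hx).ne'))))
    (fun z hz => (h1 z hz).sub ((aux_hasDerivAt_rpow (-ρ) (ha.trans hz)).const_mul C))
    (fun z hz => (h2 z hz).sub ((aux_hasDerivAt_rpow2 (-ρ) (ha.trans hz)).const_mul C))
    (by simpa using hCa)
    (by simpa using hlim.sub ((tendsto_rpow_neg_atTop hρ).const_mul C))
    (by
      intro z hz hp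
      have hz0 : 0 < z := ha.trans hz
      have hw : 0 < z ^ (-ρ) := Real.rpow_pos_of_pos hz0 _
      have hq : 0 < z ^ (-ρ) / z ^ 2 := by positivity
      have hu : 0 < u z := by nlinarith
      have h3 := hpos z hz hu
      have hkpos : 0 < k := by nlinarith
      have h4 : k * (C * z ^ (-ρ) / z ^ 2) ≤ k * (u z / z ^ 2) := by
        apply mul_le_mul_of_nonneg_left _ hkpos.le
        apply div_le_div_of_nonneg_right _ (by positivity)
        linarith
      have h5 : K * (z ^ (-ρ) / z ^ 2) < C * (k - ρ * (ρ + 1)) * (z ^ (-ρ) / z ^ 2) :=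
        mul_lt_mul_of_pos_right hCK hq
      have h6 : k * (C * z ^ (-ρ) / z ^ 2) = k * C * (z ^ (-ρ) / z ^ 2) := by ring
      nlinarith)
  intro z hz
  have := this z hz
  linarith

/-- Derivative bound from function and second derivative bounds. -/
lemma aux_deriv_bound {u u1 u2 : ℝ → ℝ} {C K ρ : ℝ} (hρ : 0 < ρ) (hC : 0 ≤ C) (hK : 0 ≤ K)
    (h1 : ∀ z ≥ 1, HasDerivAt u (u1 z) z) (h2 : ∀ z ≥ 1, HasDerivAt u1 (u2 z) z)
    (hu : ∀ z ≥ 1, |u z| ≤ C * z ^ (-ρ)) (hu2 : ∀ z ≥ 1, |u2 z| ≤ K * (z ^ (-ρ) / z ^ 2)) :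
    ∀ z ≥ 1, |u1 z| ≤ (2 * C + K) * (z ^ (-ρ) / z) := by
  intro z hz
  have hz0 : (0:ℝ) < z := by linarith
  have hw : 0 < z ^ (-ρ) := Real.rpow_pos_of_pos hz0 _
  have hmono : ∀ x ≥ z, x ^ (-ρ) ≤ z ^ (-ρ) := fun x hx =>
    Real.rpow_le_rpow_of_nonpos hz0 hx (by linarith)
  have hlt : z < 2 * z := by linarith
  obtain ⟨c, hc, hce⟩ := exists_hasDerivAt_eq_slope u u1 hlt
    (fun x hx => (h1 x (hz.le.trans hx.1)).continuousAt.continuousWithinAt)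
    (fun x hx => h1 x (hz.le.trans hx.1.le))
  obtain ⟨d, hd, hde⟩ := exists_hasDerivAt_eq_slope u1 u2 hc.1
    (fun x hx => (h2 x (hz.le.trans hx.1)).continuousAt.continuousWithinAt)
    (fun x hx => h2 x (hz.le.trans hx.1.le))
  have e1 : |u1 c| ≤ 2 * C * (z ^ (-ρ) / z) := by
    rw [hce, show 2 * z - z = z by ring, abs_div, abs_of_pos hz0, ← mul_div_assoc]
    apply div_le_div_of_nonneg_right _ hz0.le
    have a1 := hu (2 * z) (by linarith)
    have a2 := hu z hz
    have a3 := hmono (2 * z) (by linarith)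
    have a4 := abs_sub (u (2*z)) (u z)
    nlinarith
  have e2 : |u1 c - u1 z| ≤ K * (z ^ (-ρ) / z) := by
    have hcz : 0 < c - z := by linarith [hc.1]
    have : u1 c - u1 z = u2 d * (c - z) := by rw [hde]; field_simp
    rw [this, abs_mul, abs_of_pos hcz]
    have a1 := hu2 d (hz.le.trans hd.1.le)
    have a2 : d ^ (-ρ) / d ^ 2 ≤ z ^ (-ρ) / z ^ 2 := by
      apply div_le_div₀ hw.le (hmono d hd.1.le) (by positivity)
      exact pow_le_pow_left₀ hz0.le hd.1.le 2
    have a3 : |u2 d| ≤ K * (z ^ (-ρ) / z ^ 2) := a1.trans (mul_le_mul_of_nonneg_left a2 hK)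
    have a4 : c - z ≤ z := by linarith [hc.2]
    calc |u2 d| * (c - z) ≤ K * (z ^ (-ρ) / z ^ 2) * z :=
          mul_le_mul a3 a4 hcz.le (by positivity)
      _ = K * (z ^ (-ρ) / z) := by field_simp
  have : u1 z = u1 c - (u1 c - u1 z) := by ring
  rw [this]
  have := abs_sub (u1 c) (u1 c - u1 z)
  nlinarith

/-- Extend a bound from a neighbourhood of infinity to `[1,∞)`. -/
lemma aux_ext_bound {f w : ℝ → ℝ} {a C : ℝ} (hf : ContinuousOn f (Ici 1))
    (hw : ContinuousOn w (Ici 1)) (hwp : ∀ z ≥ 1, 0 < w z)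
    (hb : ∀ z ≥ a, |f z| ≤ C * w z) : ∃ C' > 0, ∀ z ≥ 1, |f z| ≤ C' * w z := by
  have hq : ContinuousOn (fun z => |f z| / w z) (Icc 1 (max a 1)) :=
    (hf.abs.div hw (fun z hz => (hwp z hz).ne')).mono Icc_subset_Ici_self
  obtain ⟨M, hM⟩ := (isCompact_Icc.image_of_continuousOn hq).bddAbove
  refine ⟨|C| + |M| + 1, by positivity, fun z hz => ?_⟩
  have hwz := hwp z hz
  rcases le_total a z with h | h
  · have := hb z h
    have h2 := le_abs_self C
    have h3 := abs_nonneg M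
    nlinarith
  · have : |f z| / w z ≤ M := hM ⟨z, ⟨hz, h.trans (le_max_left _ _)⟩, rfl⟩
    rw [div_le_iff₀ hwz] at this
    have h2 := le_abs_self M
    have h3 := abs_nonneg C
    nlinarith

end

section
open Filter Topology Set

/-! ### Taylor remainder algebra -/

def auxS : ℕ → ℝ → ℝ → ℝ
  | 0, _, _ => 0
  | k + 1, a, b => k * a ^ (k - 1) + (a + b) * auxS k a b

lemma auxS_eq (k : ℕ) (a b : ℝ) :
    (a + b) ^ k - a ^ k - k * a ^ (k - 1) * b = b ^ 2 * auxS k a b := by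
  induction k with
  | zero => simp [auxS]
  | succ k ih =>
    have h1 : (a + b) ^ k = a ^ k + k * a ^ (k - 1) * b + b ^ 2 * auxS k a b := by linarith
    have h2 : (k : ℝ) * a ^ (k - 1) * a = k * a ^ k := by
      rcases k with _ | k
      · simp
      · simp [pow_succ, mul_assoc]
    simp only [auxS, Nat.add_sub_cancel, pow_succ (a + b) k, pow_succ a k, h1]
    push_cast
    linear_combination b * h2

lemma auxS_contDiff (k : ℕ) : ContDiff ℝ 1 (fun p : ℝ × ℝ => auxS k p.1 p.2) := by
  induction k with
  | zero => simpa [auxS] using contDiff_const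
  | succ k ih =>
    simp only [auxS]
    fun_prop

def auxH (n : ℕ) (Y a b1 b2 : ℝ) : ℝ :=
  n * a ^ (n - 1) * b2 + (b1 + b2 * Y) ^ 2 * auxS n a ((b1 + b2 * Y) * Y)

lemma auxH_eq (n : ℕ) (Y a b1 b2 : ℝ) :
    (a + b1 * Y + b2 * Y ^ 2) ^ n - a ^ n - n * a ^ (n - 1) * (b1 * Y) = Y ^ 2 * auxH n Y a b1 b2 := by
  have := auxS_eq n a ((b1 + b2 * Y) * Y)
  have h2 : a + b1 * Y + b2 * Y ^ 2 = a + (b1 + b2 * Y) * Y := by ring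
  rw [h2, auxH]
  linear_combination this

lemma auxH_contDiff (n : ℕ) :
    ContDiff ℝ 1 (fun p : ℝ × ℝ × ℝ × ℝ => auxH n p.1 p.2.1 p.2.2.1 p.2.2.2) := by
  have h := auxS_contDiff n
  have h2 : ContDiff ℝ 1 (fun p : ℝ × ℝ × ℝ × ℝ =>
      auxS n p.2.1 ((p.2.2.1 + p.2.2.2 * p.1) * p.1)) :=
    h.comp (f := fun p : ℝ × ℝ × ℝ × ℝ => (p.2.1, (p.2.2.1 + p.2.2.2 * p.1) * p.1)) (by fun_prop)
  simp only [auxH]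
  fun_prop

lemma auxH_lip (n : ℕ) (M : ℝ) : ∃ C ≥ 0, ∀ Y a b1 b2 a' b1' b2' : ℝ, |Y| ≤ M → |a| ≤ M →
    |b1| ≤ M → |b2| ≤ M → |a'| ≤ M → |b1'| ≤ M → |b2'| ≤ M →
    |auxH n Y a b1 b2 - auxH n Y a' b1' b2'| ≤ C * (|a - a'| + |b1 - b1'| + |b2 - b2'|) := by
  set s : Set ℝ := Icc (-M) M
  have hs : Convex ℝ s := convex_Icc _ _
  have hs' : IsCompact s := isCompact_Icc
  obtain ⟨K, hK⟩ := (auxH_contDiff n).contDiffOn.exists_lipschitzOnWith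
    (s := s ×ˢ s ×ˢ s ×ˢ s) one_ne_zero (hs.prod (hs.prod (hs.prod hs)))
    (hs'.prod (hs'.prod (hs'.prod hs')))
  refine ⟨K, K.2, ?_⟩
  intro Y a b1 b2 a' b1' b2' hY ha h1 h2 ha' h1' h2'
  rw [abs_le] at hY ha h1 h2 ha' h1' h2'
  have := hK.dist_le_mul (Y, a, b1, b2) ⟨hY, ha, h1, h2⟩ (Y, a', b1', b2') ⟨hY, ha', h1', h2'⟩
  simp only [Prod.dist_eq, Real.dist_eq] at this
  refine this.trans (mul_le_mul_of_nonneg_left ?_ K.2)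
  have p1 := abs_nonneg (a - a')
  have p2 := abs_nonneg (b1 - b1')
  have p3 := abs_nonneg (b2 - b2')
  simp only [sub_self, abs_zero]
  refine max_le (by linarith) (max_le (by linarith) (max_le (by linarith) (by linarith)))

lemma auxH_bound (n : ℕ) (M : ℝ) : ∃ C ≥ 0, ∀ Y a b1 b2 : ℝ, |Y| ≤ M → |a| ≤ M →
    |b1| ≤ M → |b2| ≤ M → |auxH n Y a b1 b2| ≤ C := by
  set s : Set ℝ := Icc (-M) M
  have hs' : IsCompact s := isCompact_Icc
  obtain ⟨C, hC⟩ := (hs'.prod (hs'.prod (hs'.prod hs'))).exists_bound_of_continuousOn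
    (auxH_contDiff n).continuous.continuousOn
  refine ⟨|C|, abs_nonneg _, ?_⟩
  intro Y a b1 b2 hY ha h1 h2
  rw [abs_le] at hY ha h1 h2
  exact (hC (Y, a, b1, b2) ⟨hY, ha, h1, h2⟩).trans (le_abs_self C)

/-! ### Constants -/

lemma kap_pos : 0 < kap := by unfold kap; positivity

lemma n_ge {n : ℕ} (hn : 4 ≤ n) : (4:ℝ) ≤ n := by exact_mod_cast hn

lemma gam_pos {n : ℕ} (hn : 4 ≤ n) : 0 < gam n := by unfold gam; positivity

lemma eps_pos {n : ℕ} (hn : 4 ≤ n) : 0 < eps n := by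
  have := n_ge hn
  unfold eps; apply one_div_pos.2; linarith

lemma eps_le {n : ℕ} (hn : 4 ≤ n) : eps n ≤ 1 / 3 := by
  have := n_ge hn
  unfold eps
  apply one_div_le_one_div_of_le <;> linarith

lemma del_eq {n : ℕ} (hn : 4 ≤ n) : del n = 1 + 3 * eps n := by
  have := n_ge hn
  have : (n:ℝ) - 1 ≠ 0 := by linarith
  unfold del eps; field_simp; ring

lemma del_gt {n : ℕ} (hn : 4 ≤ n) : 1 < del n := by rw [del_eq hn]; linarith [eps_pos hn]
lemma del_le {n : ℕ} (hn : 4 ≤ n) : del n ≤ 2 := by rw [del_eq hn]; linarith [eps_le hn]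

lemma eps_eq {n : ℕ} (hn : 4 ≤ n) : eps n = gam n * (1 + del n) := by
  have := n_ge hn
  have : (n:ℝ) - 1 ≠ 0 := by linarith
  unfold del eps gam; field_simp; ring

lemma gam_n {n : ℕ} (hn : 4 ≤ n) : 2 * n * gam n = 1 - gam n := by
  have := n_ge hn
  unfold gam; field_simp; ring

lemma eps_n {n : ℕ} (hn : 4 ≤ n) : (n - 1) * eps n = 1 := by
  have := n_ge hn
  have : (n:ℝ) - 1 ≠ 0 := by linarith
  unfold eps; field_simp

lemma n_del {n : ℕ} (hn : 4 ≤ n) : (n:ℝ) * (1 - del n) = -del n - 2 := by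
  have := n_ge hn
  have : (n:ℝ) - 1 ≠ 0 := by linarith
  unfold del; field_simp; ring

lemma n_dd {n : ℕ} (hn : 4 ≤ n) : 22 ≤ (n:ℝ) * (del n * (del n + 1)) := by
  have h := n_ge hn
  have h1 : 0 < (n:ℝ) - 1 := by linarith
  have h2 : (n:ℝ) - 1 ≠ 0 := h1.ne'
  have : (n:ℝ) * (del n * (del n + 1)) = n * (n + 2) * (2 * n + 1) / ((n:ℝ) - 1) ^ 2 := by
    unfold del; field_simp; ring
  rw [this, le_div_iff₀ (by positivity)]
  nlinarith [mul_nonneg (mul_nonneg (sub_nonneg.2 h) (sub_nonneg.2 h)) (sub_nonneg.2 h), mul_nonneg (sub_nonneg.2 h) (sub_nonneg.2 h)]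

lemma lam_pos {n : ℕ} (hn : 4 ≤ n) : 0 < lam n := by
  have := kap_pos
  have := del_gt hn
  unfold lam; apply Real.rpow_pos_of_pos; positivity

lemma lam_eq {n : ℕ} (hn : 4 ≤ n) : (2 * kap) ^ n * lam n ^ n = del n * (del n + 1) * lam n := by
  have hk := kap_pos
  have hd := del_gt hn
  have h := n_ge hn
  have h2 : (n:ℝ) - 1 ≠ 0 := by linarith
  have hb : 0 ≤ del n * (del n + 1) / (2 * kap) ^ n := by positivity
  have h1 : lam n ^ (n - 1) = del n * (del n + 1) / (2 * kap) ^ n := by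
    unfold lam
    rw [← Real.rpow_natCast, ← Real.rpow_mul hb]
    have : 1 / ((n:ℝ) - 1) * ((n - 1 : ℕ) : ℝ) = 1 := by
      rw [Nat.cast_sub (by omega)]; push_cast; field_simp
    rw [this, Real.rpow_one]
  have h3 : lam n ^ n = lam n ^ (n - 1) * lam n := by
    rw [← pow_succ]; congr 1; omega
  rw [h3, h1]; field_simp

noncomputable def auxp (n : ℕ) : ℝ := lam0 n / lam n

lemma lam0_eq {n : ℕ} (hn : 4 ≤ n) : lam0 n = lam n * auxp n := by
  unfold auxp; have := lam_pos hn; field_simp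

lemma auxp_eq {n : ℕ} (hn : 4 ≤ n) : eps n - del n / 2 + auxp n * ((2 - del n) * (1 - del n))
    = n * (del n * (del n + 1)) * (auxp n - 1 / 12) := by
  have hl := lam_pos hn
  have hk := kap_pos
  have h := n_ge hn
  have hd := del_gt hn
  have hD : ((n : ℝ) - 1) * del n * (del n + 1) + 2 * (2 * del n - 1) ≠ 0 := by
    have : 0 < ((n : ℝ) - 1) * del n * (del n + 1) + 2 * (2 * del n - 1) := by
      have : 0 < (n:ℝ) - 1 := by linarith
      have : 0 < 2 * del n - 1 := by linarith
      positivity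
    exact this.ne'
  have hp : auxp n * (((n : ℝ) - 1) * del n * (del n + 1) + 2 * (2 * del n - 1)) =
      n / 12 * del n * (del n + 1) - (del n - 2 * eps n) / 2 := by
    unfold auxp lam0 kap3
    generalize ((n : ℝ) - 1) * del n * (del n + 1) + 2 * (2 * del n - 1) = DD at hD ⊢
    field_simp
  linear_combination -hp

lemma alph_eq {n : ℕ} (hn : 4 ≤ n) : eps n - del n / 2 = gam n - alph n * del n := by
  rw [eps_eq hn, alph]; ring

lemma alph_pos {n : ℕ} (hn : 4 ≤ n) : 0 < alph n := by
  have := n_ge hn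
  unfold alph gam
  rw [sub_pos]; apply one_div_lt_one_div_of_lt <;> linarith

/-- `(2 κ z v)^n = δ(δ+1) v / z²` for `v = λ z^{-δ}`. -/
lemma vpow {n : ℕ} (hn : 4 ≤ n) {z : ℝ} (hz : 0 < z) : (2 * kap * z * (lam n * z ^ (-del n))) ^ n
    = del n * (del n + 1) * (lam n * z ^ (-del n) / z ^ 2) := by
  have h1 : (z * z ^ (-del n)) ^ n = z ^ (-del n) / z ^ 2 := by
    rw [← Real.rpow_one_add' hz.le (by linarith [del_gt hn]), ← Real.rpow_natCast,
      ← Real.rpow_mul hz.le, mul_comm (1 + -del n), ← sub_eq_add_neg, n_del hn, Real.rpow_sub hz]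
    norm_num
  have : (2 * kap * z * (lam n * z ^ (-del n))) ^ n
      = ((2 * kap) ^ n * lam n ^ n) * (z * z ^ (-del n)) ^ n := by
    rw [← mul_pow, ← mul_pow]; congr 1; ring
  rw [this, h1, lam_eq hn]; ring

end

section
open Filter Topology Set
set_option linter.unusedVariables false

/-! ### The power profile -/

noncomputable def vv (n : ℕ) (z : ℝ) : ℝ := lam n * z ^ (-del n)
noncomputable def rr (n : ℕ) (z : ℝ) : ℝ := vv n z / (2 * kap * z)

lemma vv_pos {n : ℕ} (hn : 4 ≤ n) {z : ℝ} (hz : 0 < z) : 0 < vv n z :=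
  mul_pos (lam_pos hn) (Real.rpow_pos_of_pos hz _)

lemma rr_pos {n : ℕ} (hn : 4 ≤ n) {z : ℝ} (hz : 0 < z) : 0 < rr n z := by
  have := kap_pos
  have := vv_pos hn hz
  unfold rr; positivity

lemma vv_d1 (n : ℕ) {z : ℝ} (hz : 0 < z) : HasDerivAt (vv n) (-del n * (vv n z / z)) z := by
  refine ((aux_hasDerivAt_rpow (-del n) hz).const_mul (lam n)).congr_deriv ?_
  unfold vv; ring

lemma vv_d2 (n : ℕ) {z : ℝ} (hz : 0 < z) : HasDerivAt (fun z => -del n * (vv n z / z))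
    (del n * (del n + 1) * (vv n z / z ^ 2)) z := by
  have := ((aux_hasDerivAt_rpow2 (-del n) hz).const_mul (lam n))
  refine (this.congr_deriv ?_).congr_of_eventuallyEq (Eventually.of_forall fun x => ?_)
  · unfold vv; ring
  · simp only [vv]; ring

lemma vv_cont (n : ℕ) {a : ℝ} (ha : 0 < a) : ContinuousOn (vv n) (Ici a) :=
  fun _ hz => (vv_d1 n (ha.trans_le hz)).continuousAt.continuousWithinAt

lemma vv_lim {n : ℕ} (hn : 4 ≤ n) : Tendsto (vv n) atTop (𝓝 0) := by
  have := (tendsto_rpow_neg_atTop (y := del n) (by linarith [del_gt hn])).const_mul (lam n)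
  rw [mul_zero] at this
  exact this

lemma rpow_del_le {n : ℕ} (hn : 4 ≤ n) {z : ℝ} (hz : 1 ≤ z) : z ^ (-del n) ≤ 1 / z := by
  have h0 : 0 < z := by linarith
  have := Real.rpow_le_rpow_of_exponent_le hz (show -del n ≤ -1 by linarith [del_gt hn])
  rwa [Real.rpow_neg_one, ← one_div] at this

lemma rr_le {n : ℕ} (hn : 4 ≤ n) {z : ℝ} (hz : 1 ≤ z) : rr n z ≤ lam n / (2 * kap) * (1 / z ^ 2) := by
  have h0 : 0 < z := by linarith
  have hk := kap_pos
  have hl := lam_pos hn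
  unfold rr vv
  have : lam n * z ^ (-del n) / (2 * kap * z) = lam n / (2 * kap) * (z ^ (-del n) / z) := by
    field_simp
  rw [this]
  apply mul_le_mul_of_nonneg_left _ (by positivity)
  rw [div_le_iff₀ h0]
  refine (rpow_del_le hn hz).trans (le_of_eq ?_)
  field_simp

lemma one_div_sq_le {z : ℝ} (hz : 1 ≤ z) : 1 / z ^ 2 ≤ 1 := by
  rw [div_le_one (by positivity)]; nlinarith

lemma rr_le' {n : ℕ} (hn : 4 ≤ n) {z : ℝ} (hz : 1 ≤ z) : rr n z ≤ lam n / (2 * kap) := by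
  have hk := kap_pos
  have hl := lam_pos hn
  refine (rr_le hn hz).trans ?_
  have := one_div_sq_le hz
  have h2 : 0 < lam n / (2 * kap) := by positivity
  nlinarith

lemma norm_base {n : ℕ} (hn : 4 ≤ n) {z : ℝ} (hz : 0 < z) (θ : ℝ) :
    2 * kap * z * (vv n z * θ) + (vv n z * θ) ^ 2
      = (2 * kap * z * vv n z) * (θ + rr n z * θ ^ 2) := by
  have hk := kap_pos
  unfold rr; field_simp

lemma nrm_pow {n : ℕ} (hn : 4 ≤ n) {z : ℝ} (hz : 0 < z) (θ : ℝ) :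
    (2 * kap * z * (vv n z * θ) + (vv n z * θ) ^ 2) ^ n
      = del n * (del n + 1) * (vv n z / z ^ 2) * (θ + rr n z * θ ^ 2) ^ n := by
  rw [norm_base hn hz, mul_pow, vv, vpow hn hz]

/-- Facts about `C²` functions on `[0,∞)`. -/
lemma c2_facts {f : ℝ → ℝ} (hf : ContDiffOn ℝ 2 f (Ici 0)) :
    (∀ z > 0, HasDerivAt f (derivWithin f (Ici 0) z) z) ∧
    (∀ z > 0, HasDerivAt (derivWithin f (Ici 0)) (derivWithin (derivWithin f (Ici 0)) (Ici 0) z) z) ∧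
    ContinuousOn f (Ici 0) ∧ ContinuousOn (derivWithin f (Ici 0)) (Ici 0) := by
  have h1 : ContDiffOn ℝ 1 (derivWithin f (Ici 0)) (Ici 0) :=
    hf.derivWithin (uniqueDiffOn_Ici 0) (by norm_num)
  refine ⟨fun z hz => ?_, fun z hz => ?_, hf.continuousOn, h1.continuousOn⟩
  · exact ((hf.differentiableOn (by norm_num) z hz.le).hasDerivWithinAt).hasDerivAt (Ici_mem_nhds hz)
  · exact ((h1.differentiableOn (by norm_num) z hz.le).hasDerivWithinAt).hasDerivAt (Ici_mem_nhds hz)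

lemma pow_one_add_sub_le (n : ℕ) {r M : ℝ} (hr : 0 ≤ r) (hM : r ≤ M) :
    (1 + r) ^ n - 1 ≤ n * (1 + M) ^ (n - 1) * r := by
  have h := abs_pow_sub_pow_le (1 + r) 1 n
  rw [one_pow] at h
  have h1 : max |1 + r| |(1:ℝ)| ≤ 1 + M := by
    rw [abs_of_nonneg (by linarith), abs_one]; exact max_le (by linarith) (by linarith)
  have h2 : max |1 + r| |(1:ℝ)| ^ (n - 1) ≤ (1 + M) ^ (n - 1) :=
    pow_le_pow_left₀ (le_max_of_le_left (abs_nonneg _)) h1 _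
  have h3 : |1 + r - 1| = r := by rw [show 1 + r - 1 = r by ring, abs_of_nonneg hr]
  rw [h3] at h
  calc (1 + r) ^ n - 1 ≤ _ := le_abs_self _
    _ ≤ r * n * max |1 + r| |(1:ℝ)| ^ (n - 1) := h
    _ ≤ r * n * (1 + M) ^ (n - 1) := mul_le_mul_of_nonneg_left h2 (by positivity)
    _ = _ := by ring

section reactive
variable {n : ℕ} {η η1 : ℝ → ℝ}

/-- Crude lower bound. -/
lemma eta_stage0 (hn : 4 ≤ n) (h1 : ∀ z > 0, HasDerivAt η (η1 z) z)
    (h2 : ∀ z > 0, HasDerivAt η1 ((2 * kap * z * η z + (η z) ^ 2) ^ n) z)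
    (hp : ∀ z > 0, 0 < η z) (hlim : Tendsto η atTop (𝓝 0)) :
    ∃ a > 0, a ≤ 1 ∧ ∀ z ≥ 1, a * vv n z ≤ η z := by
  have hk := kap_pos
  have hl := lam_pos hn
  set R := lam n / (2 * kap) with hR
  have hRp : 0 < R := by positivity
  have hv1 := vv_pos hn (z := 1) one_pos
  have he1 := hp 1 one_pos
  set a := min (η 1 / vv n 1) (1 / (2 * (1 + R) ^ 2)) with ha
  have hap : 0 < a := lt_min (by positivity) (by positivity)
  have ha2 : a * (1 + R) ^ 2 ≤ 1 / 2 := by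
    have := min_le_right (η 1 / vv n 1) (1 / (2 * (1 + R) ^ 2))
    rw [← ha, le_div_iff₀ (by positivity)] at this
    linarith
  have ha1 : a ≤ 1 := by nlinarith
  have haR : a * (1 + R) ≤ 1 := by nlinarith [mul_pos hap hRp]
  have hv1' : a * vv n 1 ≤ η 1 := by
    have := min_le_left (η 1 / vv n 1) (1 / (2 * (1 + R) ^ 2))
    rwa [← ha, le_div_iff₀ hv1] at this
  have hpow : (a * (1 + R)) ^ n < a := by
    calc (a * (1 + R)) ^ n ≤ (a * (1 + R)) ^ 2 :=
          pow_le_pow_of_le_one (by positivity) haR (by omega)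
      _ = a * (a * (1 + R) ^ 2) := by ring
      _ < a := by nlinarith
  refine ⟨a, hap, ha1, ?_⟩
  have := aux_maxP_infty (f := fun z => a * vv n z - η z)
    (f1 := fun z => a * (-del n * (vv n z / z)) - η1 z)
    (f2 := fun z => a * (del n * (del n + 1) * (vv n z / z ^ 2)) - (2 * kap * z * η z + (η z) ^ 2) ^ n)
    (a := 1)
    ((continuousOn_const.mul (vv_cont n one_pos)).sub
      (fun z hz => (h1 z (one_pos.trans_le hz)).continuousAt.continuousWithinAt))
    (fun z hz => ((vv_d1 n (one_pos.trans hz)).const_mul a).sub (h1 z (one_pos.trans hz)))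
    (fun z hz => ((vv_d2 n (one_pos.trans hz)).const_mul a).sub (h2 z (one_pos.trans hz)))
    (by linarith) (by simpa using ((vv_lim hn).const_mul a).sub hlim)
    (by
      intro z hz hpz
      have hz0 : 0 < z := one_pos.trans hz
      have hv := vv_pos hn hz0
      have hr := rr_pos hn hz0
      have hr' := rr_le' hn hz.le
      set θ := η z / vv n z with hθ
      have hηθ : η z = vv n z * θ := by rw [hθ]; field_simp
      have hθ0 : 0 < θ := div_pos (hp z hz0) hv
      have hθa : θ < a := by rw [hθ, div_lt_iff₀ hv]; linarith
      rw [hηθ, nrm_pow hn hz0]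
      have hd := del_gt hn
      have hA : 0 < del n * (del n + 1) * (vv n z / z ^ 2) := by positivity
      have hB : (θ + rr n z * θ ^ 2) ^ n ≤ (a * (1 + R)) ^ n := by
        apply pow_le_pow_left₀ (by positivity)
        have : rr n z * θ ^ 2 ≤ R * a := by
          apply mul_le_mul hr' _ (by positivity) hRp.le
          nlinarith
        nlinarith
      nlinarith [mul_lt_mul_of_pos_left (hB.trans_lt hpow) hA])
  intro z hz
  have := this z hz
  linarith

/-- Upper bound. -/
lemma eta_upper (hn : 4 ≤ n) (h1 : ∀ z > 0, HasDerivAt η (η1 z) z)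
    (h2 : ∀ z > 0, HasDerivAt η1 ((2 * kap * z * η z + (η z) ^ 2) ^ n) z)
    (hp : ∀ z > 0, 0 < η z) (hlim : Tendsto η atTop (𝓝 0)) :
    ∃ C > 0, ∀ z ≥ 1, η z - vv n z ≤ C * z ^ (-(del n + 2)) := by
  have hd := del_gt hn
  have hd2 := del_le hn
  have hnd := n_dd hn
  refine aux_decay (u := fun z => η z - vv n z) (u1 := fun z => η1 z - (-del n * (vv n z / z)))
    (u2 := fun z => (2 * kap * z * η z + (η z) ^ 2) ^ n - del n * (del n + 1) * (vv n z / z ^ 2))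
    (a := 1) (k := 21) (K := 0) one_pos (by linarith) (by nlinarith) ?_ ?_ ?_ ?_ ?_
  · exact ContinuousOn.sub
      (fun z hz => (h1 z (one_pos.trans_le hz)).continuousAt.continuousWithinAt) (vv_cont n one_pos)
  · exact fun z hz => (h1 z (one_pos.trans hz)).sub (vv_d1 n (one_pos.trans hz))
  · exact fun z hz => (h2 z (one_pos.trans hz)).sub (vv_d2 n (one_pos.trans hz))
  · simpa using hlim.sub (vv_lim hn)
  · intro z hz hpz
    have hz0 : 0 < z := one_pos.trans hz
    have hv := vv_pos hn hz0
    have hr := rr_pos hn hz0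
    set θ := η z / vv n z with hθ
    have hηθ : η z = vv n z * θ := by rw [hθ]; field_simp
    have hθ1 : 1 < θ := by rw [hθ, lt_div_iff₀ hv]; linarith
    rw [hηθ, nrm_pow hn hz0]
    have hB : 1 + n * (θ - 1) ≤ (θ + rr n z * θ ^ 2) ^ n := by
      have e := one_add_mul_le_pow (a := θ - 1) (by linarith) n
      rw [show 1 + (θ - 1) = θ by ring] at e
      refine e.trans (pow_le_pow_left₀ (by linarith) ?_ n)
      have : 0 < rr n z * θ ^ 2 := by positivity
      linarith
    set q := vv n z / z ^ 2 with hq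
    have hqp : 0 < q := by positivity
    have e2 : (vv n z * θ - vv n z) / z ^ 2 = q * (θ - 1) := by rw [hq]; ring
    rw [e2]
    have e3 : 0 < q * (θ - 1) := mul_pos hqp (by linarith)
    have e4 : del n * (del n + 1) * q * (1 + n * (θ - 1)) ≤
      del n * (del n + 1) * q * (θ + rr n z * θ ^ 2) ^ n :=
      mul_le_mul_of_nonneg_left hB (by positivity)
    nlinarith [mul_le_mul_of_nonneg_right hnd e3.le]

/-- Generic step for the lower bound. -/
lemma eta_lower_step (hn : 4 ≤ n) (h1 : ∀ z > 0, HasDerivAt η (η1 z) z)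
    (h2 : ∀ z > 0, HasDerivAt η1 ((2 * kap * z * η z + (η z) ^ 2) ^ n) z)
    (hp : ∀ z > 0, 0 < η z) (hlim : Tendsto η atTop (𝓝 0)) {z₁ k s : ℝ} (hz₁ : 1 ≤ z₁)
    (hs : 0 < s) (hs2 : s ≤ 2)
    (hk : (del n + s) * (del n + s + 1) < k)
    (hθ : ∀ z > z₁, η z / vv n z < 1 →
      k * (1 - η z / vv n z) ≤ del n * (del n + 1) * (1 - (η z / vv n z) ^ n)) :
    ∃ C > 0, ∀ z ≥ z₁, vv n z - η z ≤ C * z ^ (-(del n + s)) := by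
  have hd := del_gt hn
  have hd2 := del_le hn
  have hnd := n_dd hn
  have hkap := kap_pos
  have hl := lam_pos hn
  have hz₁0 : 0 < z₁ := by linarith
  set R := lam n / (2 * kap) with hR
  have hRp : 0 < R := by positivity
  refine aux_decay (u := fun z => vv n z - η z) (u1 := fun z => (-del n * (vv n z / z)) - η1 z)
    (u2 := fun z => del n * (del n + 1) * (vv n z / z ^ 2) - (2 * kap * z * η z + (η z) ^ 2) ^ n)
    (a := z₁) (k := k) (K := del n * (del n + 1) * (n * (1 + R) ^ (n - 1)) * R * lam n)
    hz₁0 (by linarith) hk ?_ ?_ ?_ ?_ ?_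
  · exact ContinuousOn.sub (vv_cont n hz₁0)
      (fun z hz => (h1 z (hz₁0.trans_le hz)).continuousAt.continuousWithinAt)
  · exact fun z hz => (vv_d1 n (hz₁0.trans hz)).sub (h1 z (hz₁0.trans hz))
  · exact fun z hz => (vv_d2 n (hz₁0.trans hz)).sub (h2 z (hz₁0.trans hz))
  · simpa using (vv_lim hn).sub hlim
  · intro z hz hpz
    have hz0 : 0 < z := hz₁0.trans hz
    have hz1 : 1 ≤ z := hz₁.trans hz.le
    have hv := vv_pos hn hz0
    have hr := rr_pos hn hz0
    have hr' := rr_le' hn hz1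
    have hr2 := rr_le hn hz1
    have hθz := hθ z hz
    set θ := η z / vv n z with hθd
    have hηθ : η z = vv n z * θ := by rw [hθd]; field_simp
    have hθ0 : 0 < θ := div_pos (hp z hz0) hv
    have hθ1 : θ < 1 := by rw [hθd, div_lt_iff₀ hv]; linarith
    have hθz := hθz hθ1
    rw [hηθ, nrm_pow hn hz0]
    set P := n * (1 + R) ^ (n - 1) with hP
    have hPp : 0 < P := by have := n_ge hn; positivity
    have hB : (θ + rr n z * θ ^ 2) ^ n ≤ θ ^ n + P * rr n z := by
      have e1 : θ + rr n z * θ ^ 2 ≤ θ * (1 + rr n z) := by nlinarith [mul_pos hr hθ0]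
      have e2 : (θ + rr n z * θ ^ 2) ^ n ≤ θ ^ n * (1 + rr n z) ^ n := by
        rw [← mul_pow]; exact pow_le_pow_left₀ (by positivity) e1 n
      have e3 := pow_one_add_sub_le n hr.le hr'
      have e4 : θ ^ n ≤ 1 := pow_le_one₀ hθ0.le hθ1.le
      have e5 : 0 < θ ^ n := by positivity
      have e6 : 0 < P * rr n z := by positivity
      have e7 : θ ^ n * ((1 + rr n z) ^ n - 1) ≤ θ ^ n * (P * rr n z) :=
        mul_le_mul_of_nonneg_left e3 e5.le
      nlinarith
    have hq2 : vv n z / z ^ 2 * rr n z ≤ R * lam n * (z ^ (-(del n + s)) / z ^ 2) := by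
      have e1 : vv n z / z ^ 2 * rr n z ≤ vv n z / z ^ 2 * (R * (1 / z ^ 2)) :=
        mul_le_mul_of_nonneg_left hr2 (by positivity)
      have e2 : z ^ (-del n) * (1 / z ^ 2) ≤ z ^ (-(del n + s)) := by
        have : z ^ (-del n) * (1 / z ^ 2) = z ^ (-(del n + 2)) := by
          rw [show -(del n + 2) = -del n - 2 by ring, Real.rpow_sub hz0]; norm_num; rfl
        rw [this]
        exact Real.rpow_le_rpow_of_exponent_le hz1 (by linarith)
      have e3 : vv n z / z ^ 2 * (R * (1 / z ^ 2)) =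
        R * lam n * ((z ^ (-del n) * (1 / z ^ 2)) / z ^ 2) := by unfold vv; ring
      rw [e3] at e1
      refine e1.trans ?_
      apply mul_le_mul_of_nonneg_left _ (by positivity)
      exact div_le_div_of_nonneg_right e2 (by positivity)
    set q := vv n z / z ^ 2 with hq
    have hqp : 0 < q := by positivity
    have e2 : (vv n z - vv n z * θ) / z ^ 2 = q * (1 - θ) := by rw [hq]; ring
    rw [e2]
    have hdd : 0 < del n * (del n + 1) := by positivity
    have e4 : del n * (del n + 1) * q * (θ + rr n z * θ ^ 2) ^ n ≤
      del n * (del n + 1) * q * (θ ^ n + P * rr n z) :=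
      mul_le_mul_of_nonneg_left hB (by positivity)
    have e5 : del n * (del n + 1) * P * (q * rr n z) ≤
        del n * (del n + 1) * P * (R * lam n * (z ^ (-(del n + s)) / z ^ 2)) :=
      mul_le_mul_of_nonneg_left hq2 (by positivity)
    have e6 := mul_le_mul_of_nonneg_left hθz hqp.le
    linarith

end reactive

end

section
open Filter Topology Set
set_option linter.unusedVariables false

lemma auxS_nonneg (k : ℕ) {a b : ℝ} (ha : 0 ≤ a) (hab : 0 ≤ a + b) : 0 ≤ auxS k a b := by
  induction k with
  | zero => simp [auxS]
  | succ k ih => simp only [auxS]; positivity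

lemma pow_tangent (n : ℕ) {x a : ℝ} (ha : 0 ≤ a) (hx : 0 ≤ x) :
    n * a ^ (n - 1) * (x - a) ≤ x ^ n - a ^ n := by
  have h := auxS_eq n a (x - a)
  have h2 := auxS_nonneg n (a := a) (b := x - a) ha (by linarith)
  rw [show a + (x - a) = x by ring] at h
  have : 0 ≤ (x - a) ^ 2 * auxS n a (x - a) := by positivity
  linarith

lemma rpow_del_two (n : ℕ) (hn : 4 ≤ n) {z : ℝ} (hz : 0 < z) :
    z ^ (-(del n + 2)) = vv n z / z ^ 2 / lam n := by
  have hl := lam_pos hn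
  rw [show -(del n + 2) = -del n - 2 by ring, Real.rpow_sub hz, vv]
  field_simp
  norm_num

/-- quantitative closeness of the normalized base to one -/
lemma pow_close (n : ℕ) (M : ℝ) (hM : 1 ≤ M) : ∃ C > 0, ∀ x : ℝ, |x| ≤ M →
    |x ^ n - 1| ≤ C * |x - 1| := by
  refine ⟨n * M ^ (n - 1) + 1, by positivity, fun x hx => ?_⟩
  have h := abs_pow_sub_pow_le x 1 n
  rw [one_pow, abs_one] at h
  have h2 : max |x| 1 ^ (n - 1) ≤ M ^ (n - 1) := pow_le_pow_left₀ (by positivity) (max_le hx hM) _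
  have h3 := abs_nonneg (x - 1)
  calc |x ^ n - 1| ≤ |x - 1| * n * max |x| 1 ^ (n - 1) := h
    _ ≤ |x - 1| * n * M ^ (n - 1) := mul_le_mul_of_nonneg_left h2 (by positivity)
    _ ≤ _ := by nlinarith

section reactive2
variable {n : ℕ} {η η1 : ℝ → ℝ}

lemma eta_close (hn : 4 ≤ n) (h1 : ∀ z > 0, HasDerivAt η (η1 z) z)
    (h2 : ∀ z > 0, HasDerivAt η1 ((2 * kap * z * η z + (η z) ^ 2) ^ n) z)
    (hp : ∀ z > 0, 0 < η z) (hlim : Tendsto η atTop (𝓝 0)) :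
    ∃ C > 0, ∀ z ≥ 1, |η z - vv n z| ≤ C * z ^ (-(del n + 2)) := by
  have hd := del_gt hn
  have hd2 := del_le hn
  have hnd := n_dd hn
  have hl := lam_pos hn
  obtain ⟨a, ha, ha1, hstage0⟩ := eta_stage0 hn h1 h2 hp hlim
  obtain ⟨C0, hC0, hup⟩ := eta_upper hn h1 h2 hp hlim
  have hdd : 2 ≤ del n * (del n + 1) := by nlinarith
  obtain ⟨C1, hC1, hlow1⟩ := eta_lower_step hn h1 h2 hp hlim (z₁ := 1) (s := a / 10)
    (k := (1 + a) * (del n * (del n + 1))) le_rfl (by linarith) (by linarith)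
    (by nlinarith) (by
      intro z hz hθ1
      have hv := vv_pos hn (z := z) (by linarith)
      have hθa : a ≤ η z / vv n z := by rw [le_div_iff₀ hv]; exact hstage0 z hz.le
      set θ := η z / vv n z
      have e1 : θ ^ n ≤ θ ^ 2 := pow_le_pow_of_le_one (by linarith) hθ1.le (by omega)
      have e2 : (1 + a) * (1 - θ) ≤ 1 - θ ^ n := by nlinarith
      nlinarith [mul_le_mul_of_nonneg_left e2 (by linarith : 0 ≤ del n * (del n + 1))])
  have hlim2 : Tendsto (fun z : ℝ => (1 - C1 / lam n * z ^ (-(a / 10)))) atTop (𝓝 1) := by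
    have := ((tendsto_rpow_neg_atTop (y := a / 10) (by linarith)).const_mul (C1 / lam n)).const_sub 1
    simpa using this
  have hlim3 := hlim2.pow (n - 1)
  rw [one_pow] at hlim3
  obtain ⟨z₁, hz₁⟩ := (((hlim2.eventually_const_lt (show (0:ℝ) < 1 by norm_num)).and
    (hlim3.eventually_const_lt (show (21 / 22:ℝ) < 1 by norm_num))).and (eventually_ge_atTop 1)).exists_forall_of_atTop
  have hz₁1 : 1 ≤ z₁ := (hz₁ z₁ le_rfl).2
  obtain ⟨C2, hC2, hlow2⟩ := eta_lower_step hn h1 h2 hp hlim (z₁ := z₁) (s := 2)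
    (k := 21) hz₁1 (by linarith) (by linarith)
    (by nlinarith) (by
      intro z hz hθ1
      have hz1 : 1 ≤ z := by linarith
      have hz0 : 0 < z := by linarith
      have hv := vv_pos hn (z := z) (by linarith)
      obtain ⟨⟨f1, f2⟩, -⟩ := hz₁ z hz.le
      have hθ0 : 0 < η z / vv n z := div_pos (hp z hz0) hv
      have hθa : 1 - C1 / lam n * z ^ (-(a / 10)) ≤ η z / vv n z := by
        rw [le_div_iff₀ hv]
        have := hlow1 z hz1
        have e : z ^ (-(del n + a / 10)) = z ^ (-(a / 10)) * (vv n z / lam n) := by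
          rw [vv, show -(del n + a / 10) = -(a / 10) + -del n by ring, Real.rpow_add hz0]
          field_simp
        rw [e] at this
        have e2 : C1 / lam n * z ^ (-(a / 10)) * vv n z = C1 * (z ^ (-(a / 10)) * (vv n z / lam n)) := by
          field_simp
        linarith
      set θ := η z / vv n z
      have e1 : 21 / 22 ≤ θ ^ (n - 1) := f2.le.trans (pow_le_pow_left₀ f1.le hθa _)
      have e2 := pow_tangent n (x := 1) (a := θ) hθ0.le zero_le_one
      rw [one_pow] at e2
      have e3 : (21 / 22) * (1 - θ) ≤ θ ^ (n - 1) * (1 - θ) :=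
        mul_le_mul_of_nonneg_right e1 (by linarith)
      have e4 : 22 * (1 - θ) ≤ n * (del n * (del n + 1)) * (1 - θ) :=
        mul_le_mul_of_nonneg_right hnd (by linarith)
      have e5 : n * (del n * (del n + 1)) * ((21 / 22) * (1 - θ)) ≤
        n * (del n * (del n + 1)) * (θ ^ (n - 1) * (1 - θ)) :=
        mul_le_mul_of_nonneg_left e3 (by linarith)
      have e6 : del n * (del n + 1) * (n * θ ^ (n - 1) * (1 - θ)) ≤
        del n * (del n + 1) * (1 - θ ^ n) := mul_le_mul_of_nonneg_left e2 (by linarith)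
      nlinarith)
  refine aux_ext_bound (f := fun z => η z - vv n z) (w := fun z => z ^ (-(del n + 2)))
    (a := z₁) (C := C0 + C2) ?_ ?_ ?_ ?_
  · exact ContinuousOn.sub
      (fun z hz => (h1 z (one_pos.trans_le hz)).continuousAt.continuousWithinAt) (vv_cont n one_pos)
  · exact continuousOn_id.rpow_const (fun x hx => Or.inl (one_pos.trans_le hx).ne')
  · exact fun z hz => Real.rpow_pos_of_pos (by linarith) _
  · intro z hz
    have hw : 0 < z ^ (-(del n + 2)) := Real.rpow_pos_of_pos (by linarith) _
    have f1 := hup z (by linarith)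
    have f2 := hlow2 z hz
    rw [abs_le]
    constructor <;> nlinarith

/-- Facts about the normalized profile `θ = η / v`. -/
lemma theta_facts (hn : 4 ≤ n) {C : ℝ} (hC : 0 < C)
    (hclose : ∀ z ≥ 1, |η z - vv n z| ≤ C * z ^ (-(del n + 2))) :
    ∃ M ≥ 1, ∀ z ≥ 1, |η z / vv n z - 1| ≤ M * (1 / z ^ 2) ∧ |η z / vv n z| ≤ M ∧ rr n z ≤ M ∧
      rr n z ≤ M * (1 / z ^ 2) ∧
      |(η z / vv n z + rr n z * (η z / vv n z) ^ 2) - 1| ≤ M * (1 / z ^ 2) ∧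
      |η z / vv n z + rr n z * (η z / vv n z) ^ 2| ≤ M := by
  have hl := lam_pos hn
  have hk := kap_pos
  set R := lam n / (2 * kap) with hR
  have hRp : 0 < R := by positivity
  set D := C / lam n with hD
  have hDp : 0 < D := by positivity
  refine ⟨1 + D + R * (1 + D) ^ 2 + R, ?_, ?_⟩
  · have : 0 < R * (1 + D) ^ 2 := by positivity
    linarith
  intro z hz
  have hz0 : 0 < z := by linarith
  have hv := vv_pos hn hz0
  have hr := rr_pos hn hz0
  have hr1 := rr_le hn hz
  have hr2 := rr_le' hn hz
  rw [← hR] at hr1 hr2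
  have hzz : 0 < 1 / z ^ 2 := by positivity
  have hzz1 := one_div_sq_le hz
  have e1 : |η z / vv n z - 1| ≤ D * (1 / z ^ 2) := by
    have := hclose z hz
    rw [rpow_del_two n hn hz0] at this
    have e : η z / vv n z - 1 = (η z - vv n z) / vv n z := by field_simp
    rw [e, abs_div, abs_of_pos hv, div_le_iff₀ hv]
    refine this.trans (le_of_eq ?_)
    rw [hD]; field_simp
  set θ := η z / vv n z
  set w := 1 / z ^ 2
  have e2 : |θ| ≤ 1 + D := by
    have : |θ| ≤ |θ - 1| + 1 := by
      have := abs_add_le (θ - 1) 1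
      simpa using this
    nlinarith
  have e3 : θ ^ 2 ≤ (1 + D) ^ 2 := by rw [← sq_abs θ]; exact pow_le_pow_left₀ (abs_nonneg _) e2 2
  have hR2 : 0 < R * (1 + D) ^ 2 := by positivity
  have e4 : rr n z * θ ^ 2 ≤ R * (1 + D) ^ 2 * w := by
    calc rr n z * θ ^ 2 ≤ (R * w) * (1 + D) ^ 2 := mul_le_mul hr1 e3 (by positivity) (by positivity)
      _ = _ := by ring
  have e5 : 0 ≤ rr n z * θ ^ 2 := by positivity
  have e6 : |θ + rr n z * θ ^ 2 - 1| ≤ (D + R * (1 + D) ^ 2) * w := by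
    have : |θ + rr n z * θ ^ 2 - 1| ≤ |θ - 1| + |rr n z * θ ^ 2| := by
      rw [show θ + rr n z * θ ^ 2 - 1 = (θ - 1) + rr n z * θ ^ 2 by ring]
      exact abs_add_le _ _
    rw [abs_of_nonneg e5] at this
    nlinarith
  refine ⟨by nlinarith, by linarith, by linarith, by nlinarith, by nlinarith, ?_⟩
  have : |θ + rr n z * θ ^ 2| ≤ |θ| + |rr n z * θ ^ 2| := abs_add_le _ _
  rw [abs_of_nonneg e5] at this
  nlinarith

lemma eta_asymp (hn : 4 ≤ n) (h1 : ∀ z > 0, HasDerivAt η (η1 z) z)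
    (h2 : ∀ z > 0, HasDerivAt η1 ((2 * kap * z * η z + (η z) ^ 2) ^ n) z)
    (hp : ∀ z > 0, 0 < η z) (hlim : Tendsto η atTop (𝓝 0)) :
    ∃ M ≥ 1, ∀ z ≥ 1, |η z / vv n z - 1| ≤ M * (1 / z ^ 2) ∧ |η z / vv n z| ≤ M ∧ rr n z ≤ M ∧
      rr n z ≤ M * (1 / z ^ 2) ∧
      |(η z / vv n z + rr n z * (η z / vv n z) ^ 2) - 1| ≤ M * (1 / z ^ 2) ∧
      |η z / vv n z + rr n z * (η z / vv n z) ^ 2| ≤ M ∧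
      |z * η1 z + del n * vv n z| ≤ M * (vv n z / z ^ 2) := by
  have hl := lam_pos hn
  have hd := del_gt hn
  obtain ⟨C, hC, hclose⟩ := eta_close hn h1 h2 hp hlim
  obtain ⟨M, hM, hth⟩ := theta_facts hn hC hclose
  obtain ⟨P, hP, hpow⟩ := pow_close n M hM
  have hder := aux_deriv_bound (u := fun z => η z - vv n z)
    (u1 := fun z => η1 z - (-del n * (vv n z / z)))
    (u2 := fun z => (2 * kap * z * η z + (η z) ^ 2) ^ n - del n * (del n + 1) * (vv n z / z ^ 2))
    (C := C) (K := del n * (del n + 1) * lam n * (P * M)) (ρ := del n + 2) (by linarith) hC.le (by positivity)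
    (fun z hz => (h1 z (by linarith)).sub (vv_d1 n (by linarith)))
    (fun z hz => (h2 z (by linarith)).sub (vv_d2 n (by linarith)))
    hclose (by
      intro z hz
      have hz0 : 0 < z := by linarith
      have hv := vv_pos hn hz0
      obtain ⟨-, -, -, -, t1, t2⟩ := hth z hz
      set θ := η z / vv n z with hθ
      have hηθ : η z = vv n z * θ := by rw [hθ]; field_simp
      rw [hηθ, nrm_pow hn hz0, rpow_del_two n hn hz0]
      have e1 := hpow _ t2
      have e2 : |(θ + rr n z * θ ^ 2) ^ n - 1| ≤ P * M * (1 / z ^ 2) := by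
        refine e1.trans ?_
        rw [mul_assoc]
        exact mul_le_mul_of_nonneg_left t1 hP.le
      have hA : 0 < del n * (del n + 1) * (vv n z / z ^ 2) := by positivity
      rw [show ∀ A B : ℝ, A * B - A = A * (B - 1) by intros; ring, abs_mul, abs_of_pos hA]
      refine (mul_le_mul_of_nonneg_left e2 hA.le).trans (le_of_eq ?_)
      field_simp)
  set K := 2 * C + del n * (del n + 1) * lam n * (P * M) with hK
  have hKp : 0 < K := by positivity
  refine ⟨M + K / lam n, by have : 0 < K / lam n := by positivity
                            linarith, fun z hz => ?_⟩
  obtain ⟨t1, t2, t3, t4, t5, t6⟩ := hth z hz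
  have hz0 : 0 < z := by linarith
  have hv := vv_pos hn hz0
  have hzz : 0 < 1 / z ^ 2 := by positivity
  have hKl : 0 < K / lam n := by positivity
  refine ⟨by nlinarith, by linarith, by linarith, by nlinarith, by nlinarith, by linarith, ?_⟩
  have e := hder z hz
  rw [rpow_del_two n hn hz0] at e
  have e3 : z * η1 z + del n * vv n z = z * (η1 z - (-del n * (vv n z / z))) := by field_simp; ring
  rw [e3, abs_mul, abs_of_pos hz0]
  have e4 := mul_le_mul_of_nonneg_left e hz0.le
  have e5 : z * (K * (vv n z / z ^ 2 / lam n / z)) = K / lam n * (vv n z / z ^ 2) := by field_simp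
  have e6 : 0 < vv n z / z ^ 2 := by positivity
  rw [e5] at e4
  nlinarith

end reactive2

end

section
open Filter Topology Set
set_option linter.unusedVariables false

lemma rpow_two_del (n : ℕ) (hn : 4 ≤ n) {z : ℝ} (hz : 0 < z) :
    lam0 n * z ^ (2 - del n) = auxp n * (z ^ 2 * vv n z) := by
  rw [sub_eq_add_neg, Real.rpow_add hz, vv, lam0_eq hn]
  norm_num
  ring

lemma zv_d1 (n : ℕ) {z : ℝ} (hz : 0 < z) : HasDerivAt (fun z => auxp n * (z ^ 2 * vv n z))
    (auxp n * (2 - del n) * (z * vv n z)) z := by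
  refine (((hasDerivAt_pow 2 z).mul (vv_d1 n hz)).const_mul (auxp n)).congr_deriv ?_
  field_simp
  push_cast
  ring

lemma zv_d2 (n : ℕ) {z : ℝ} (hz : 0 < z) :
    HasDerivAt (fun z => auxp n * (2 - del n) * (z * vv n z))
    (auxp n * ((2 - del n) * (1 - del n)) * vv n z) z := by
  refine (((hasDerivAt_id z).mul (vv_d1 n hz)).const_mul (auxp n * (2 - del n))).congr_deriv ?_
  simp only [id]
  field_simp
  ring

/-- The normalized linearized nonlinearity. -/
lemma nrm_N {n : ℕ} (hn : 4 ≤ n) {z : ℝ} (hz : 0 < z) (θ H : ℝ) :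
    n * (2 * kap * z * (vv n z * θ) + (vv n z * θ) ^ 2) ^ (n - 1) *
      ((2 * kap * z + 2 * (vv n z * θ)) * H + 2 * kap3 * z ^ 3 * (vv n z * θ))
    = n * (del n * (del n + 1)) / z ^ 2 * ((θ + rr n z * θ ^ 2) ^ (n - 1) *
      ((1 + 2 * rr n z * θ) * H - 1 / 12 * z ^ 2 * vv n z * θ)) := by
  have hk := kap_pos
  have hv := vv_pos hn hz
  have h1 : (2 * kap * z * vv n z) ^ (n - 1) * (2 * kap * z) = del n * (del n + 1) / z ^ 2 := by
    have e : (2 * kap * z * vv n z) ^ n = (2 * kap * z * vv n z) ^ (n - 1) * (2 * kap * z * vv n z) := by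
      rw [← pow_succ]; congr 1; omega
    have e2 := vpow hn hz
    rw [← vv, e] at e2
    have e3 : (2 * kap * z * vv n z) ^ (n - 1) * (2 * kap * z) * vv n z
        = del n * (del n + 1) / z ^ 2 * vv n z := by rw [mul_assoc, e2]; ring
    exact mul_right_cancel₀ hv.ne' e3
  have h2 : (2 * kap * z + 2 * (vv n z * θ)) * H + 2 * kap3 * z ^ 3 * (vv n z * θ)
      = (2 * kap * z) * ((1 + 2 * rr n z * θ) * H - 1 / 12 * z ^ 2 * vv n z * θ) := by
    unfold rr kap3; field_simp; ring
  rw [norm_base hn hz, mul_pow, h2]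
  linear_combination n * (θ + rr n z * θ ^ 2) ^ (n - 1) * ((1 + 2 * rr n z * θ) * H - 1 / 12 * z ^ 2 * vv n z * θ) * h1

section corr
variable {n : ℕ} {η η1 h hd : ℝ → ℝ}

/-- Abstract estimate on the coefficient and the source of the corrector equation. -/
lemma coef_bounds (n : ℕ) (p M : ℝ) (hM : 1 ≤ M) : ∃ D > 0, ∀ θ r w : ℝ, 0 ≤ w → w ≤ 1 →
    |θ - 1| ≤ M * w → |θ| ≤ M → 0 ≤ r → r ≤ M → r ≤ M * w →
    |(θ + r * θ ^ 2) - 1| ≤ M * w → |θ + r * θ ^ 2| ≤ M →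
    |(θ + r * θ ^ 2) ^ (n - 1) * (1 + 2 * r * θ) - 1| ≤ D * w ∧
    |(θ + r * θ ^ 2) ^ (n - 1) * ((1 + 2 * r * θ) * p - 1 / 12 * θ) - (p - 1 / 12)| ≤ D * w ∧
    |(θ + r * θ ^ 2) ^ n - 1| ≤ D * w := by
  obtain ⟨P, hP, hpow⟩ := pow_close (n - 1) M hM
  obtain ⟨P', hP', hpow'⟩ := pow_close n M hM
  set G0 := M ^ (n - 1)
  have hG0 : 0 < G0 := by positivity
  set D1 := P * M + 2 * M * M * G0 with hD1
  set D2 := P * M * M + M with hD2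
  have hD1p : 0 < D1 := by positivity
  have hD2p : 0 < D2 := by positivity
  refine ⟨D1 + (|p| * D1 + D2) + P' * M, by positivity, ?_⟩
  intro θ r w hw hw1 h1 h2 hr0 h3 h4 h5 h6
  have g1 := hpow _ h6
  have g1' := hpow' _ h6
  have g2 : |(θ + r * θ ^ 2) ^ (n - 1)| ≤ G0 := by
    rw [abs_pow]; exact pow_le_pow_left₀ (abs_nonneg _) h6 _
  set G := (θ + r * θ ^ 2) ^ (n - 1)
  have g3 : |G - 1| ≤ P * M * w := g1.trans (by rw [mul_assoc]; exact mul_le_mul_of_nonneg_left h5 hP.le)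
  have g3' : |(θ + r * θ ^ 2) ^ n - 1| ≤ P' * M * w :=
    g1'.trans (by rw [mul_assoc]; exact mul_le_mul_of_nonneg_left h5 hP'.le)
  have q1 : |G * (1 + 2 * r * θ) - 1| ≤ D1 * w := by
    have e : G * (1 + 2 * r * θ) - 1 = (G - 1) + 2 * r * (θ * G) := by ring
    have e2 : |2 * r * (θ * G)| ≤ 2 * (M * w) * (M * G0) := by
      rw [abs_mul, abs_mul θ, abs_of_nonneg (by linarith : 0 ≤ 2 * r)]
      apply mul_le_mul (by linarith) _ (by positivity) (by positivity)
      exact mul_le_mul h2 g2 (abs_nonneg _) (by linarith)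
    rw [e]
    refine (abs_add_le _ _).trans ?_
    rw [hD1]; linarith
  have q2 : |G * θ - 1| ≤ D2 * w := by
    have e : G * θ - 1 = (G - 1) * θ + (θ - 1) := by ring
    have e2 : |(G - 1) * θ| ≤ P * M * w * M := by
      rw [abs_mul]; exact mul_le_mul g3 h2 (abs_nonneg _) (by positivity)
    rw [e]
    refine (abs_add_le _ _).trans ?_
    rw [hD2]; linarith
  have hp := abs_nonneg p
  have r1 : 0 ≤ D1 * w := by positivity
  have r2 : 0 ≤ D2 * w := by positivity
  have r3 : 0 ≤ |p| * D1 * w := by positivity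
  have r4 : 0 ≤ P' * M * w := by positivity
  refine ⟨by linarith, ?_, by linarith⟩
  have e : G * ((1 + 2 * r * θ) * p - 1 / 12 * θ) - (p - 1 / 12)
      = p * (G * (1 + 2 * r * θ) - 1) + (-(1 / 12)) * (G * θ - 1) := by ring
  rw [e]
  refine (abs_add_le _ _).trans ?_
  rw [abs_mul, abs_mul (-(1 / 12))]
  have e2 : |(-(1 / 12) : ℝ)| = 1 / 12 := by norm_num
  rw [e2]
  have e3 := mul_le_mul_of_nonneg_left q1 hp
  nlinarith

set_option maxHeartbeats 1600000 in
lemma phi2_asymp (hn : 4 ≤ n) {M : ℝ} (hM : 1 ≤ M)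
    (hM2 : ∀ z ≥ 1, |η z / vv n z - 1| ≤ M * (1 / z ^ 2) ∧ |η z / vv n z| ≤ M ∧ rr n z ≤ M ∧
      rr n z ≤ M * (1 / z ^ 2) ∧
      |(η z / vv n z + rr n z * (η z / vv n z) ^ 2) - 1| ≤ M * (1 / z ^ 2) ∧
      |η z / vv n z + rr n z * (η z / vv n z) ^ 2| ≤ M ∧
      |z * η1 z + del n * vv n z| ≤ M * (vv n z / z ^ 2))
    (h1 : ∀ z > 0, HasDerivAt h (hd z) z)
    (h2 : ∀ z > 0, HasDerivAt hd ((n : ℝ) * (2 * kap * z * η z + (η z) ^ 2) ^ (n - 1)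
          * ((2 * kap * z + 2 * η z) * h z + 2 * kap3 * z ^ 3 * η z)
          - gam n * η z - alph n * z * η1 z) z)
    (hlim : Tendsto (fun z : ℝ => h z - lam0 n * z ^ (2 - del n)) atTop (𝓝 0)) :
    ∃ M' > 0, ∀ z ≥ 1, |h z - auxp n * (z ^ 2 * vv n z)| ≤ M' * vv n z ∧
      |z * (hd z - auxp n * (2 - del n) * (z * vv n z))| ≤ M' * vv n z := by
  have hl := lam_pos hn
  have hdg := del_gt hn
  have hdl := del_le hn
  have hnd := n_dd hn
  have hga := gam_pos hn
  have hal := alph_pos hn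
  set N := (n:ℝ) * (del n * (del n + 1)) with hN
  have hNp : 0 < N := by linarith
  obtain ⟨D, hD, hDb⟩ := coef_bounds n (auxp n) M hM
  set u : ℝ → ℝ := fun z => h z - auxp n * (z ^ 2 * vv n z) with hu
  set u1 : ℝ → ℝ := fun z => hd z - auxp n * (2 - del n) * (z * vv n z) with hu1
  set u2 : ℝ → ℝ := fun z => ((n : ℝ) * (2 * kap * z * η z + (η z) ^ 2) ^ (n - 1)
          * ((2 * kap * z + 2 * η z) * h z + 2 * kap3 * z ^ 3 * η z)
          - gam n * η z - alph n * z * η1 z) - auxp n * ((2 - del n) * (1 - del n)) * vv n z with hu2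
  have d1 : ∀ z > 0, HasDerivAt u (u1 z) z := fun z hz => (h1 z hz).sub (zv_d1 n hz)
  have d2 : ∀ z > 0, HasDerivAt u1 (u2 z) z := fun z hz => (h2 z hz).sub (zv_d2 n hz)
  have ulim : Tendsto u atTop (𝓝 0) := by
    refine hlim.congr' ?_
    filter_upwards [eventually_gt_atTop 0] with z hz
    rw [rpow_two_del n hn hz]
  have ucont : ∀ a > 0, ContinuousOn u (Ici a) := fun a ha z hz =>
    (d1 z (ha.trans_le hz)).continuousAt.continuousWithinAt
  set K := N * D + (gam n + alph n) * M with hK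
  have hKp : 0 < K := by positivity
  have key : ∀ z ≥ 1, ∃ Q, |Q - 1| ≤ D * (1 / z ^ 2) ∧
      |u2 z - N * Q * (u z / z ^ 2)| ≤ K * (vv n z / z ^ 2) := by
    intro z hz
    have hz0 : 0 < z := by linarith
    have hv := vv_pos hn hz0
    have hr := rr_pos hn hz0
    obtain ⟨t1, t2, t3, t4, t5, t6, t7⟩ := hM2 z hz
    have hw : 0 < 1 / z ^ 2 := by positivity
    obtain ⟨b1, b2, -⟩ := hDb _ _ _ hw.le (one_div_sq_le hz) t1 t2 hr.le t3 t4 t5 t6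
    set θ := η z / vv n z with hθ
    have hηθ : η z = vv n z * θ := by rw [hθ]; field_simp
    refine ⟨_, b1, ?_⟩
    have hh : h z = u z + auxp n * (z ^ 2 * vv n z) := by simp only [hu]; ring
    have eq1 : u2 z - N * ((θ + rr n z * θ ^ 2) ^ (n - 1) * (1 + 2 * rr n z * θ)) * (u z / z ^ 2)
        = N * vv n z * ((θ + rr n z * θ ^ 2) ^ (n - 1) * ((1 + 2 * rr n z * θ) * auxp n - 1 / 12 * θ)
            - (auxp n - 1 / 12)) - gam n * vv n z * (θ - 1)
          - alph n * (z * η1 z + del n * vv n z) := by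
      simp only [hu2]
      rw [hηθ, nrm_N hn hz0, hh, ← hN]
      have ca := auxp_eq hn
      have cb := alph_eq hn
      rw [← hN] at ca
      generalize (θ + rr n z * θ ^ 2) ^ (n - 1) = G
      field_simp
      linear_combination (-(12 * z ^ 2 * vv n z)) * ca + (12 * z ^ 2 * vv n z) * cb
    rw [eq1]
    have f1 : |N * vv n z * ((θ + rr n z * θ ^ 2) ^ (n - 1) * ((1 + 2 * rr n z * θ) * auxp n - 1 / 12 * θ)
            - (auxp n - 1 / 12))| ≤ N * vv n z * (D * (1 / z ^ 2)) := by
      rw [abs_mul, abs_of_pos (by positivity : 0 < N * vv n z)]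
      exact mul_le_mul_of_nonneg_left b2 (by positivity)
    have f2 : |gam n * vv n z * (θ - 1)| ≤ gam n * vv n z * (M * (1 / z ^ 2)) := by
      rw [abs_mul, abs_of_pos (by positivity : 0 < gam n * vv n z)]
      exact mul_le_mul_of_nonneg_left t1 (by positivity)
    have f3 : |alph n * (z * η1 z + del n * vv n z)| ≤ alph n * (M * (vv n z / z ^ 2)) := by
      rw [abs_mul, abs_of_pos hal]
      exact mul_le_mul_of_nonneg_left t7 hal.le
    refine (abs_sub _ _).trans ?_
    have f4 := abs_sub (N * vv n z * ((θ + rr n z * θ ^ 2) ^ (n - 1) * ((1 + 2 * rr n z * θ) * auxp n - 1 / 12 * θ)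
            - (auxp n - 1 / 12))) (gam n * vv n z * (θ - 1))
    have f5 : K * (vv n z / z ^ 2) = N * vv n z * (D * (1 / z ^ 2)) + gam n * vv n z * (M * (1 / z ^ 2))
      + alph n * (M * (vv n z / z ^ 2)) := by rw [hK]; ring
    linarith
  set z₁ := 1 + 22 * D with hz₁
  have hz₁0 : 0 < z₁ := by positivity
  have hQ : ∀ z > z₁, ∀ Q : ℝ, |Q - 1| ≤ D * (1 / z ^ 2) → 21 ≤ N * Q := by
    intro z hz Q hQ
    have hz0 : 0 < z := hz₁0.trans hz
    have e1 : D * (1 / z ^ 2) ≤ 1 / 22 := by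
      rw [mul_one_div, div_le_iff₀ (by positivity)]; nlinarith
    have := (abs_le.1 hQ).1
    nlinarith
  have rpv : ∀ z > 0, z ^ (-del n) = vv n z / lam n := fun z hz => by rw [vv]; field_simp
  obtain ⟨C1, hC1, hb1⟩ := aux_decay (u := u) (u1 := u1) (u2 := u2) (a := z₁) (k := 21)
    (K := K * lam n) (ρ := del n) hz₁0 (by linarith) (by nlinarith) (ucont _ hz₁0)
    (fun z hz => d1 z (hz₁0.trans hz)) (fun z hz => d2 z (hz₁0.trans hz)) ulim (by
      intro z hz hp
      have hz0 : 0 < z := hz₁0.trans hz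
      obtain ⟨Q, q1, q2⟩ := key z (by linarith)
      have q3 := hQ z hz Q q1
      have q4 : 0 < u z / z ^ 2 := by positivity
      rw [rpv z hz0]
      have q5 : K * lam n * (vv n z / lam n / z ^ 2) = K * (vv n z / z ^ 2) := by field_simp
      have q6 := (abs_le.1 q2).1
      nlinarith)
  obtain ⟨C2, hC2, hb2⟩ := aux_decay (u := fun z => -u z) (u1 := fun z => -u1 z)
    (u2 := fun z => -u2 z) (a := z₁) (k := 21)
    (K := K * lam n) (ρ := del n) hz₁0 (by linarith) (by nlinarith) (ucont _ hz₁0).neg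
    (fun z hz => (d1 z (hz₁0.trans hz)).neg) (fun z hz => (d2 z (hz₁0.trans hz)).neg)
    (by simpa using ulim.neg) (by
      intro z hz hp
      have hz0 : 0 < z := hz₁0.trans hz
      obtain ⟨Q, q1, q2⟩ := key z (by linarith)
      have q3 := hQ z hz Q q1
      have q4 : 0 < -u z / z ^ 2 := by positivity
      rw [rpv z hz0]
      have q5 : K * lam n * (vv n z / lam n / z ^ 2) = K * (vv n z / z ^ 2) := by field_simp
      have q6 := (abs_le.1 q2).2
      have q7 : u z / z ^ 2 = -(-u z / z ^ 2) := by ring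
      rw [q7] at q6
      nlinarith)
  obtain ⟨C, hC, hCb⟩ := aux_ext_bound (f := u) (w := fun z => z ^ (-del n)) (a := z₁) (C := C1 + C2)
    (ucont 1 one_pos) (continuousOn_id.rpow_const (fun x hx => Or.inl (one_pos.trans_le hx).ne'))
    (fun z hz => Real.rpow_pos_of_pos (by linarith) _) (by
      intro z hz
      have hw : 0 < z ^ (-del n) := Real.rpow_pos_of_pos (by linarith) _
      have f1 := hb1 z hz
      have f2 := hb2 z hz
      rw [abs_le]
      constructor <;> nlinarith)
  have hder := aux_deriv_bound (u := u) (u1 := u1) (u2 := u2) (C := C)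
    (K := N * (1 + D) * C + K * lam n) (ρ := del n) (by linarith) hC.le (by positivity)
    (fun z hz => d1 z (by linarith)) (fun z hz => d2 z (by linarith)) hCb (by
      intro z hz
      have hz0 : 0 < z := by linarith
      obtain ⟨Q, q1, q2⟩ := key z hz
      have q3 : |Q| ≤ 1 + D := by
        have a1 : |Q| ≤ |Q - 1| + 1 := by
          have := abs_add_le (Q - 1) 1
          simpa using this
        have a2 := one_div_sq_le hz
        nlinarith
      have e1 : |N * Q * (u z / z ^ 2)| ≤ N * (1 + D) * (C * z ^ (-del n) / z ^ 2) := by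
        rw [abs_mul, abs_mul, abs_of_pos hNp, abs_div, abs_of_pos (by positivity : 0 < z ^ 2)]
        apply mul_le_mul
        · exact mul_le_mul_of_nonneg_left q3 hNp.le
        · exact div_le_div_of_nonneg_right (hCb z hz) (by positivity)
        · positivity
        · positivity
      have e2 : |u2 z| ≤ |u2 z - N * Q * (u z / z ^ 2)| + |N * Q * (u z / z ^ 2)| := by
        have := abs_add_le (u2 z - N * Q * (u z / z ^ 2)) (N * Q * (u z / z ^ 2))
        simpa using this
      have e3 : K * (vv n z / z ^ 2) = K * lam n * (z ^ (-del n) / z ^ 2) := by rw [vv]; ring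
      rw [e3] at q2
      have e4 : (N * (1 + D) * C + K * lam n) * (z ^ (-del n) / z ^ 2) =
        N * (1 + D) * (C * z ^ (-del n) / z ^ 2) + K * lam n * (z ^ (-del n) / z ^ 2) := by ring
      linarith)
  set K' := 2 * C + (N * (1 + D) * C + K * lam n) with hK'
  have hK'p : 0 < K' := by positivity
  refine ⟨(C + K') / lam n, by positivity, fun z hz => ?_⟩
  have hz0 : 0 < z := by linarith
  have hv := vv_pos hn hz0
  have c1 := hCb z hz
  have c2 := hder z hz
  simp only [rpv z hz0] at c1 c2
  have hq : 0 < vv n z / lam n := by positivity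
  have hE : (C + K') / lam n * vv n z = C * (vv n z / lam n) + K' * (vv n z / lam n) := by ring
  have hE1 : 0 < C * (vv n z / lam n) := by positivity
  have hE2 : 0 < K' * (vv n z / lam n) := by positivity
  constructor
  · change |u z| ≤ _; linarith
  · change |z * u1 z| ≤ _
    rw [abs_mul, abs_of_pos hz0]
    have := mul_le_mul_of_nonneg_left c2 hz0.le
    have e : z * (K' * (vv n z / lam n / z)) = K' * (vv n z / lam n) := by field_simp
    linarith

end corr

end

section
open Filter Topology Set
set_option linter.unusedVariables false

/-! ### The error function -/

lemma mu1_kap (y : ℝ) : mu1 y = 2 * kap * ∫ σ in (0:ℝ)..(y / 2), Real.exp (-σ ^ 2) := by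
  unfold mu1 kap; ring

lemma mu1_exp {y : ℝ} (hy : 0 < y) (hy1 : y ≤ 1) :
    ∃ m, |m| ≤ 1 ∧ mu1 y = kap * y * (1 - y ^ 2 / 12 + m * (y ^ 2) ^ 2) := by
  have hk := kap_pos
  have hi : ∀ f : ℝ → ℝ, Continuous f → IntervalIntegrable f MeasureTheory.volume 0 (y / 2) :=
    fun f hf => hf.intervalIntegrable _ _
  have e1 : (∫ σ in (0:ℝ)..(y / 2), (Real.exp (-σ ^ 2) - 1 + σ ^ 2))
      = (∫ σ in (0:ℝ)..(y / 2), Real.exp (-σ ^ 2)) - y / 2 + y ^ 3 / 24 := by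
    rw [intervalIntegral.integral_add (hi _ (by fun_prop)) (hi _ (by fun_prop)),
      intervalIntegral.integral_sub (hi _ (by fun_prop)) (hi _ (by fun_prop))]
    simp [integral_pow]
    ring
  have e2 : ‖∫ σ in (0:ℝ)..(y / 2), (Real.exp (-σ ^ 2) - 1 + σ ^ 2)‖ ≤ (y / 2) ^ 4 * |y / 2 - 0| := by
    apply intervalIntegral.norm_integral_le_of_norm_le_const
    intro σ hσ
    rw [uIoc_of_le (by linarith)] at hσ
    have h1 : |(-σ ^ 2)| ≤ 1 := by
      rw [abs_neg, abs_of_nonneg (by positivity)]; nlinarith [hσ.1, hσ.2]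
    have h2 := Real.abs_exp_sub_one_sub_id_le h1
    rw [Real.norm_eq_abs]
    rw [sub_neg_eq_add] at h2
    refine h2.trans ?_
    have := pow_le_pow_left₀ hσ.1.le hσ.2 4
    linarith [show (-σ ^ 2) ^ 2 = σ ^ 4 by ring]
  rw [e1, Real.norm_eq_abs, sub_zero, abs_of_pos (by linarith : 0 < y / 2)] at e2
  set J := ∫ σ in (0:ℝ)..(y / 2), Real.exp (-σ ^ 2) with hJ
  refine ⟨2 * (J - y / 2 + y ^ 3 / 24) / y ^ 5, ?_, ?_⟩
  · rw [abs_div, abs_of_pos (by positivity : 0 < y ^ 5), div_le_one (by positivity), abs_mul,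
      abs_two]
    have : 0 < y ^ 5 := by positivity
    linarith [show (y / 2) ^ 4 * (y / 2) = y ^ 5 / 32 by ring]
  · rw [mu1_kap, ← hJ]; field_simp; ring

lemma mu1_nonneg {y : ℝ} (hy : 0 ≤ y) : 0 ≤ mu1 y := by
  have hk := kap_pos
  rw [mu1_kap]
  have : 0 ≤ ∫ σ in (0:ℝ)..(y / 2), Real.exp (-σ ^ 2) :=
    intervalIntegral.integral_nonneg (by linarith) (fun _ _ => (Real.exp_pos _).le)
  positivity

lemma mu1_le {y : ℝ} (hy : 0 ≤ y) : mu1 y ≤ 1 := by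
  have hk := kap_pos
  have h0 : 0 < Real.sqrt Real.pi := by positivity
  rw [mu1_kap, intervalIntegral.integral_of_le (by linarith)]
  have hinteg : MeasureTheory.Integrable (fun σ : ℝ => Real.exp (-σ ^ 2)) := by
    simpa using integrable_exp_neg_mul_sq (b := 1) one_pos
  have hg := integral_gaussian_Ioi 1
  simp only [neg_mul, one_mul, div_one] at hg
  have : (∫ σ in Ioc (0:ℝ) (y / 2), Real.exp (-σ ^ 2)) ≤ ∫ σ in Ioi (0:ℝ), Real.exp (-σ ^ 2) :=
    MeasureTheory.setIntegral_mono_set hinteg.integrableOn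
      (Eventually.of_forall fun _ => (Real.exp_pos _).le) (Ioc_subset_Ioi_self.eventuallyLE)
  rw [hg] at this
  calc _ ≤ 2 * kap * (√Real.pi / 2) := mul_le_mul_of_nonneg_left this (by positivity)
    _ = 1 := by unfold kap; field_simp

/-! ### The diffusive profile near zero -/

noncomputable def VV (n : ℕ) (y : ℝ) : ℝ := vv n y + auxp n * (y ^ 2 * vv n y)

lemma VV_d1 (n : ℕ) {y : ℝ} (hy : 0 < y) : HasDerivAt (VV n)
    (-del n * (vv n y / y) + auxp n * (2 - del n) * (y * vv n y)) y :=
  (vv_d1 n hy).add (zv_d1 n hy)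

lemma VV_d2 (n : ℕ) {y : ℝ} (hy : 0 < y) : HasDerivAt
    (fun y => -del n * (vv n y / y) + auxp n * (2 - del n) * (y * vv n y))
    (del n * (del n + 1) * (vv n y / y ^ 2) + auxp n * ((2 - del n) * (1 - del n)) * vv n y) y :=
  (vv_d2 n hy).add (zv_d2 n hy)

lemma mu1_vpow {n : ℕ} (hn : 4 ≤ n) {y : ℝ} (hy : 0 < y) (m θ : ℝ) :
    (2 * (kap * y * m) * (vv n y * θ)) ^ n
      = del n * (del n + 1) * (vv n y / y ^ 2) * (m * θ) ^ n := by
  rw [show 2 * (kap * y * m) * (vv n y * θ) = (2 * kap * y * vv n y) * (m * θ) by ring, mul_pow, vv,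
    vpow hn hy]

lemma VV_source {n : ℕ} (hn : 4 ≤ n) : ∃ K > 0, ∀ y, 0 < y → y ≤ 1 →
    |(2 * mu1 y * VV n y) ^ n -
      (del n * (del n + 1) * (vv n y / y ^ 2) + auxp n * ((2 - del n) * (1 - del n)) * vv n y
       + y / 2 * (-del n * (vv n y / y) + auxp n * (2 - del n) * (y * vv n y))
       + eps n * VV n y)| ≤ K * (y ^ 2 * vv n y) := by
  have hd := del_gt hn
  set p := auxp n with hp
  obtain ⟨C, hC, hH⟩ := auxH_bound n (2 + 2 * |p|)
  set c4 := p * (2 - del n) / 2 + eps n * p with hc4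
  refine ⟨del n * (del n + 1) * C + |c4| + 1, by positivity, ?_⟩
  intro y hy hy1
  obtain ⟨m, hm, hmu⟩ := mu1_exp hy hy1
  have hv := vv_pos hn hy
  have hY0 : 0 ≤ y ^ 2 := by positivity
  have hY1 : y ^ 2 ≤ 1 := by nlinarith
  set b2 := -p / 12 + m + m * p * y ^ 2 with hb2
  have hpa := abs_nonneg p
  have hmp : |m * p * y ^ 2| ≤ |p| := by
    rw [abs_mul, abs_mul, abs_of_nonneg hY0]
    have : |m| * |p| ≤ |p| := by nlinarith
    have h' : 0 ≤ |m| * |p| := by positivity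
    nlinarith
  have hb : |b2| ≤ 2 + 2 * |p| := by
    rw [hb2]
    refine (abs_add_le _ _).trans ?_
    have h1 := abs_add_le (-p / 12) m
    have h2 : |(-p / 12)| = |p| / 12 := by rw [abs_div, abs_neg]; norm_num
    linarith
  have hb1 : |p - 1 / 12| ≤ 2 + 2 * |p| := by
    have h1 := abs_sub p (1 / 12)
    have h2 : |(1 / 12 : ℝ)| = 1 / 12 := by norm_num
    linarith
  have hb0 : |(1:ℝ)| ≤ 2 + 2 * |p| := by rw [abs_one]; linarith
  have hYa : |y ^ 2| ≤ 2 + 2 * |p| := by rw [abs_of_nonneg hY0]; linarith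
  have hHb := hH (y ^ 2) 1 (p - 1 / 12) b2 hYa hb0 hb1 hb
  have hHe := auxH_eq n (y ^ 2) 1 (p - 1 / 12) b2
  simp only [one_pow, mul_one] at hHe
  set Hh := auxH n (y ^ 2) 1 (p - 1 / 12) b2
  have hVV : VV n y = vv n y * (1 + p * y ^ 2) := by unfold VV; ring
  have key : (2 * mu1 y * VV n y) ^ n -
      (del n * (del n + 1) * (vv n y / y ^ 2) + p * ((2 - del n) * (1 - del n)) * vv n y
       + y / 2 * (-del n * (vv n y / y) + p * (2 - del n) * (y * vv n y))
       + eps n * VV n y) = (del n * (del n + 1) * Hh - c4) * (y ^ 2 * vv n y) := by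
    rw [hmu, hVV, mu1_vpow hn hy]
    have hb : (1 - y ^ 2 / 12 + m * (y ^ 2) ^ 2) * (1 + p * y ^ 2)
        = 1 + (p - 1 / 12) * y ^ 2 + b2 * (y ^ 2) ^ 2 := by rw [hb2]; ring
    have hpow : ((1 - y ^ 2 / 12 + m * (y ^ 2) ^ 2) * (1 + p * y ^ 2)) ^ n
        = 1 + n * ((p - 1 / 12) * y ^ 2) + (y ^ 2) ^ 2 * Hh := by rw [hb]; linarith
    rw [hpow]
    have ca := auxp_eq hn
    rw [← hp] at ca
    rw [hc4]
    field_simp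
    linear_combination (-24 * y ^ 2) * ca
  rw [key, abs_mul, abs_of_pos (by positivity : 0 < y ^ 2 * vv n y)]
  refine mul_le_mul_of_nonneg_right ?_ (by positivity)
  refine (abs_sub _ _).trans ?_
  rw [abs_mul, abs_of_pos (by positivity : 0 < del n * (del n + 1))]
  have := mul_le_mul_of_nonneg_left hHb (by positivity : 0 ≤ del n * (del n + 1))
  linarith

end

section
open Filter Topology Set
set_option linter.unusedVariables false

/-- coefficient lower bound -/
lemma coef_low {n : ℕ} (hn : 4 ≤ n) : ∃ q, 0 < q ∧ q < 1 ∧ ∀ y u a b : ℝ, 0 < y → y ≤ 1 →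
    kap * y * q ≤ u → vv n y * q ≤ a → a ≤ b →
    11 / y ^ 2 * (b - a) ≤ (2 * u * b) ^ n - (2 * u * a) ^ n := by
  have hk := kap_pos
  have hc : ContinuousAt (fun q : ℝ => q ^ (n + (n - 1))) 1 := by fun_prop
  have hev : ∀ᶠ q in 𝓝[<] (1:ℝ), (1 / 2 : ℝ) < q ^ (n + (n - 1)) :=
    (hc.eventually_const_lt (by norm_num)).filter_mono nhdsWithin_le_nhds
  have hev2 : ∀ᶠ q in 𝓝[<] (1:ℝ), q ∈ Ioo (0:ℝ) 1 := Ioo_mem_nhdsLT (by norm_num)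
  obtain ⟨q, hq, hq0, hq1⟩ := (hev.and hev2).exists
  refine ⟨q, hq0, hq1, ?_⟩
  intro y u a b hy hy1 hu ha hab
  have hv := vv_pos hn hy
  have ha0 : 0 ≤ a := le_trans (by positivity) ha
  have hu0 : 0 ≤ u := le_trans (by positivity) hu
  have h1 := pow_tangent n ha0 (ha0.trans hab)
  have h2 : (2 * u * b) ^ n - (2 * u * a) ^ n = (2 * u) ^ n * (b ^ n - a ^ n) := by
    rw [mul_pow, mul_pow (2 * u) a]; ring
  rw [h2]
  have h3 : 11 / y ^ 2 ≤ (2 * u) ^ n * (n * a ^ (n - 1)) := by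
    have e1 : (2 * (kap * y * q)) ^ n ≤ (2 * u) ^ n :=
      pow_le_pow_left₀ (by positivity) (by linarith) n
    have e2 : (vv n y * q) ^ (n - 1) ≤ a ^ (n - 1) := pow_le_pow_left₀ (by positivity) ha _
    have e3 : (2 * (kap * y * q)) ^ n * (n * (vv n y * q) ^ (n - 1)) ≤ (2 * u) ^ n * (n * a ^ (n - 1)) :=
      mul_le_mul e1 (mul_le_mul_of_nonneg_left e2 (by positivity)) (by positivity) (by positivity)
    refine le_trans ?_ e3
    have e4 : (2 * (kap * y * q)) ^ n * (n * (vv n y * q) ^ (n - 1))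
        = n * (del n * (del n + 1)) / y ^ 2 * q ^ (n + (n - 1)) := by
      have e := vpow hn hy
      rw [← vv] at e
      have e5 : (2 * kap * y * vv n y) ^ n = (2 * kap * y) ^ n * vv n y ^ (n - 1) * vv n y := by
        have e7 : vv n y ^ n = vv n y ^ (n - 1) * vv n y := by
          rw [← pow_succ]; congr 1; omega
        rw [mul_pow, e7]; exact (mul_assoc _ _ _).symm
      rw [e5] at e
      have e6 : (2 * kap * y) ^ n * vv n y ^ (n - 1) = del n * (del n + 1) / y ^ 2 := by
        apply mul_right_cancel₀ hv.ne'
        rw [e]; ring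
      rw [pow_add, mul_pow (vv n y), show 2 * (kap * y * q) = (2 * kap * y) * q by ring,
        mul_pow (2 * kap * y)]
      linear_combination n * q ^ n * q ^ (n - 1) * e6
    rw [e4, div_mul_eq_mul_div]
    have h22 := n_dd hn
    apply div_le_div_of_nonneg_right _ (by positivity)
    nlinarith
  calc 11 / y ^ 2 * (b - a) ≤ (2 * u) ^ n * (n * a ^ (n - 1)) * (b - a) :=
        mul_le_mul_of_nonneg_right h3 (by linarith)
    _ = (2 * u) ^ n * (n * a ^ (n - 1) * (b - a)) := by ring
    _ ≤ _ := mul_le_mul_of_nonneg_left h1 (by positivity)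

lemma comp_alg {d e x v C K τ U : ℝ} (hd : 1 < d) (hdl : d ≤ 2) (he : 0 < e) (hel : e ≤ 1 / 3)
    (hx0 : 0 < x) (hx1 : x ≤ 1) (hv : 0 < v) (hC0 : 0 < C) (hCK : K ≤ C) (hK : 0 < K) (hτ0 : 0 < τ)
    (hfp : 0 < U - (C * x ^ 4 + τ) * v) :
    0 < 11 * U - x ^ 2 * (K * (x ^ 2 * v)) - (C * (4 - d) * x ^ 6 / 2 - d * τ * x ^ 2 / 2) * v
      - x ^ 2 * (e * U) - (C * ((4 - d) * (3 - d)) * x ^ 4 + d * (d + 1) * τ) * v := by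
  have hX : 0 < x ^ 2 := by positivity
  have hX1 : x ^ 2 ≤ 1 := by nlinarith
  have hw : 0 < (C * x ^ 4 + τ) * v := by positivity
  have hU : 0 < U := by linarith
  have a1 : x ^ 2 * (e * U) ≤ U := by
    have : x ^ 2 * e ≤ 1 := by nlinarith
    nlinarith
  have a2 : (C * (4 - d) * x ^ 6 / 2 - d * τ * x ^ 2 / 2) * v
      ≤ 3 / 2 * C * x ^ 4 * v := by
    apply mul_le_mul_of_nonneg_right _ hv.le
    have b1 : x ^ 6 ≤ x ^ 4 := pow_le_pow_of_le_one hx0.le hx1 (by norm_num)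
    have b2 : 0 ≤ d * τ * x ^ 2 / 2 := by positivity
    have b3 : C * (4 - d) ≤ 3 * C := by nlinarith
    have b4 : 0 < x ^ 6 := by positivity
    nlinarith
  have a3 : (C * ((4 - d) * (3 - d)) * x ^ 4 + d * (d + 1) * τ) * v
      ≤ (6 * C * x ^ 4 + 6 * τ) * v := by
    apply mul_le_mul_of_nonneg_right _ hv.le
    have b1 : (4 - d) * (3 - d) ≤ 6 := by nlinarith
    have b2 : d * (d + 1) ≤ 6 := by nlinarith
    have b3 : 0 < C * x ^ 4 := by positivity
    nlinarith
  have a4 : x ^ 2 * (K * (x ^ 2 * v)) ≤ C * x ^ 4 * v := by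
    have : 0 < x ^ 4 * v := by positivity
    nlinarith
  have a5 : 0 < C * x ^ 4 * v := by positivity
  have a6 : 0 < τ * v := by positivity
  nlinarith

set_option maxHeartbeats 1000000 in
/-- comparison near zero -/
lemma comp_zero {n : ℕ} (hn : 4 ≤ n) {u u1 Lu : ℝ → ℝ} {y1 K : ℝ} (hy1 : 0 < y1) (hy1' : y1 ≤ 1)
    (hK : 0 < K)
    (h1 : ∀ y > 0, HasDerivAt u (u1 y) y)
    (h2 : ∀ y > 0, HasDerivAt u1 (Lu y - y / 2 * u1 y - eps n * u y) y)
    (hL : ∀ y, 0 < y → y ≤ y1 → 0 < u y → 11 / y ^ 2 * u y - K * (y ^ 2 * vv n y) ≤ Lu y)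
    (h0 : Tendsto (fun y => u y / vv n y) (𝓝[>] 0) (𝓝 0)) :
    ∃ C > 0, ∀ y, 0 < y → y ≤ y1 → u y ≤ C * (y ^ 4 * vv n y) := by
  have hd := del_gt hn
  have hdl := del_le hn
  have he := eps_pos hn
  have hel := eps_le hn
  have hv1 := vv_pos hn hy1
  set C := K + |u y1| / (y1 ^ 4 * vv n y1) with hC
  have hCK : K ≤ C := by rw [hC]; have : 0 ≤ |u y1| / (y1 ^ 4 * vv n y1) := by positivity
                         linarith
  have hC0 : 0 < C := hK.trans_le hCK
  have hCu : u y1 ≤ C * (y1 ^ 4 * vv n y1) := by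
    have : |u y1| = |u y1| / (y1 ^ 4 * vv n y1) * (y1 ^ 4 * vv n y1) := by field_simp
    have h3 : 0 < K * (y1 ^ 4 * vv n y1) := by positivity
    rw [hC, add_mul, ← this]; linarith [le_abs_self (u y1)]
  refine ⟨C, hC0, fun y hy hyy => ?_⟩
  have hvy := vv_pos hn hy
  apply le_of_forall_pos_le_add
  intro τ' hτ'
  set τ := τ' / vv n y with hτ
  have hτ0 : 0 < τ := by positivity
  have hev : ∀ᶠ x in 𝓝[>] (0:ℝ), u x / vv n x < τ := h0.eventually_lt_const hτ0
  obtain ⟨y0, ⟨hy0τ, hy0⟩⟩ := (hev.and (Ioo_mem_nhdsGT hy)).exists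
  have hv0 := vv_pos hn hy0.1
  rw [div_lt_iff₀ hv0] at hy0τ
  have hw1 : ∀ x > 0, HasDerivAt (fun x => (C * x ^ 4 + τ) * vv n x)
      ((C * (4 - del n) * x ^ 3 - del n * τ / x) * vv n x) x := by
    intro x hx
    refine ((((hasDerivAt_pow 4 x).const_mul C).add_const τ).mul (vv_d1 n hx)).congr_deriv ?_
    field_simp; push_cast; ring
  have hw2 : ∀ x > 0, HasDerivAt (fun x => (C * (4 - del n) * x ^ 3 - del n * τ / x) * vv n x)
      ((C * ((4 - del n) * (3 - del n)) * x ^ 2 + del n * (del n + 1) * τ / x ^ 2) * vv n x) x := by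
    intro x hx
    refine ((((hasDerivAt_pow 3 x).const_mul (C * (4 - del n))).sub
      ((hasDerivAt_const x (del n * τ)).div (hasDerivAt_id x) hx.ne')).mul (vv_d1 n hx)).congr_deriv ?_
    simp only [id, Pi.sub_apply, Pi.div_apply]
    field_simp; push_cast; ring
  have := aux_maxP (f := fun x => u x - (C * x ^ 4 + τ) * vv n x)
    (f1 := fun x => u1 x - (C * (4 - del n) * x ^ 3 - del n * τ / x) * vv n x)
    (f2 := fun x => Lu x - x / 2 * u1 x - eps n * u x -
      (C * ((4 - del n) * (3 - del n)) * x ^ 2 + del n * (del n + 1) * τ / x ^ 2) * vv n x)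
    (a := y0) (b := y1) (hy0.2.le.trans hyy)
    (fun x hx => ((h1 x (hy0.1.trans_le hx.1)).sub (hw1 x (hy0.1.trans_le hx.1))).continuousAt.continuousWithinAt)
    (fun x hx => (h1 x (hy0.1.trans hx.1)).sub (hw1 x (hy0.1.trans hx.1)))
    (fun x hx => (h2 x (hy0.1.trans hx.1)).sub (hw2 x (hy0.1.trans hx.1)))
    (by
      have : 0 < C * y0 ^ 4 * vv n y0 := by have := hy0.1; positivity
      change u y0 - (C * y0 ^ 4 + τ) * vv n y0 ≤ 0
      linarith)
    (by
      have : 0 < τ * vv n y1 := by positivity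
      change u y1 - (C * y1 ^ 4 + τ) * vv n y1 ≤ 0
      linarith)
    (by
      intro x hx hfp hf1
      have hx0 : 0 < x := hy0.1.trans hx.1
      have hv := vv_pos hn hx0
      have hx1 : x ≤ 1 := hx.2.le.trans hy1'
      have hwp : 0 < (C * x ^ 4 + τ) * vv n x := by positivity
      have hup : 0 < u x := by linarith
      have hLx := hL x hx0 hx.2.le hup
      change 0 < Lu x - x / 2 * u1 x - eps n * u x -
        (C * ((4 - del n) * (3 - del n)) * x ^ 2 + del n * (del n + 1) * τ / x ^ 2) * vv n x
      have hu1 : u1 x = (C * (4 - del n) * x ^ 3 - del n * τ / x) * vv n x := by linarith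
      have hX : 0 < x ^ 2 := by positivity
      have hX1 : x ^ 2 ≤ 1 := by nlinarith
      have e1 : x ^ 2 * (11 / x ^ 2 * u x) = 11 * u x := by field_simp
      have e2 : x ^ 2 * (x / 2 * u1 x) = (C * (4 - del n) * x ^ 6 / 2 - del n * τ * x ^ 2 / 2) * vv n x := by
        rw [hu1]; field_simp
      have e3 : x ^ 2 * ((C * ((4 - del n) * (3 - del n)) * x ^ 2 + del n * (del n + 1) * τ / x ^ 2) * vv n x)
          = (C * ((4 - del n) * (3 - del n)) * x ^ 4 + del n * (del n + 1) * τ) * vv n x := by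
        field_simp
      have hmain : 0 < x ^ 2 * (11 / x ^ 2 * u x - K * (x ^ 2 * vv n x) - x / 2 * u1 x - eps n * u x -
        (C * ((4 - del n) * (3 - del n)) * x ^ 2 + del n * (del n + 1) * τ / x ^ 2) * vv n x) := by
        rw [mul_sub, mul_sub, mul_sub, mul_sub, e1, e2, e3]
        exact comp_alg hd hdl he hel hx0 hx1 hv hC0 hCK hK hτ0 hfp
      have := pos_of_mul_pos_right hmain hX.le
      linarith)
  have h3 := this y ⟨hy0.2.le, hyy⟩
  have h4 : τ * vv n y = τ' := by rw [hτ]; field_simp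
  have h5 : u y - (C * y ^ 4 + τ) * vv n y ≤ 0 := h3
  linarith

lemma mu_near {n : ℕ} (hn : 4 ≤ n) {μ μ1 : ℝ → ℝ} (hpos : ∀ y > 0, 0 < μ y)
    (h1 : ∀ y > 0, HasDerivAt μ (μ1 y) y)
    (h2 : ∀ y > 0, HasDerivAt μ1 ((2 * mu1 y * μ y) ^ n - y / 2 * μ1 y - eps n * μ y) y)
    (hlim : Tendsto (fun y : ℝ => y ^ del n * μ y) (𝓝[>] 0) (𝓝 (lam n))) :
    ∃ C > 0, ∀ y, 0 < y → y ≤ 1 → |μ y - VV n y| ≤ C * (y ^ 4 * vv n y) := by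
  have hl := lam_pos hn
  have hk := kap_pos
  obtain ⟨K, hK, hsrc⟩ := VV_source hn
  obtain ⟨q, hq0, hq1, hcoef⟩ := coef_low hn
  have hr : Tendsto (fun y => μ y / vv n y) (𝓝[>] 0) (𝓝 1) := by
    have := hlim.div_const (lam n)
    rw [div_self hl.ne'] at this
    refine this.congr' ?_
    filter_upwards [self_mem_nhdsWithin] with y hy
    have hy' : 0 < y := hy
    have : 0 < y ^ del n := Real.rpow_pos_of_pos hy' _
    rw [vv, Real.rpow_neg hy'.le]; field_simp
  have hP : Tendsto (fun y : ℝ => 1 + auxp n * y ^ 2) (𝓝[>] 0) (𝓝 1) := by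
    have : ContinuousAt (fun y : ℝ => 1 + auxp n * y ^ 2) 0 := by fun_prop
    have h := this.tendsto
    simp only [ne_eq, OfNat.ofNat_ne_zero, not_false_eq_true, zero_pow, mul_zero, add_zero] at h
    exact h.mono_left nhdsWithin_le_nhds
  have hQ : Tendsto (fun y : ℝ => 1 - 2 * y ^ 2) (𝓝[>] 0) (𝓝 1) := by
    have : ContinuousAt (fun y : ℝ => 1 - 2 * y ^ 2) 0 := by fun_prop
    have h := this.tendsto
    simp only [ne_eq, OfNat.ofNat_ne_zero, not_false_eq_true, zero_pow, mul_zero, sub_zero] at h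
    exact h.mono_left nhdsWithin_le_nhds
  have hVe : ∀ y, VV n y = vv n y * (1 + auxp n * y ^ 2) := fun y => by unfold VV; ring
  have hz : Tendsto (fun y => (μ y - VV n y) / vv n y) (𝓝[>] 0) (𝓝 0) := by
    have := hr.sub hP
    rw [sub_self] at this
    refine this.congr' ?_
    filter_upwards [self_mem_nhdsWithin] with y hy
    have := vv_pos hn hy
    rw [hVe]; field_simp
  have hev := ((hr.eventually_const_lt hq1).and (hP.eventually_const_lt hq1)).and
    (hQ.eventually_const_lt hq1)
  rw [eventually_nhdsWithin_iff, Metric.eventually_nhds_iff] at hev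
  obtain ⟨y2, hy2, hev⟩ := hev
  set y1 := min (y2 / 2) 1 with hy1
  have hy10 : 0 < y1 := by positivity
  have hy11 : y1 ≤ 1 := min_le_right _ _
  have hall : ∀ y, 0 < y → y ≤ y1 → vv n y * q ≤ μ y ∧ vv n y * q ≤ VV n y ∧ kap * y * q ≤ mu1 y := by
    intro y hy hyy
    have hy2' : y ≤ y2 / 2 := hyy.trans (min_le_left _ _)
    obtain ⟨⟨a1, a2⟩, a3⟩ := hev (y := y) (by rw [Real.dist_eq, sub_zero, abs_of_pos hy]; linarith) hy
    have hv := vv_pos hn hy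
    refine ⟨?_, ?_, ?_⟩
    · rw [lt_div_iff₀ hv] at a1; linarith
    · rw [hVe]; exact mul_le_mul_of_nonneg_left a2.le hv.le
    · obtain ⟨m, hm, hmu⟩ := mu1_exp hy (hyy.trans hy11)
      rw [hmu]
      apply mul_le_mul_of_nonneg_left _ (by positivity)
      have b1 := (abs_le.1 hm).1
      have b2 : y ^ 2 ≤ 1 := by nlinarith
      have b3 : 0 < y ^ 2 := by positivity
      have b4 : (y ^ 2) ^ 2 ≤ y ^ 2 := by nlinarith
      have b5 : -(y ^ 2) ^ 2 ≤ m * (y ^ 2) ^ 2 := by nlinarith [sq_nonneg (y ^ 2)]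
      linarith
  have hV2 : ∀ y > 0, HasDerivAt (fun y => -del n * (vv n y / y) + auxp n * (2 - del n) * (y * vv n y))
      ((del n * (del n + 1) * (vv n y / y ^ 2) + auxp n * ((2 - del n) * (1 - del n)) * vv n y
       + y / 2 * (-del n * (vv n y / y) + auxp n * (2 - del n) * (y * vv n y))
       + eps n * VV n y) - y / 2 * (-del n * (vv n y / y) + auxp n * (2 - del n) * (y * vv n y))
         - eps n * VV n y) y := by
    intro y hy
    exact (VV_d2 n hy).congr_deriv (by ring)
  set LV : ℝ → ℝ := fun y => (del n * (del n + 1) * (vv n y / y ^ 2) + auxp n * ((2 - del n) * (1 - del n)) * vv n y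
       + y / 2 * (-del n * (vv n y / y) + auxp n * (2 - del n) * (y * vv n y))
       + eps n * VV n y) with hLV
  obtain ⟨C1, hC1, hb1⟩ := comp_zero hn (u := fun y => μ y - VV n y)
    (u1 := fun y => μ1 y - (-del n * (vv n y / y) + auxp n * (2 - del n) * (y * vv n y)))
    (Lu := fun y => (2 * mu1 y * μ y) ^ n - LV y) hy10 hy11 hK
    (fun y hy => (h1 y hy).sub (VV_d1 n hy))
    (fun y hy => ((h2 y hy).sub (hV2 y hy)).congr_deriv (by simp only [hLV]; ring))
    (by
      intro y hy hyy hup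
      obtain ⟨a1, a2, a3⟩ := hall y hy hyy
      have hs := (abs_le.1 (hsrc y hy (hyy.trans hy11))).1
      have hc := hcoef y _ (VV n y) (μ y) hy (hyy.trans hy11) a3 a2 (by linarith)
      change 11 / y ^ 2 * (μ y - VV n y) - K * (y ^ 2 * vv n y) ≤ (2 * mu1 y * μ y) ^ n - LV y
      change -(K * (y ^ 2 * vv n y)) ≤ (2 * mu1 y * VV n y) ^ n - LV y at hs
      linarith) hz
  obtain ⟨C2, hC2, hb2⟩ := comp_zero hn (u := fun y => VV n y - μ y)
    (u1 := fun y => (-del n * (vv n y / y) + auxp n * (2 - del n) * (y * vv n y)) - μ1 y)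
    (Lu := fun y => LV y - (2 * mu1 y * μ y) ^ n) hy10 hy11 hK
    (fun y hy => (VV_d1 n hy).sub (h1 y hy))
    (fun y hy => ((hV2 y hy).sub (h2 y hy)).congr_deriv (by simp only [hLV]; ring))
    (by
      intro y hy hyy hup
      obtain ⟨a1, a2, a3⟩ := hall y hy hyy
      have hs := (abs_le.1 (hsrc y hy (hyy.trans hy11))).2
      have hc := hcoef y _ (μ y) (VV n y) hy (hyy.trans hy11) a3 a1 (by linarith)
      change 11 / y ^ 2 * (VV n y - μ y) - K * (y ^ 2 * vv n y) ≤ LV y - (2 * mu1 y * μ y) ^ n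
      change (2 * mu1 y * VV n y) ^ n - LV y ≤ K * (y ^ 2 * vv n y) at hs
      linarith) (by simpa [← neg_div] using hz.neg)
  have hq : ContinuousOn (fun y => |μ y - VV n y| / (y ^ 4 * vv n y)) (Icc y1 1) := by
    apply ContinuousOn.div
    · exact fun y hy => (((h1 y (hy10.trans_le hy.1)).sub (VV_d1 n (hy10.trans_le hy.1))).continuousAt.abs).continuousWithinAt
    · exact fun y hy => ((continuousAt_id.pow 4).mul (vv_d1 n (hy10.trans_le hy.1)).continuousAt).continuousWithinAt
    · intro y hy
      have hy0 := hy10.trans_le hy.1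
      have := vv_pos hn hy0
      positivity
  obtain ⟨B, hB⟩ := (isCompact_Icc.image_of_continuousOn hq).bddAbove
  refine ⟨C1 + C2 + |B|, by positivity, fun y hy hyy => ?_⟩
  have hv := vv_pos hn hy
  have hw : 0 < y ^ 4 * vv n y := by positivity
  rcases le_total y y1 with h | h
  · have a1 : μ y - VV n y ≤ _ := hb1 y hy h
    have a2 : VV n y - μ y ≤ _ := hb2 y hy h
    have b1 := mul_pos hC1 hw
    have b2 := mul_pos hC2 hw
    have b3 := mul_nonneg (abs_nonneg B) hw.le
    rw [abs_le]; constructor <;> nlinarith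
  · have := hB (mem_image_of_mem _ (⟨h, hyy⟩ : y ∈ Icc y1 1))
    change |μ y - VV n y| / (y ^ 4 * vv n y) ≤ B at this
    rw [div_le_iff₀ hw] at this
    have b1 := mul_pos hC1 hw
    have b2 := mul_pos hC2 hw
    have b3 := mul_le_mul_of_nonneg_right (le_abs_self B) hw.le
    nlinarith

end

section
open Filter Topology Set
set_option linter.unusedVariables false

lemma dd_abs {G G1 G2 : ℝ → ℝ} (h1 : ∀ r > 0, HasDerivAt G (G1 r) r)
    (h2 : ∀ r > 0, HasDerivAt G1 (G2 r) r) {x : ℝ} (hx : x ≠ 0) :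
    deriv (deriv (fun x' => G |x'|)) x = G2 |x| := by
  rcases lt_or_gt_of_ne hx with h | h
  · have hev : deriv (fun x' => G |x'|) =ᶠ[𝓝 x] fun x' => -G1 (-x') := by
      filter_upwards [Iio_mem_nhds h] with w hw
      have hw' : w < 0 := hw
      have e : (fun x' => G |x'|) =ᶠ[𝓝 w] fun x' => G (-x') := by
        filter_upwards [Iio_mem_nhds hw'] with v hv
        have hv' : v < 0 := hv
        simp only [abs_of_neg hv']
      rw [e.deriv_eq]
      have := (h1 (-w) (by linarith)).comp w (hasDerivAt_neg w)
      refine (this.congr_deriv ?_).deriv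
      ring
    rw [hev.deriv_eq, abs_of_neg h]
    have := ((h2 (-x) (by linarith)).comp x (hasDerivAt_neg x)).neg
    refine (this.congr_deriv ?_).deriv
    ring
  · have hev : deriv (fun x' => G |x'|) =ᶠ[𝓝 x] G1 := by
      filter_upwards [Ioi_mem_nhds h] with w hw
      have hw' : 0 < w := hw
      have e : (fun x' => G |x'|) =ᶠ[𝓝 w] G := by
        filter_upwards [Ioi_mem_nhds hw'] with v hv
        have hv' : 0 < v := hv
        simp only [abs_of_pos hv']
      rw [e.deriv_eq]
      exact (h1 w hw').deriv
    rw [hev.deriv_eq, abs_of_pos h]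
    exact (h2 x h).deriv

lemma dt_scale {F : ℝ → ℝ} {F1 c a r t : ℝ} (ht : 0 < t)
    (h : HasDerivAt F F1 (r / t ^ a)) :
    HasDerivAt (fun s => s ^ (-c) * F (r / s ^ a))
      (-(1 / t) * (t ^ (-c) * (c * F (r / t ^ a) + a * (r / t ^ a) * F1))) t := by
  have hta : 0 < t ^ a := Real.rpow_pos_of_pos ht _
  have h1 : HasDerivAt (fun s : ℝ => r / s ^ a) (-(1 / t) * (a * (r / t ^ a))) t := by
    refine ((hasDerivAt_const t r).div (aux_hasDerivAt_rpow a ht) hta.ne').congr_deriv ?_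
    field_simp; ring
  refine ((aux_hasDerivAt_rpow (-c) ht).mul (h.comp t h1)).congr_deriv ?_
  simp only [Function.comp]
  field_simp; ring

lemma dx_scale {F : ℝ → ℝ} {F1 T r : ℝ} (c : ℝ) (hT : 0 < T)
    (h : HasDerivAt F F1 (r / T)) :
    HasDerivAt (fun r => c * F (r / T)) (c * (F1 / T)) r := by
  refine ((h.comp r ((hasDerivAt_id r).div_const T)).const_mul c).congr_deriv ?_
  field_simp

noncomputable def JJ (n : ℕ) (η μ h hd : ℝ → ℝ) (s e y : ℝ) : ℝ :=
  s * (2 * kap * (s * y) * η (s * y) + η (s * y) ^ 2) ^ n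
  + s⁻¹ * ((n : ℝ) * (2 * kap * (s * y) * η (s * y) + η (s * y) ^ 2) ^ (n - 1)
          * ((2 * kap * (s * y) + 2 * η (s * y)) * h (s * y) + 2 * kap3 * (s * y) ^ 3 * η (s * y))
        - auxp n * ((2 - del n) * (1 - del n)) * vv n (s * y))
  + (s ^ 3)⁻¹ * (3 * gam n * (h (s * y) - auxp n * ((s * y) ^ 2 * vv n (s * y)))
        + alph n * (s * y * (hd (s * y) - auxp n * (2 - del n) * ((s * y) * vv n (s * y)))))
  + e * ((2 * mu1 y * μ y) ^ n
      - (del n * (del n + 1) * (vv n y / y ^ 2) + (eps n - del n / 2) * vv n y))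
  - s ^ (2 * n + 1) * (2 * mu1 y * (s⁻¹ * η (s * y) + e * (μ y - vv n y)
        + (s ^ 3)⁻¹ * (h (s * y) - auxp n * ((s * y) ^ 2 * vv n (s * y))))
      + (s⁻¹ * η (s * y) + e * (μ y - vv n y)
        + (s ^ 3)⁻¹ * (h (s * y) - auxp n * ((s * y) ^ 2 * vv n (s * y)))) ^ 2) ^ n

lemma mu3_eq (n : ℕ) (μ : ℝ → ℝ) (y : ℝ) : mu3 n μ y = μ y - vv n y := rfl

lemma phi2_eq {n : ℕ} (hn : 4 ≤ n) (h : ℝ → ℝ) {z : ℝ} (hz : 0 < z) :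
    phi2 n h z = h z - auxp n * (z ^ 2 * vv n z) := by
  rw [← rpow_two_del n hn hz, phi2]; ring

lemma J_eq {n : ℕ} (hn : 4 ≤ n) {η η1 μ μ1 h hd : ℝ → ℝ}
    (e1 : ∀ z > 0, HasDerivAt η (η1 z) z)
    (e2 : ∀ z > 0, HasDerivAt η1 ((2 * kap * z * η z + (η z) ^ 2) ^ n) z)
    (m1 : ∀ y > 0, HasDerivAt μ (μ1 y) y)
    (m2 : ∀ y > 0, HasDerivAt μ1 ((2 * mu1 y * μ y) ^ n - y / 2 * μ1 y - eps n * μ y) y)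
    (h1 : ∀ z > 0, HasDerivAt h (hd z) z)
    (h2 : ∀ z > 0, HasDerivAt hd ((n : ℝ) * (2 * kap * z * η z + (η z) ^ 2) ^ (n - 1)
          * ((2 * kap * z + 2 * η z) * h z + 2 * kap3 * z ^ 3 * η z)
          - gam n * η z - alph n * z * η1 z) z)
    {x t : ℝ} (hx : x ≠ 0) (ht : 1 ≤ t) :
    t * IFun n η μ h x t = JJ n η μ h hd (t ^ gam n) (t ^ (-eps n)) (|x| / Real.sqrt t) := by
  have ht0 : 0 < t := by linarith
  have hX : 0 < |x| := abs_pos.2 hx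
  have hγ := gam_n hn
  set X := |x| with hXd
  have hsq : Real.sqrt t = t ^ (1 / 2 : ℝ) := Real.sqrt_eq_rpow t
  set s := t ^ gam n with hs
  have hs0 : 0 < s := Real.rpow_pos_of_pos ht0 _
  set A := t ^ alph n with hA
  have hA0 : 0 < A := Real.rpow_pos_of_pos ht0 _
  set R := Real.sqrt t with hR
  have hR0 : 0 < R := Real.sqrt_pos.2 ht0
  have hAs : A * s = R := by
    rw [hA, hs, hsq, ← Real.rpow_add ht0]; congr 1; unfold alph; ring
  have hR2 : R * R = t := Real.mul_self_sqrt ht0.le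
  have hz : X / A = s * (X / R) := by rw [← hAs]; field_simp
  have hsg : t ^ (-gam n) = s⁻¹ := by rw [Real.rpow_neg ht0.le]
  have hsg3 : t ^ (-(3 * gam n)) = (s ^ 3)⁻¹ := by
    rw [Real.rpow_neg ht0.le, mul_comm, Real.rpow_mul ht0.le, ← hs]; norm_num
  have hst : s ^ (2 * n + 1) = t := by
    rw [hs, ← Real.rpow_natCast, ← Real.rpow_mul ht0.le]
    have : gam n * ((2 * n + 1 : ℕ) : ℝ) = 1 := by push_cast; linarith
    rw [this, Real.rpow_one]
  set e := t ^ (-eps n) with he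
  have hφ2 : ∀ z > 0, phi2 n h z = h z - auxp n * (z ^ 2 * vv n z) := fun z hz => phi2_eq hn h hz
  set ph : ℝ → ℝ := fun z => h z - auxp n * (z ^ 2 * vv n z) with hph
  set ph1 : ℝ → ℝ := fun z => hd z - auxp n * (2 - del n) * (z * vv n z) with hph1
  have p1 : ∀ z > 0, HasDerivAt ph (ph1 z) z := fun z hz => (h1 z hz).sub (zv_d1 n hz)
  have p2 : ∀ z > 0, HasDerivAt ph1 _ z := fun z hz => (h2 z hz).sub (zv_d2 n hz)
  have n1 : ∀ y > 0, HasDerivAt (mu3 n μ) (μ1 y - -del n * (vv n y / y)) y :=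
    fun y hy => (m1 y hy).sub (vv_d1 n hy)
  have n2 : ∀ y > 0, HasDerivAt (fun y => μ1 y - -del n * (vv n y / y)) _ y :=
    fun y hy => (m2 y hy).sub (vv_d2 n hy)
  have hzp : 0 < X / A := by positivity
  have hyp : 0 < X / R := by positivity
  have q1 : ∀ z > 0, HasDerivAt (phi2 n h) (ph1 z) z := fun z hz =>
    (p1 z hz).congr_of_eventuallyEq (by
      filter_upwards [Ioi_mem_nhds hz] with w hw
      exact hφ2 w hw)
  -- time derivative
  have dt : deriv (fun σ : ℝ => phiFun n η μ h x σ) t =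
      -(1 / t) * (s⁻¹ * (gam n * η (X / A) + alph n * (X / A) * η1 (X / A)))
      + -(1 / t) * (e * (eps n * mu3 n μ (X / R) + 1 / 2 * (X / R) * (μ1 (X / R) - -del n * (vv n (X / R) / (X / R)))))
      + -(1 / t) * ((s ^ 3)⁻¹ * (3 * gam n * phi2 n h (X / A) + alph n * (X / A) * ph1 (X / A))) := by
    have a1 := dt_scale (F := η) (c := gam n) (a := alph n) (r := X) ht0 (e1 _ hzp)
    have a2 := dt_scale (F := mu3 n μ) (c := eps n) (a := 1 / 2) (r := X) ht0
      (by rw [← hsq]; exact n1 _ hyp)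
    have a3 := dt_scale (F := phi2 n h) (c := 3 * gam n) (a := alph n) (r := X) ht0 (q1 _ hzp)
    simp only [← Real.sqrt_eq_rpow] at a2
    rw [hsg] at a1
    rw [hsg3] at a3
    have a4 := ((a1.add a2).add a3).deriv
    exact a4
  -- space derivative
  have g1 : ∀ r > 0, HasDerivAt (fun r => s⁻¹ * η (r / A) + e * mu3 n μ (r / R)
      + (s ^ 3)⁻¹ * phi2 n h (r / A) - kap * r / R) _ r := fun r hr =>
    (((dx_scale s⁻¹ hA0 (e1 _ (div_pos hr hA0))).add
      (dx_scale e hR0 (n1 _ (div_pos hr hR0)))).add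
      (dx_scale (s ^ 3)⁻¹ hA0 (q1 _ (div_pos hr hA0)))).sub
      (((hasDerivAt_id r).const_mul kap).div_const R)
  have g2 : ∀ r > 0, HasDerivAt (fun r => s⁻¹ * (η1 (r / A) / A)
      + e * ((μ1 (r / R) - -del n * (vv n (r / R) / (r / R))) / R)
      + (s ^ 3)⁻¹ * (ph1 (r / A) / A) - kap * 1 / R) _ r := fun r hr =>
    (((dx_scale s⁻¹ hA0 ((e2 _ (div_pos hr hA0)).div_const A)).add
      (dx_scale e hR0 ((n2 _ (div_pos hr hR0)).div_const R))).add
      (dx_scale (s ^ 3)⁻¹ hA0 ((p2 _ (div_pos hr hA0)).div_const A))).sub_const _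
  have dx := dd_abs g1 g2 hx
  have dxf : (fun x' : ℝ => phiFun n η μ h x' t - kap * |x'| / R) = fun x' => s⁻¹ * η (|x'| / A) + e * mu3 n μ (|x'| / R)
        + (s ^ 3)⁻¹ * phi2 n h (|x'| / A) - kap * |x'| / R := by
    funext x'
    simp only [phiFun, hsg, hsg3]
    rfl
  rw [IFun, dt, dxf, dx, JJ]
  have hub : ubar x t = mu1 (X / R) := rfl
  have hphi : phiFun n η μ h x t = s⁻¹ * η (X / A) + e * (μ (X / R) - vv n (X / R)) +
      (s ^ 3)⁻¹ * ph (X / A) := by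
    rw [phiFun, hsg, hsg3, mu3_eq, hφ2 _ hzp]
  rw [hub, hphi, hst, hφ2 _ hzp, mu3_eq]
  simp only [hph1, hph]
  rw [hz]
  generalize hAn : (2 * mu1 (X / R) * _ + _) ^ n = An
  set y := X / R with hy
  generalize (2 * kap * (s * y) * η (s * y) + η (s * y) ^ 2) ^ n = E1
  generalize (2 * kap * (s * y) * η (s * y) + η (s * y) ^ 2) ^ (n - 1) = E2
  generalize (2 * mu1 y * μ y) ^ n = E3
  have hy0 : 0 < y := hyp
  clear_value s A R y e
  clear dt dx
  subst hR2
  rw [← hAs]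
  field_simp
  ring

end

section
open Filter Topology Set
set_option linter.unusedVariables false

structure Sc (n : ℕ) (s e : ℝ) : Prop where
  hs : 1 ≤ s
  he : 0 < e
  hev : ∀ y > 0, e * vv n y = s⁻¹ * vv n (s * y)
  hes : e ≤ (s ^ 2)⁻¹
  hen : s ^ (2 * n + 1) * e ^ n = e

noncomputable def bq (p m ρ Y : ℝ) : ℝ := (ρ - p / 12 + m) + (m * p - ρ / 12) * Y + m * ρ * Y ^ 2

/-- Expansion for `y ≤ 1`. -/
lemma J_mid {n : ℕ} (hn : 4 ≤ n) {μ : ℝ → ℝ} {s e y m ρ : ℝ} (S : Sc n s e) (hy : 0 < y)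
    (hm : mu1 y = kap * y * (1 - y ^ 2 / 12 + m * (y ^ 2) ^ 2))
    (hμ : μ y = vv n y * (1 + auxp n * y ^ 2 + ρ * (y ^ 2) ^ 2)) :
    e * ((2 * mu1 y * μ y) ^ n
      - (del n * (del n + 1) * (vv n y / y ^ 2) + (eps n - del n / 2) * vv n y))
      - s⁻¹ * (auxp n * ((2 - del n) * (1 - del n)) * vv n (s * y))
    = s⁻¹ * vv n (s * y) * (del n * (del n + 1)) * y ^ 2 *
      auxH n (y ^ 2) 1 (auxp n - 1 / 12) (bq (auxp n) m ρ (y ^ 2)) := by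
  have hHe := auxH_eq n (y ^ 2) 1 (auxp n - 1 / 12) (bq (auxp n) m ρ (y ^ 2))
  simp only [one_pow, mul_one] at hHe
  set Hh := auxH n (y ^ 2) 1 (auxp n - 1 / 12) (bq (auxp n) m ρ (y ^ 2))
  have hW : (1 - y ^ 2 / 12 + m * (y ^ 2) ^ 2) * (1 + auxp n * y ^ 2 + ρ * (y ^ 2) ^ 2)
      = 1 + (auxp n - 1 / 12) * y ^ 2 + bq (auxp n) m ρ (y ^ 2) * (y ^ 2) ^ 2 := by
    unfold bq; ring
  rw [hm, hμ, mu1_vpow hn hy, hW]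
  have hpow : (1 + (auxp n - 1 / 12) * y ^ 2 + bq (auxp n) m ρ (y ^ 2) * (y ^ 2) ^ 2) ^ n
      = 1 + n * ((auxp n - 1 / 12) * y ^ 2) + (y ^ 2) ^ 2 * Hh := by linarith
  rw [hpow]
  have hev := S.hev y hy
  have ca := auxp_eq hn
  have h1 : s⁻¹ * (auxp n * ((2 - del n) * (1 - del n)) * vv n (s * y))
      = auxp n * ((2 - del n) * (1 - del n)) * (e * vv n y) := by rw [hev]; ring
  rw [h1, ← hev]
  field_simp
  linear_combination (-24 * e * vv n y * y ^ 2) * ca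

/-- Uniform bound used for `z ≤ 1`. -/
lemma reg1_bound (n : ℕ) (M : ℝ) : ∃ C ≥ 0, ∀ z T a h m g : ℝ, |z| ≤ M → |T| ≤ M → |a| ≤ M →
    |h| ≤ M → |m| ≤ M → |g| ≤ M →
    |auxH n T (2 * kap * z * a + a ^ 2) ((2 * kap * z + 2 * a) * h + 2 * kap3 * z ^ 3 * a)
      (2 * kap * z * (g - z ^ 2 / 12 * h + m * z ^ 4 * a + T * (m * z ^ 4 * h - z ^ 2 / 12 * g)
        + T ^ 2 * m * z ^ 4 * g) + h ^ 2 + 2 * a * g + 2 * T * h * g + T ^ 2 * g ^ 2)| ≤ C := by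
  set S : Set ℝ := Icc (-M) M
  have hs' : IsCompact S := isCompact_Icc
  have hc := (auxH_contDiff n).continuous
  have hc2 : Continuous (fun p : ℝ × ℝ × ℝ × ℝ × ℝ × ℝ =>
    auxH n p.2.1 (2 * kap * p.1 * p.2.2.1 + p.2.2.1 ^ 2)
      ((2 * kap * p.1 + 2 * p.2.2.1) * p.2.2.2.1 + 2 * kap3 * p.1 ^ 3 * p.2.2.1)
      (2 * kap * p.1 * (p.2.2.2.2.2 - p.1 ^ 2 / 12 * p.2.2.2.1 + p.2.2.2.2.1 * p.1 ^ 4 * p.2.2.1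
        + p.2.1 * (p.2.2.2.2.1 * p.1 ^ 4 * p.2.2.2.1 - p.1 ^ 2 / 12 * p.2.2.2.2.2)
        + p.2.1 ^ 2 * p.2.2.2.2.1 * p.1 ^ 4 * p.2.2.2.2.2) + p.2.2.2.1 ^ 2
        + 2 * p.2.2.1 * p.2.2.2.2.2 + 2 * p.2.1 * p.2.2.2.1 * p.2.2.2.2.2
        + p.2.1 ^ 2 * p.2.2.2.2.2 ^ 2)) :=
    hc.comp (f := fun p : ℝ × ℝ × ℝ × ℝ × ℝ × ℝ =>
    (p.2.1, (2 * kap * p.1 * p.2.2.1 + p.2.2.1 ^ 2),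
      ((2 * kap * p.1 + 2 * p.2.2.1) * p.2.2.2.1 + 2 * kap3 * p.1 ^ 3 * p.2.2.1),
      (2 * kap * p.1 * (p.2.2.2.2.2 - p.1 ^ 2 / 12 * p.2.2.2.1 + p.2.2.2.2.1 * p.1 ^ 4 * p.2.2.1
        + p.2.1 * (p.2.2.2.2.1 * p.1 ^ 4 * p.2.2.2.1 - p.1 ^ 2 / 12 * p.2.2.2.2.2)
        + p.2.1 ^ 2 * p.2.2.2.2.1 * p.1 ^ 4 * p.2.2.2.2.2) + p.2.2.2.1 ^ 2
        + 2 * p.2.2.1 * p.2.2.2.2.2 + 2 * p.2.1 * p.2.2.2.1 * p.2.2.2.2.2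
        + p.2.1 ^ 2 * p.2.2.2.2.2 ^ 2))) (by fun_prop)
  obtain ⟨C, hC⟩ := (hs'.prod (hs'.prod (hs'.prod (hs'.prod (hs'.prod hs'))))).exists_bound_of_continuousOn
    hc2.continuousOn
  refine ⟨|C|, abs_nonneg _, ?_⟩
  intro z T a h m g h1 h2 h3 h4 h5 h6
  rw [abs_le] at h1 h2 h3 h4 h5 h6
  exact (hC (z, T, a, h, m, g) ⟨h1, h2, h3, h4, h5, h6⟩).trans (le_abs_self C)

lemma z2v_le {n : ℕ} (hn : 4 ≤ n) {z : ℝ} (hz : 0 < z) (hz1 : z ≤ 1) : z ^ 2 * vv n z ≤ lam n := by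
  have hl := lam_pos hn
  have : z ^ 2 * vv n z = lam n * z ^ (2 - del n) := by
    rw [sub_eq_add_neg, Real.rpow_add hz, vv]; norm_num; ring
  rw [this]
  have := Real.rpow_le_one hz.le hz1 (by linarith [del_le hn] : 0 ≤ 2 - del n)
  nlinarith

lemma mu_rho {n : ℕ} (hn : 4 ≤ n) {μ : ℝ → ℝ} {C y : ℝ} (hy : 0 < y)
    (h : |μ y - VV n y| ≤ C * (y ^ 4 * vv n y)) :
    ∃ ρ, |ρ| ≤ C ∧ μ y = vv n y * (1 + auxp n * y ^ 2 + ρ * (y ^ 2) ^ 2) := by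
  have hv := vv_pos hn hy
  refine ⟨(μ y - VV n y) / (y ^ 4 * vv n y), ?_, ?_⟩
  · rw [abs_div, abs_of_pos (by positivity : 0 < y ^ 4 * vv n y), div_le_iff₀ (by positivity)]
    exact h
  · unfold VV; field_simp; ring

lemma reg1_eq {n : ℕ} (hn : 4 ≤ n) {η μ h hd : ℝ → ℝ} {s e y m ρ : ℝ} (S : Sc n s e) (hy : 0 < y)
    (hm : mu1 y = kap * y * (1 - y ^ 2 / 12 + m * (y ^ 2) ^ 2))
    (hμ : μ y = vv n y * (1 + auxp n * y ^ 2 + ρ * (y ^ 2) ^ 2)) {z T a b g : ℝ}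
    (hz : z = s * y) (hT : T = (s ^ 2)⁻¹) (ha : a = η z) (hb : b = h z)
    (hg : g = ρ * z ^ 4 * vv n z) :
    JJ n η μ h hd s e y = (s ^ 3)⁻¹ * ((3 * gam n * (h z - auxp n * (z ^ 2 * vv n z))
        + alph n * (z * (hd z - auxp n * (2 - del n) * (z * vv n z))))
      + z ^ 2 * vv n z * (del n * (del n + 1)) *
        auxH n (y ^ 2) 1 (auxp n - 1 / 12) (bq (auxp n) m ρ (y ^ 2))
      - auxH n T (2 * kap * z * a + a ^ 2) ((2 * kap * z + 2 * a) * b + 2 * kap3 * z ^ 3 * a)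
      (2 * kap * z * (g - z ^ 2 / 12 * b + m * z ^ 4 * a + T * (m * z ^ 4 * b - z ^ 2 / 12 * g)
        + T ^ 2 * m * z ^ 4 * g) + b ^ 2 + 2 * a * g + 2 * T * b * g + T ^ 2 * g ^ 2)) := by
  have hs0 : 0 < s := by linarith [S.hs]
  have hmid := J_mid hn S hy hm hμ
  have hHe := auxH_eq n T (2 * kap * z * a + a ^ 2) ((2 * kap * z + 2 * a) * b + 2 * kap3 * z ^ 3 * a)
      (2 * kap * z * (g - z ^ 2 / 12 * b + m * z ^ 4 * a + T * (m * z ^ 4 * b - z ^ 2 / 12 * g)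
        + T ^ 2 * m * z ^ 4 * g) + b ^ 2 + 2 * a * g + 2 * T * b * g + T ^ 2 * g ^ 2)
  set H1 := auxH n (y ^ 2) 1 (auxp n - 1 / 12) (bq (auxp n) m ρ (y ^ 2))
  set H2 := auxH n T (2 * kap * z * a + a ^ 2) ((2 * kap * z + 2 * a) * b + 2 * kap3 * z ^ 3 * a)
      (2 * kap * z * (g - z ^ 2 / 12 * b + m * z ^ 4 * a + T * (m * z ^ 4 * b - z ^ 2 / 12 * g)
        + T ^ 2 * m * z ^ 4 * g) + b ^ 2 + 2 * a * g + 2 * T * b * g + T ^ 2 * g ^ 2)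
  have hev := S.hev y hy
  have hphi : s⁻¹ * η (s * y) + e * (μ y - vv n y)
        + (s ^ 3)⁻¹ * (h (s * y) - auxp n * ((s * y) ^ 2 * vv n (s * y)))
      = s⁻¹ * (a + T * b + T ^ 2 * g) := by
    rw [← hz] at hev ⊢
    have h1 : e * (μ y - vv n y) = (e * vv n y) * (auxp n * y ^ 2 + ρ * (y ^ 2) ^ 2) := by
      rw [hμ]; ring
    rw [h1, hev, ← ha, ← hb, hg, hT, hz]
    field_simp
    ring
  unfold JJ
  rw [hphi]
  have hbase : 2 * mu1 y * (s⁻¹ * (a + T * b + T ^ 2 * g)) + (s⁻¹ * (a + T * b + T ^ 2 * g)) ^ 2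
      = T * ((2 * kap * z * a + a ^ 2) + ((2 * kap * z + 2 * a) * b + 2 * kap3 * z ^ 3 * a) * T
        + (2 * kap * z * (g - z ^ 2 / 12 * b + m * z ^ 4 * a + T * (m * z ^ 4 * b - z ^ 2 / 12 * g)
        + T ^ 2 * m * z ^ 4 * g) + b ^ 2 + 2 * a * g + 2 * T * b * g + T ^ 2 * g ^ 2) * T ^ 2) := by
    have hyz : y = z / s := by rw [hz]; field_simp
    rw [hm, hyz, hT]
    unfold kap3
    field_simp
    ring
  rw [hbase, mul_pow T]
  have hsT : s ^ (2 * n + 1) * T ^ n = s := by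
    rw [hT, pow_succ, pow_mul, inv_pow]; field_simp
  have hsT2 : s ^ (2 * n + 1) * (T ^ n * ((2 * kap * z * a + a ^ 2) + ((2 * kap * z + 2 * a) * b + 2 * kap3 * z ^ 3 * a) * T
        + (2 * kap * z * (g - z ^ 2 / 12 * b + m * z ^ 4 * a + T * (m * z ^ 4 * b - z ^ 2 / 12 * g)
        + T ^ 2 * m * z ^ 4 * g) + b ^ 2 + 2 * a * g + 2 * T * b * g + T ^ 2 * g ^ 2) * T ^ 2) ^ n)
      = s * ((2 * kap * z * a + a ^ 2) ^ n + n * (2 * kap * z * a + a ^ 2) ^ (n - 1) *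
        (((2 * kap * z + 2 * a) * b + 2 * kap3 * z ^ 3 * a) * T) + T ^ 2 * H2) := by
    rw [← mul_assoc, hsT]
    congr 1
    linarith
  rw [hsT2, ← hz, ← ha, ← hb]
  rw [← hz] at hmid
  have hyz : s⁻¹ * vv n z * (del n * (del n + 1)) * y ^ 2 * H1
      = (s ^ 3)⁻¹ * (z ^ 2 * vv n z * (del n * (del n + 1)) * H1) := by
    rw [hz]; field_simp
  rw [hyz] at hmid
  have hA : s * T = s⁻¹ := by rw [hT]; field_simp
  have hB : s * T ^ 2 = (s ^ 3)⁻¹ := by rw [hT]; field_simp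
  clear_value H1 H2
  linear_combination hmid - n * (2 * kap * z * a + a ^ 2) ^ (n - 1) *
    ((2 * kap * z + 2 * a) * b + 2 * kap3 * z ^ 3 * a) * hA - H2 * hB

lemma bq_bound {p m ρ Y C : ℝ} (hm : |m| ≤ 1) (hρ : |ρ| ≤ C) (hY : |Y| ≤ 1) :
    |bq p m ρ Y| ≤ 4 + 4 * C + 4 * |p| := by
  have hp := abs_nonneg p
  have h0 := abs_nonneg ρ
  have h1 : |(m * p - ρ / 12) * Y| ≤ |p| + C := by
    rw [abs_mul]
    have a1 : |m * p - ρ / 12| ≤ |p| + C := by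
      refine (abs_sub _ _).trans ?_
      rw [abs_mul, abs_div, abs_of_pos (by norm_num : (0:ℝ) < 12)]
      nlinarith [abs_nonneg m]
    nlinarith [abs_nonneg Y, abs_nonneg (m * p - ρ / 12)]
  have h2 : |m * ρ * Y ^ 2| ≤ C := by
    rw [abs_mul, abs_mul, abs_pow]
    have a1 : |m| * |ρ| ≤ C := by nlinarith [abs_nonneg m]
    have a2 : |Y| ^ 2 ≤ 1 := by nlinarith [abs_nonneg Y]
    nlinarith [mul_nonneg (abs_nonneg m) h0, sq_nonneg |Y|]
  have h3 : |ρ - p / 12 + m| ≤ C + |p| + 1 := by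
    refine (abs_add_le _ _).trans ?_
    have := abs_sub ρ (p / 12)
    rw [abs_div, abs_of_pos (by norm_num : (0:ℝ) < 12)] at this
    linarith
  unfold bq
  have a1 := abs_add_le ((ρ - p / 12 + m) + (m * p - ρ / 12) * Y) (m * ρ * Y ^ 2)
  have a2 := abs_add_le (ρ - p / 12 + m) ((m * p - ρ / 12) * Y)
  linarith

set_option maxHeartbeats 1000000 in
lemma region1 {n : ℕ} (hn : 4 ≤ n) {η μ h hd : ℝ → ℝ} {Cμ : ℝ}
    (hη : ContinuousOn η (Ici 0)) (hh : ContinuousOn h (Ici 0)) (hhd : ContinuousOn hd (Ici 0))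
    (hμ : ∀ y, 0 < y → y ≤ 1 → |μ y - VV n y| ≤ Cμ * (y ^ 4 * vv n y)) :
    ∃ C > 0, ∀ s e y, Sc n s e → 0 < y → s * y ≤ 1 → |JJ n η μ h hd s e y| ≤ C * (s ^ 3)⁻¹ := by
  have hl := lam_pos hn
  have hdg := del_gt hn
  have hγ := gam_pos hn
  have hα := alph_pos hn
  obtain ⟨B1, hB1⟩ := (isCompact_Icc (a := (0:ℝ)) (b := 1)).exists_bound_of_continuousOn (hη.mono Icc_subset_Ici_self)
  obtain ⟨B2, hB2⟩ := (isCompact_Icc (a := (0:ℝ)) (b := 1)).exists_bound_of_continuousOn (hh.mono Icc_subset_Ici_self)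
  obtain ⟨B3, hB3⟩ := (isCompact_Icc (a := (0:ℝ)) (b := 1)).exists_bound_of_continuousOn (hhd.mono Icc_subset_Ici_self)
  obtain ⟨C1, hC1, hb1⟩ := auxH_bound n (4 + 4 * |Cμ| + 4 * |auxp n|)
  obtain ⟨C2, hC2, hb2⟩ := reg1_bound n (1 + |B1| + |B2| + |Cμ| * lam n)
  set p := auxp n with hp
  refine ⟨3 * gam n * (|B2| + |p| * lam n) + alph n * (|B3| + |p| * (2 + del n) * lam n)
      + lam n * (del n * (del n + 1)) * C1 + C2 + 1, by positivity, ?_⟩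
  intro s e y S hy hz1
  have hs0 : 0 < s := by linarith [S.hs]
  have hy1 : y ≤ 1 := by nlinarith [S.hs]
  obtain ⟨m, hm, hme⟩ := mu1_exp hy hy1
  obtain ⟨ρ, hρ, hρe⟩ := mu_rho hn hy (hμ y hy hy1)
  have hρ' : |ρ| ≤ |Cμ| := hρ.trans (le_abs_self _)
  rw [reg1_eq hn S hy hme hρe rfl rfl rfl rfl rfl]
  set z := s * y with hz
  have hz0 : 0 < z := by positivity
  have hzI : z ∈ Icc (0:ℝ) 1 := ⟨hz0.le, hz1⟩
  have hv := vv_pos hn hz0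
  have hz2 := z2v_le hn hz0 hz1
  have hz20 : 0 < z ^ 2 * vv n z := by positivity
  have aη : |η z| ≤ |B1| := (hB1 z hzI).trans (le_abs_self _)
  have ah : |h z| ≤ |B2| := (hB2 z hzI).trans (le_abs_self _)
  have ahd : |hd z| ≤ |B3| := (hB3 z hzI).trans (le_abs_self _)
  have n1 := abs_nonneg B1
  have n2 := abs_nonneg B2
  have n3 := abs_nonneg Cμ
  have n4 := abs_nonneg p
  have n5 : 0 ≤ |Cμ| * lam n := by positivity
  have hY : |y ^ 2| ≤ 1 := by rw [abs_of_nonneg (by positivity)]; nlinarith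
  have hH1 := hb1 (y ^ 2) 1 (p - 1 / 12) (bq p m ρ (y ^ 2)) (by linarith) (by rw [abs_one]; linarith)
    (by
      have := abs_sub p (1 / 12)
      rw [abs_of_pos (by norm_num : (0:ℝ) < 1 / 12)] at this
      linarith) (bq_bound hm hρ' hY)
  have hT : |(s ^ 2)⁻¹| ≤ 1 := by
    rw [abs_of_pos (by positivity)]
    apply inv_le_one_of_one_le₀
    nlinarith [S.hs]
  have hg : |ρ * z ^ 4 * vv n z| ≤ |Cμ| * lam n := by
    have : ρ * z ^ 4 * vv n z = ρ * (z ^ 2 * (z ^ 2 * vv n z)) := by ring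
    rw [this, abs_mul]
    apply mul_le_mul hρ' _ (abs_nonneg _) n3
    rw [abs_of_pos (by positivity)]
    have : z ^ 2 ≤ 1 := by nlinarith
    nlinarith
  have hH2 := hb2 z (s ^ 2)⁻¹ (η z) (h z) m (ρ * z ^ 4 * vv n z)
    (by rw [abs_of_pos hz0]; linarith) (by linarith) (by linarith) (by linarith) (by linarith) (by linarith)
  rw [abs_mul, abs_of_pos (by positivity : 0 < (s ^ 3)⁻¹), mul_comm]
  apply mul_le_mul_of_nonneg_right _ (by positivity)
  have t1 : |3 * gam n * (h z - p * (z ^ 2 * vv n z))| ≤ 3 * gam n * (|B2| + |p| * lam n) := by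
    rw [abs_mul, abs_of_pos (by positivity : 0 < 3 * gam n)]
    apply mul_le_mul_of_nonneg_left _ (by positivity)
    refine (abs_sub _ _).trans ?_
    rw [abs_mul, abs_of_pos hz20]
    have := mul_le_mul_of_nonneg_left hz2 n4
    linarith
  have t2 : |alph n * (z * (hd z - p * (2 - del n) * (z * vv n z)))|
      ≤ alph n * (|B3| + |p| * (2 + del n) * lam n) := by
    rw [abs_mul, abs_of_pos hα]
    apply mul_le_mul_of_nonneg_left _ hα.le
    have : z * (hd z - p * (2 - del n) * (z * vv n z)) = z * hd z - p * (2 - del n) * (z ^ 2 * vv n z) := by ring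
    rw [this]
    refine (abs_sub _ _).trans ?_
    rw [abs_mul z, abs_mul (p * (2 - del n)), abs_of_pos hz20, abs_of_pos hz0, abs_mul p]
    have a1 : |2 - del n| ≤ 2 + del n := by rw [abs_le]; constructor <;> linarith
    have a2 : |p| * |2 - del n| * (z ^ 2 * vv n z) ≤ |p| * (2 + del n) * lam n :=
      mul_le_mul (mul_le_mul_of_nonneg_left a1 n4) hz2 hz20.le (by positivity)
    have a3 : z * |hd z| ≤ |B3| := (mul_le_of_le_one_left (abs_nonneg _) hz1).trans ahd
    linarith
  have t3 : |z ^ 2 * vv n z * (del n * (del n + 1)) * auxH n (y ^ 2) 1 (p - 1 / 12) (bq p m ρ (y ^ 2))|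
      ≤ lam n * (del n * (del n + 1)) * C1 := by
    rw [abs_mul, abs_of_pos (by positivity : 0 < z ^ 2 * vv n z * (del n * (del n + 1)))]
    exact mul_le_mul (mul_le_mul_of_nonneg_right hz2 (by positivity)) hH1 (abs_nonneg _) (by positivity)
  refine (abs_sub _ _).trans ?_
  refine (add_le_add ((abs_add_le _ _).trans (add_le_add (abs_add_le _ _) le_rfl)) le_rfl).trans ?_
  linarith

end

section
open Filter Topology Set
set_option linter.unusedVariables false

noncomputable def b2f (θ q r m ρ Y : ℝ) : ℝ :=
  (ρ - q / 12 + m * θ) + (m * q - ρ / 12) * Y + m * ρ * Y ^ 2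
    + r * (2 * θ * ρ + q ^ 2 + 2 * q * ρ * Y + ρ ^ 2 * Y ^ 2)

lemma reg2_lip (n : ℕ) (M : ℝ) : ∃ C ≥ 0, ∀ Y m ρ θ q r θ' q' r' : ℝ, |Y| ≤ M → |m| ≤ M →
    |ρ| ≤ M → |θ| ≤ M → |q| ≤ M → |r| ≤ M → |θ'| ≤ M → |q'| ≤ M → |r'| ≤ M →
    |auxH n Y (θ + r * θ ^ 2) ((1 + 2 * r * θ) * q - 1 / 12 * θ) (b2f θ q r m ρ Y)
      - auxH n Y (θ' + r' * θ' ^ 2) ((1 + 2 * r' * θ') * q' - 1 / 12 * θ') (b2f θ' q' r' m ρ Y)|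
      ≤ C * (|θ - θ'| + |q - q'| + |r - r'|) := by
  set s : Set ℝ := Icc (-M) M
  have hs : Convex ℝ s := convex_Icc _ _
  have hs' : IsCompact s := isCompact_Icc
  have hc : ContDiff ℝ 1 (fun p : ℝ × ℝ × ℝ × ℝ × ℝ × ℝ =>
      auxH n p.1 (p.2.2.2.1 + p.2.2.2.2.2 * p.2.2.2.1 ^ 2)
        ((1 + 2 * p.2.2.2.2.2 * p.2.2.2.1) * p.2.2.2.2.1 - 1 / 12 * p.2.2.2.1)
        (b2f p.2.2.2.1 p.2.2.2.2.1 p.2.2.2.2.2 p.2.1 p.2.2.1 p.1)) :=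
    (auxH_contDiff n).comp (f := fun p : ℝ × ℝ × ℝ × ℝ × ℝ × ℝ =>
      (p.1, (p.2.2.2.1 + p.2.2.2.2.2 * p.2.2.2.1 ^ 2),
        ((1 + 2 * p.2.2.2.2.2 * p.2.2.2.1) * p.2.2.2.2.1 - 1 / 12 * p.2.2.2.1),
        (b2f p.2.2.2.1 p.2.2.2.2.1 p.2.2.2.2.2 p.2.1 p.2.2.1 p.1))) (by unfold b2f; fun_prop)
  obtain ⟨K, hK⟩ := hc.contDiffOn.exists_lipschitzOnWith
    (s := s ×ˢ s ×ˢ s ×ˢ s ×ˢ s ×ˢ s) one_ne_zero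
    (hs.prod (hs.prod (hs.prod (hs.prod (hs.prod hs)))))
    (hs'.prod (hs'.prod (hs'.prod (hs'.prod (hs'.prod hs')))))
  refine ⟨K, K.2, ?_⟩
  intro Y m ρ θ q r θ' q' r' h1 h2 h3 h4 h5 h6 h7 h8 h9
  rw [abs_le] at h1 h2 h3 h4 h5 h6 h7 h8 h9
  have := hK.dist_le_mul (Y, m, ρ, θ, q, r) ⟨h1, h2, h3, h4, h5, h6⟩
    (Y, m, ρ, θ', q', r') ⟨h1, h2, h3, h7, h8, h9⟩
  simp only [Prod.dist_eq, Real.dist_eq] at this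
  refine this.trans (mul_le_mul_of_nonneg_left ?_ K.2)
  have a1 := abs_nonneg (θ - θ')
  have a2 := abs_nonneg (q - q')
  have a3 := abs_nonneg (r - r')
  simp only [sub_self, abs_zero]
  refine max_le (by positivity) (max_le (by positivity) (max_le (by positivity)
    (max_le (by linarith) (max_le (by linarith) (by linarith)))))

set_option maxHeartbeats 1000000 in
lemma reg2_eq {n : ℕ} (hn : 4 ≤ n) {η μ h hd : ℝ → ℝ} {s e y m ρ : ℝ} (S : Sc n s e) (hy : 0 < y)
    (hm : mu1 y = kap * y * (1 - y ^ 2 / 12 + m * (y ^ 2) ^ 2))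
    (hμ : μ y = vv n y * (1 + auxp n * y ^ 2 + ρ * (y ^ 2) ^ 2)) {z θ q r : ℝ}
    (hz : z = s * y) (hθ : η z = vv n z * θ) (hq : h z = z ^ 2 * vv n z * q) (hr : r = rr n z) :
    JJ n η μ h hd s e y = (s ^ 3)⁻¹ * (3 * gam n * (h z - auxp n * (z ^ 2 * vv n z))
        + alph n * (z * (hd z - auxp n * (2 - del n) * (z * vv n z))))
      + s⁻¹ * vv n z * (del n * (del n + 1)) * y ^ 2 *
        (auxH n (y ^ 2) 1 (auxp n - 1 / 12) (bq (auxp n) m ρ (y ^ 2))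
          - auxH n (y ^ 2) (θ + r * θ ^ 2) ((1 + 2 * r * θ) * q - 1 / 12 * θ)
              (b2f θ q r m ρ (y ^ 2))) := by
  have hs0 : 0 < s := by linarith [S.hs]
  have hz0 : 0 < z := by rw [hz]; positivity
  have hv := vv_pos hn hz0
  have hk := kap_pos
  have hmid := J_mid hn S hy hm hμ
  have hHe := auxH_eq n (y ^ 2) (θ + r * θ ^ 2) ((1 + 2 * r * θ) * q - 1 / 12 * θ)
              (b2f θ q r m ρ (y ^ 2))
  set H1 := auxH n (y ^ 2) 1 (auxp n - 1 / 12) (bq (auxp n) m ρ (y ^ 2))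
  set H2 := auxH n (y ^ 2) (θ + r * θ ^ 2) ((1 + 2 * r * θ) * q - 1 / 12 * θ)
              (b2f θ q r m ρ (y ^ 2))
  have hev := S.hev y hy
  set Φ := θ + q * y ^ 2 + ρ * (y ^ 2) ^ 2 with hΦ
  have hphi : s⁻¹ * η (s * y) + e * (μ y - vv n y)
        + (s ^ 3)⁻¹ * (h (s * y) - auxp n * ((s * y) ^ 2 * vv n (s * y)))
      = s⁻¹ * (vv n z * Φ) := by
    have h1 : e * (μ y - vv n y) = (e * vv n y) * (auxp n * y ^ 2 + ρ * (y ^ 2) ^ 2) := by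
      rw [hμ]; ring
    rw [h1, hev, ← hz, hq, hθ, hΦ, hz]
    field_simp
    ring
  have hrv : 2 * kap * z * vv n z * r = vv n z ^ 2 := by
    rw [hr, rr]; field_simp
  have hbase : 2 * mu1 y * (s⁻¹ * (vv n z * Φ)) + (s⁻¹ * (vv n z * Φ)) ^ 2
      = (s ^ 2)⁻¹ * (2 * kap * z * vv n z) * ((1 - y ^ 2 / 12 + m * (y ^ 2) ^ 2) * Φ + r * Φ ^ 2) := by
    have e1 : (s⁻¹ * (vv n z * Φ)) ^ 2 = (s ^ 2)⁻¹ * (2 * kap * z * vv n z * r) * Φ ^ 2 := by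
      rw [hrv]; field_simp
    rw [e1, hm, hz]
    field_simp
  have hW : (1 - y ^ 2 / 12 + m * (y ^ 2) ^ 2) * Φ + r * Φ ^ 2
      = (θ + r * θ ^ 2) + ((1 + 2 * r * θ) * q - 1 / 12 * θ) * y ^ 2
        + b2f θ q r m ρ (y ^ 2) * (y ^ 2) ^ 2 := by
    rw [hΦ]; unfold b2f; ring
  rw [hW] at hbase
  have hvp := nrm_pow hn hz0 θ
  have hvp0 := nrm_pow hn hz0 1
  have hNN := nrm_N hn hz0 θ (h z)
  rw [← hr, ← hθ] at hvp hNN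
  have hK : (2 * kap * z * vv n z) ^ n = del n * (del n + 1) * (vv n z / z ^ 2) := by
    rw [vv, vpow hn hz0]
  unfold JJ
  rw [hphi, hbase, mul_pow _ (θ + r * θ ^ 2 + _ + _), mul_pow _ (2 * kap * z * vv n z), hK]
  rw [← hz, hvp, hNN] 
  rw [← hz] at hmid
  have hsT : s ^ (2 * n + 1) * (s ^ 2)⁻¹ ^ n = s := by
    rw [pow_succ, pow_mul, inv_pow]; field_simp
  generalize θ + r * θ ^ 2 = a at *
  have hX : (a + ((1 + 2 * r * θ) * q - 1 / 12 * θ) * y ^ 2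
        + b2f θ q r m ρ (y ^ 2) * (y ^ 2) ^ 2) ^ n = a ^ n + n * a ^ (n - 1) *
          (((1 + 2 * r * θ) * q - 1 / 12 * θ) * y ^ 2) + (y ^ 2) ^ 2 * H2 := by linarith
  have hNb : (n : ℝ) * (del n * (del n + 1)) / z ^ 2 * (a ^ (n - 1) *
      ((1 + 2 * r * θ) * h z - 1 / 12 * z ^ 2 * vv n z * θ))
      = n * (del n * (del n + 1)) * vv n z * a ^ (n - 1) * ((1 + 2 * r * θ) * q - 1 / 12 * θ) := by
    rw [hq]; field_simp
  have hF : s * (vv n z / z ^ 2) * y ^ 2 = s⁻¹ * vv n z := by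
    have : z ^ 2 = s ^ 2 * y ^ 2 := by rw [hz]; ring
    rw [this]; field_simp
  rw [hX, hNb]
  clear_value H1 H2
  generalize (s ^ 2)⁻¹ ^ n = P5 at *
  generalize s ^ (2 * n + 1) = P6 at *
  generalize ((1 + 2 * r * θ) * q - 1 / 12 * θ) = b1 at *
  linear_combination hmid - (del n * (del n + 1)) * (vv n z / z ^ 2) *
    (a ^ n + n * a ^ (n - 1) * (b1 * y ^ 2) + (y ^ 2) ^ 2 * H2) * hsT
    - (n * (del n * (del n + 1)) * a ^ (n - 1) * b1 + (del n * (del n + 1)) * y ^ 2 * H2) * hF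

/-- Hypotheses on the inner profiles for `z ≥ 1`. -/
structure Asy (n : ℕ) (η h hd : ℝ → ℝ) (M M' : ℝ) : Prop where
  hM : 1 ≤ M
  hM' : 0 < M'
  a1 : ∀ z ≥ 1, |η z / vv n z - 1| ≤ M * (1 / z ^ 2)
  a2 : ∀ z ≥ 1, |η z / vv n z| ≤ M
  a3 : ∀ z ≥ 1, rr n z ≤ M
  a4 : ∀ z ≥ 1, rr n z ≤ M * (1 / z ^ 2)
  a5 : ∀ z ≥ 1, |(η z / vv n z + rr n z * (η z / vv n z) ^ 2) - 1| ≤ M * (1 / z ^ 2)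
  a6 : ∀ z ≥ 1, |η z / vv n z + rr n z * (η z / vv n z) ^ 2| ≤ M
  b1 : ∀ z ≥ 1, |h z - auxp n * (z ^ 2 * vv n z)| ≤ M' * vv n z
  b2 : ∀ z ≥ 1, |z * (hd z - auxp n * (2 - del n) * (z * vv n z))| ≤ M' * vv n z

lemma L_bound {n : ℕ} (hn : 4 ≤ n) {η h hd : ℝ → ℝ} {M M' : ℝ} (A : Asy n η h hd M M') {z : ℝ}
    (hz : 1 ≤ z) :
    |3 * gam n * (h z - auxp n * (z ^ 2 * vv n z))
        + alph n * (z * (hd z - auxp n * (2 - del n) * (z * vv n z)))|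
      ≤ (3 * gam n + alph n) * M' * vv n z := by
  have hγ := gam_pos hn
  have hα := alph_pos hn
  refine (abs_add_le _ _).trans ?_
  rw [abs_mul, abs_mul (alph n), abs_of_pos (by positivity : 0 < 3 * gam n), abs_of_pos hα]
  have h1 := mul_le_mul_of_nonneg_left (A.b1 z hz) (by positivity : 0 ≤ 3 * gam n)
  have h2 := mul_le_mul_of_nonneg_left (A.b2 z hz) hα.le
  linarith

lemma q_bound {n : ℕ} (hn : 4 ≤ n) {η h hd : ℝ → ℝ} {M M' : ℝ} (A : Asy n η h hd M M') {z : ℝ}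
    (hz : 1 ≤ z) : ∃ q, h z = z ^ 2 * vv n z * q ∧ |q - auxp n| ≤ M' * (1 / z ^ 2) := by
  have hz0 : 0 < z := by linarith
  have hv := vv_pos hn hz0
  refine ⟨h z / (z ^ 2 * vv n z), by field_simp, ?_⟩
  have : h z / (z ^ 2 * vv n z) - auxp n = (h z - auxp n * (z ^ 2 * vv n z)) / (z ^ 2 * vv n z) := by
    field_simp
  rw [this, abs_div, abs_of_pos (by positivity : 0 < z ^ 2 * vv n z), div_le_iff₀ (by positivity)]
  refine (A.b1 z hz).trans (le_of_eq ?_)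
  field_simp

set_option maxHeartbeats 1000000 in
lemma region2 {n : ℕ} (hn : 4 ≤ n) {η μ h hd : ℝ → ℝ} {Cμ M M' : ℝ} (A : Asy n η h hd M M')
    (hμ : ∀ y, 0 < y → y ≤ 1 → |μ y - VV n y| ≤ Cμ * (y ^ 4 * vv n y)) :
    ∃ C > 0, ∀ s e y, Sc n s e → 0 < y → y ≤ 1 → 1 ≤ s * y →
      |JJ n η μ h hd s e y| ≤ C * ((s ^ 3)⁻¹ * vv n (s * y)) := by
  have hdg := del_gt hn
  have hγ := gam_pos hn
  have hα := alph_pos hn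
  have hM := A.hM
  have hM' := A.hM'
  obtain ⟨K, hK, hlip⟩ := reg2_lip n (1 + |Cμ| + M + |auxp n| + M')
  set p := auxp n with hp
  refine ⟨(3 * gam n + alph n) * M' + del n * (del n + 1) * (K * (2 * M + M')), by positivity, ?_⟩
  intro s e y S hy hy1 hz1
  have hs0 : 0 < s := by linarith [S.hs]
  obtain ⟨m, hm, hme⟩ := mu1_exp hy hy1
  obtain ⟨ρ, hρ, hρe⟩ := mu_rho hn hy (hμ y hy hy1)
  have hρ' : |ρ| ≤ |Cμ| := hρ.trans (le_abs_self _)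
  obtain ⟨z, hz⟩ : ∃ z, z = s * y := ⟨_, rfl⟩
  rw [← hz] at hz1 ⊢
  have hz0 : 0 < z := by linarith
  have hv := vv_pos hn hz0
  obtain ⟨q, hq, hqb⟩ := q_bound hn A hz1
  have hθ : η z = vv n z * (η z / vv n z) := by field_simp
  rw [reg2_eq hn S hy hme hρe hz hθ hq rfl]
  set θ := η z / vv n z with hθd
  have i1 := A.a1 z hz1
  have i2 := A.a2 z hz1
  have i3 := A.a3 z hz1
  have i4 := A.a4 z hz1
  rw [← hθd] at i1 i2
  have hr0 := rr_pos hn hz0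
  set r := rr n z
  have hw1 : 1 / z ^ 2 ≤ 1 := one_div_sq_le hz1
  have hw0 : 0 < 1 / z ^ 2 := by positivity
  have n3 := abs_nonneg Cμ
  have n4 := abs_nonneg p
  have hY : |y ^ 2| ≤ 1 := by rw [abs_of_nonneg (by positivity)]; nlinarith
  have hqq : |q| ≤ |p| + M' := by
    have : q = p + (q - p) := by ring
    rw [this]
    refine (abs_add_le _ _).trans ?_
    have : M' * (1 / z ^ 2) ≤ M' := mul_le_of_le_one_right hM'.le hw1
    linarith
  have hL := hlip (y ^ 2) m ρ 1 p 0 θ q r (by linarith) (by linarith) (by linarith)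
    (by rw [abs_one]; linarith) (by linarith) (by rw [abs_zero]; linarith) (by linarith) (by linarith)
    (by rw [abs_of_pos hr0]; linarith)
  have hb0 : b2f 1 p 0 m ρ (y ^ 2) = bq p m ρ (y ^ 2) := by unfold b2f bq; ring
  rw [hb0] at hL
  have e1 : (1 + 2 * 0 * 1 : ℝ) * p - 1 / 12 * 1 = p - 1 / 12 := by ring
  have hL2 : |auxH n (y ^ 2) 1 (p - 1 / 12) (bq p m ρ (y ^ 2))
          - auxH n (y ^ 2) (θ + r * θ ^ 2) ((1 + 2 * r * θ) * q - 1 / 12 * θ)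
              (b2f θ q r m ρ (y ^ 2))| ≤ K * (2 * M + M') * (1 / z ^ 2) := by
    have e0 : (1 + 0 * 1 ^ 2 : ℝ) = 1 := by ring
    rw [e0, e1] at hL
    refine hL.trans ?_
    rw [mul_assoc]
    apply mul_le_mul_of_nonneg_left _ hK
    rw [abs_sub_comm 1 θ, abs_sub_comm p q, zero_sub, abs_neg, abs_of_pos hr0]
    linarith
  refine (abs_add_le _ _).trans ?_
  have t1 := L_bound hn A hz1
  rw [← hp] at t1
  rw [abs_mul, abs_of_pos (by positivity : 0 < (s ^ 3)⁻¹), abs_mul,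
    abs_of_pos (by positivity : 0 < s⁻¹ * vv n z * (del n * (del n + 1)) * y ^ 2)]
  have t2 := mul_le_mul_of_nonneg_left t1 (by positivity : 0 ≤ (s ^ 3)⁻¹)
  have t3 := mul_le_mul_of_nonneg_left hL2
    (by positivity : 0 ≤ s⁻¹ * vv n z * (del n * (del n + 1)) * y ^ 2)
  have t4 : s⁻¹ * vv n z * (del n * (del n + 1)) * y ^ 2 * (K * (2 * M + M') * (1 / z ^ 2))
      = del n * (del n + 1) * (K * (2 * M + M')) * ((s ^ 3)⁻¹ * vv n z) := by
    have : z ^ 2 = s ^ 2 * y ^ 2 := by rw [hz]; ring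
    rw [this]; field_simp
  rw [t4] at t3
  linarith

end

section
open Filter Topology Set
set_option linter.unusedVariables false

lemma pow_diff_le (n : ℕ) (hn : 1 ≤ n) {a b B k x : ℝ} (ha : |a| ≤ B * k) (hb : |b| ≤ B * k)
    (hx : |a - b| ≤ x * k) (hx0 : 0 ≤ x) (hk : 0 ≤ k) (hB : 0 ≤ B) :
    |a ^ n - b ^ n| ≤ n * B ^ (n - 1) * x * k ^ n := by
  refine (abs_pow_sub_pow_le a b n).trans ?_
  have h1 : max |a| |b| ^ (n - 1) ≤ (B * k) ^ (n - 1) :=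
    pow_le_pow_left₀ (le_max_of_le_left (abs_nonneg _)) (max_le ha hb) _
  have h2 : |a - b| * n * max |a| |b| ^ (n - 1) ≤ (x * k) * n * (B * k) ^ (n - 1) :=
    mul_le_mul (mul_le_mul_of_nonneg_right hx (by positivity)) h1 (by positivity) (by positivity)
  refine h2.trans (le_of_eq ?_)
  obtain ⟨m, rfl⟩ : ∃ m, n = m + 1 := ⟨n - 1, by omega⟩
  rw [Nat.add_sub_cancel, mul_pow, pow_succ k]
  ring

/-- The outer nonlinear difference. -/
lemma outer_diff {n : ℕ} (hn : 4 ≤ n) {Cm Cp : ℝ} (hCm : 0 ≤ Cm) (hCp : 0 ≤ Cp) :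
    ∃ C > 0, ∀ e T k m1 u ψ : ℝ, 0 < e → e ≤ T → T ≤ 1 → 0 ≤ k → k ≤ 1 → 0 ≤ m1 → m1 ≤ 1 →
      |u| ≤ Cm * k → |ψ| ≤ Cp * T * k →
      |e * ((2 * m1 * u) ^ n - (2 * m1 * (u + ψ) + e * (u + ψ) ^ 2) ^ n)| ≤ C * T ^ 2 * k ^ n := by
  set X := 2 * Cp + (Cm + Cp) ^ 2 with hX
  set B := 2 * Cm + X with hB
  have hX0 : 0 ≤ X := by positivity
  refine ⟨n * B ^ (n - 1) * X + 1, by positivity, ?_⟩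
  intro e T k m1 u ψ he heT hT hk hk1 hm hm1 hu hψ
  have hT0 : 0 < T := by linarith
  have hψ2 : |ψ| ≤ Cp * k := by
    refine hψ.trans ?_
    apply mul_le_mul_of_nonneg_right _ hk
    exact mul_le_of_le_one_right hCp hT
  have hup : |u + ψ| ≤ (Cm + Cp) * k := (abs_add_le _ _).trans (by linarith)
  have hsq : (u + ψ) ^ 2 ≤ (Cm + Cp) ^ 2 * k := by
    rw [← sq_abs]
    have := pow_le_pow_left₀ (abs_nonneg _) hup 2
    rw [mul_pow] at this
    refine this.trans ?_
    apply mul_le_mul_of_nonneg_left _ (by positivity)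
    nlinarith
  have hd : |(2 * m1 * u) - (2 * m1 * (u + ψ) + e * (u + ψ) ^ 2)| ≤ (X * T) * k := by
    have : (2 * m1 * u) - (2 * m1 * (u + ψ) + e * (u + ψ) ^ 2) = -(2 * (m1 * ψ) + e * (u + ψ) ^ 2) := by ring
    rw [this, abs_neg]
    refine (abs_add_le _ _).trans ?_
    rw [abs_mul, abs_mul m1, abs_of_nonneg hm, abs_of_nonneg (by positivity : 0 ≤ e * (u + ψ) ^ 2), abs_two]
    have i1 : m1 * |ψ| ≤ Cp * T * k := (mul_le_of_le_one_left (abs_nonneg _) hm1).trans hψ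
    have i2 : e * (u + ψ) ^ 2 ≤ T * ((Cm + Cp) ^ 2 * k) :=
      mul_le_mul heT hsq (sq_nonneg _) hT0.le
    rw [hX]; linarith
  have hd1 : (X * T) * k ≤ X * k := mul_le_mul_of_nonneg_right (mul_le_of_le_one_right hX0 hT) hk
  have hQ0 : |2 * m1 * u| ≤ 2 * Cm * k := by
    rw [abs_mul, abs_of_nonneg (by positivity : 0 ≤ 2 * m1)]
    have : m1 * |u| ≤ Cm * k := (mul_le_of_le_one_left (abs_nonneg _) hm1).trans hu
    linarith
  have hQ : |2 * m1 * (u + ψ) + e * (u + ψ) ^ 2| ≤ B * k := by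
    have : 2 * m1 * (u + ψ) + e * (u + ψ) ^ 2 = 2 * m1 * u
      - (2 * m1 * u - (2 * m1 * (u + ψ) + e * (u + ψ) ^ 2)) := by ring
    rw [this]
    refine (abs_sub _ _).trans ?_
    rw [hB]; linarith
  have hQ0' : |2 * m1 * u| ≤ B * k := by
    refine hQ0.trans ?_
    rw [hB]; nlinarith
  have hmain := pow_diff_le n (by omega) hQ0' hQ hd (by positivity) hk (by positivity)
  rw [abs_mul, abs_of_pos he]
  have h3 := mul_le_mul heT hmain (abs_nonneg _) hT0.le
  refine h3.trans ?_
  have hkn : 0 ≤ T ^ 2 * k ^ n := by positivity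
  have : T * (n * B ^ (n - 1) * (X * T) * k ^ n) = n * B ^ (n - 1) * X * (T ^ 2 * k ^ n) := by ring
  rw [this, mul_assoc]
  nlinarith

set_option maxHeartbeats 1000000 in
lemma reg3_eq {n : ℕ} (hn : 4 ≤ n) {η μ h hd : ℝ → ℝ} {s e y : ℝ} (S : Sc n s e) (hy : 0 < y)
    {z θ q r : ℝ}
    (hz : z = s * y) (hθ : η z = vv n z * θ) (hq : h z = z ^ 2 * vv n z * q) (hr : r = rr n z) :
    JJ n η μ h hd s e y = (s ^ 3)⁻¹ * (3 * gam n * (h z - auxp n * (z ^ 2 * vv n z))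
        + alph n * (z * (hd z - auxp n * (2 - del n) * (z * vv n z))))
      + (s * (vv n z / z ^ 2)) * (del n * (del n + 1)) * ((θ + r * θ ^ 2) ^ n - 1)
      + (s⁻¹ * vv n z) * (n * (del n * (del n + 1))) *
        (((θ + r * θ ^ 2) ^ (n - 1) * ((1 + 2 * r * θ) * auxp n - 1 / 12 * θ) - (auxp n - 1 / 12))
          + (θ + r * θ ^ 2) ^ (n - 1) * (1 + 2 * r * θ) * (q - auxp n))
      + e * ((2 * mu1 y * μ y) ^ n - (2 * mu1 y * (μ y + vv n y * ((θ - 1) + y ^ 2 * (q - auxp n)))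
          + e * (μ y + vv n y * ((θ - 1) + y ^ 2 * (q - auxp n))) ^ 2) ^ n) := by
  have hs0 : 0 < s := by linarith [S.hs]
  have hz0 : 0 < z := by rw [hz]; positivity
  have hv := vv_pos hn hz0
  have hev := S.hev y hy
  have ca := auxp_eq hn
  set ψ := vv n y * ((θ - 1) + y ^ 2 * (q - auxp n)) with hψ
  have hzy : z ^ 2 = s ^ 2 * y ^ 2 := by rw [hz]; ring
  have hphi : s⁻¹ * η (s * y) + e * (μ y - vv n y)
        + (s ^ 3)⁻¹ * (h (s * y) - auxp n * ((s * y) ^ 2 * vv n (s * y)))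
      = e * (μ y + ψ) := by
    have e2 : (s ^ 3)⁻¹ * (z ^ 2 * vv n z * q - auxp n * (z ^ 2 * vv n z))
        = (s⁻¹ * vv n z) * (y ^ 2 * (q - auxp n)) := by
      rw [hzy]; field_simp
    rw [← hz, hq, hθ, e2, hψ]
    rw [← hz] at hev
    linear_combination (-θ - y ^ 2 * (q - auxp n)) * hev
  have hbase : 2 * mu1 y * (e * (μ y + ψ)) + (e * (μ y + ψ)) ^ 2
      = e * (2 * mu1 y * (μ y + ψ) + e * (μ y + ψ) ^ 2) := by ring
  have hvp := nrm_pow hn hz0 θ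
  have hNN := nrm_N hn hz0 θ (h z)
  rw [← hr, ← hθ] at hvp hNN
  unfold JJ
  rw [hphi, hbase, mul_pow e, ← mul_assoc (s ^ (2 * n + 1)), S.hen]
  rw [← hz, hvp, hNN]
  rw [← hz] at hev
  have hNb : (n : ℝ) * (del n * (del n + 1)) / z ^ 2 * ((θ + r * θ ^ 2) ^ (n - 1) *
      ((1 + 2 * r * θ) * h z - 1 / 12 * z ^ 2 * vv n z * θ))
      = n * (del n * (del n + 1)) * vv n z * (θ + r * θ ^ 2) ^ (n - 1) *
        ((1 + 2 * r * θ) * q - 1 / 12 * θ) := by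
    rw [hq]; field_simp
  have hF : e * (vv n y / y ^ 2) = s * (vv n z / z ^ 2) := by
    have : e * (vv n y / y ^ 2) = (e * vv n y) / y ^ 2 := by ring
    rw [this, hev, hzy]; field_simp
  rw [hNb]
  generalize (θ + r * θ ^ 2) = a
  generalize (2 * mu1 y * (μ y + ψ) + e * (μ y + ψ) ^ 2) ^ n = P1
  generalize (2 * mu1 y * μ y) ^ n = P2
  linear_combination (-del n * (del n + 1)) * hF - (eps n - del n / 2) * hev - s⁻¹ * vv n z * ca

lemma kk_facts {n : ℕ} (hn : 4 ≤ n) {y : ℝ} (hy : 1 ≤ y) :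
    0 < y ^ (-(2 * eps n)) ∧ y ^ (-(2 * eps n)) ≤ 1 ∧ vv n y ≤ lam n * y ^ (-(2 * eps n)) ∧
    (y ^ (-(2 * eps n))) ^ n ≤ (y ^ 2)⁻¹ := by
  have hy0 : 0 < y := by linarith
  have he := eps_pos hn
  have hl := lam_pos hn
  refine ⟨by positivity, Real.rpow_le_one_of_one_le_of_nonpos hy (by linarith), ?_, ?_⟩
  · unfold vv
    apply mul_le_mul_of_nonneg_left _ hl.le
    apply Real.rpow_le_rpow_of_exponent_le hy
    linarith [del_eq hn]
  · rw [← Real.rpow_natCast, ← Real.rpow_mul hy0.le, ← Real.rpow_two, ← Real.rpow_neg hy0.le]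
    apply Real.rpow_le_rpow_of_exponent_le hy
    nlinarith [eps_n hn]

set_option maxHeartbeats 1000000 in
lemma region3 {n : ℕ} (hn : 4 ≤ n) {η μ h hd : ℝ → ℝ} {Cm M M' : ℝ} (A : Asy n η h hd M M')
    (hCm : 0 < Cm) (hμ : ∀ y ≥ 1, |μ y| ≤ Cm * y ^ (-(2 * eps n))) :
    ∃ C > 0, ∀ s e y, Sc n s e → 1 ≤ y →
      |JJ n η μ h hd s e y| ≤ C * ((s ^ 3)⁻¹ * vv n (s * y) + (s ^ 4)⁻¹ * (y ^ 2)⁻¹) := by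
  have hdg := del_gt hn
  have hγ := gam_pos hn
  have hα := alph_pos hn
  have hl := lam_pos hn
  have hM := A.hM
  have hM' := A.hM'
  have hn0 : (0:ℝ) < n := by have : 0 < n := by omega
                             exact_mod_cast this
  obtain ⟨D, hD, hDb⟩ := coef_bounds n (auxp n) M hM
  obtain ⟨C1, hC1, hout⟩ := outer_diff hn hCm.le (by positivity : 0 ≤ lam n * (M + M'))
  set p := auxp n with hp
  set dd := del n * (del n + 1) with hdd
  have hdd0 : 0 < dd := by positivity
  refine ⟨(3 * gam n + alph n) * M' + dd * D + n * dd * (D + (1 + D) * M') + C1, by positivity, ?_⟩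
  intro s e y S hy
  have hs := S.hs
  have hs0 : 0 < s := by linarith
  have hy0 : 0 < y := by linarith
  obtain ⟨z, hz⟩ : ∃ z, z = s * y := ⟨_, rfl⟩
  rw [← hz]
  have hsz : s ≤ z := by rw [hz]; nlinarith
  have hz1 : 1 ≤ z := by linarith
  have hz0 : 0 < z := by linarith
  have hv := vv_pos hn hz0
  obtain ⟨q, hq, hqb⟩ := q_bound hn A hz1
  have hθ : η z = vv n z * (η z / vv n z) := by field_simp
  rw [reg3_eq hn S hy0 hz hθ hq rfl]
  set θ := η z / vv n z with hθd
  have i1 := A.a1 z hz1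
  have i2 := A.a2 z hz1
  have i3 := A.a3 z hz1
  have i4 := A.a4 z hz1
  have i5 := A.a5 z hz1
  have i6 := A.a6 z hz1
  rw [← hθd] at i1 i2 i5 i6
  have hr0 := rr_pos hn hz0
  set r := rr n z
  have hw1 : 1 / z ^ 2 ≤ 1 := one_div_sq_le hz1
  have hw0 : 0 < 1 / z ^ 2 := by positivity
  obtain ⟨d1, d2, d3⟩ := hDb θ r (1 / z ^ 2) hw0.le hw1 i1 i2 hr0.le i3 i4 i5 i6
  rw [← hp] at hqb
  rw [← hp, ← hdd]
  set T := (s ^ 2)⁻¹ with hT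
  have hT0 : 0 < T := by positivity
  have hT1 : T ≤ 1 := inv_le_one_of_one_le₀ (by nlinarith)
  have hwT : 1 / z ^ 2 ≤ T := by
    rw [hT, one_div]
    apply inv_anti₀ (by positivity)
    exact pow_le_pow_left₀ hs0.le hsz 2
  obtain ⟨k0, k1, k2, k3⟩ := kk_facts hn hy
  have hvy := vv_pos hn hy0
  have hywT : y ^ 2 * (1 / z ^ 2) = T := by rw [hT, hz]; field_simp
  have hψ : |vv n y * ((θ - 1) + y ^ 2 * (q - p))| ≤ lam n * (M + M') * T * y ^ (-(2 * eps n)) := by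
    have e1 : |(θ - 1) + y ^ 2 * (q - p)| ≤ (M + M') * T := by
      refine (abs_add_le _ _).trans ?_
      rw [abs_mul, abs_of_pos (by positivity : 0 < y ^ 2)]
      have a1 := mul_le_mul_of_nonneg_left hqb (by positivity : 0 ≤ y ^ 2)
      have a2 : y ^ 2 * (M' * (1 / z ^ 2)) = M' * T := by rw [← hywT]; ring
      have a3 := mul_le_mul_of_nonneg_left hwT (by positivity : 0 ≤ M)
      linarith
    rw [abs_mul, abs_of_pos hvy]
    refine (mul_le_mul k2 e1 (abs_nonneg _) (by positivity)).trans (le_of_eq ?_)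
    ring
  have t4 := hout e T (y ^ (-(2 * eps n))) (mu1 y) (μ y) _ S.he S.hes hT1 k0.le k1 (mu1_nonneg hy0.le)
    (mu1_le hy0.le) (hμ y hy) hψ
  have t4' : C1 * T ^ 2 * (y ^ (-(2 * eps n))) ^ n ≤ C1 * ((s ^ 4)⁻¹ * (y ^ 2)⁻¹) := by
    have : T ^ 2 = (s ^ 4)⁻¹ := by rw [hT]; field_simp
    rw [this, mul_assoc]
    exact mul_le_mul_of_nonneg_left (mul_le_mul_of_nonneg_left k3 (by positivity)) hC1.le
  have t1 := mul_le_mul_of_nonneg_left (L_bound hn A hz1) (by positivity : 0 ≤ (s ^ 3)⁻¹)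
  rw [← hp] at t1
  have g1 : s * (vv n z / z ^ 2) ≤ s⁻¹ * vv n z := by
    have a1 : s * (vv n z / z ^ 2) = s * vv n z * (1 / z ^ 2) := by ring
    have a2 : s⁻¹ * vv n z = s * vv n z * T := by rw [hT]; field_simp
    rw [a1, a2]
    exact mul_le_mul_of_nonneg_left hwT (by positivity)
  have g2 : s⁻¹ * vv n z * T = (s ^ 3)⁻¹ * vv n z := by rw [hT]; field_simp
  have t2 : |(s * (vv n z / z ^ 2)) * dd * ((θ + r * θ ^ 2) ^ n - 1)| ≤ dd * D * ((s ^ 3)⁻¹ * vv n z) := by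
    rw [abs_mul, abs_of_pos (by positivity : 0 < (s * (vv n z / z ^ 2)) * dd), ← g2]
    have a1 : |(θ + r * θ ^ 2) ^ n - 1| ≤ D * T := d3.trans (mul_le_mul_of_nonneg_left hwT hD.le)
    refine (mul_le_mul (mul_le_mul_of_nonneg_right g1 hdd0.le) a1 (abs_nonneg _) (by positivity)).trans
      (le_of_eq ?_)
    ring
  have t3 : |(s⁻¹ * vv n z) * (n * dd) *
        (((θ + r * θ ^ 2) ^ (n - 1) * ((1 + 2 * r * θ) * p - 1 / 12 * θ) - (p - 1 / 12))
          + (θ + r * θ ^ 2) ^ (n - 1) * (1 + 2 * r * θ) * (q - p))|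
      ≤ n * dd * (D + (1 + D) * M') * ((s ^ 3)⁻¹ * vv n z) := by
    rw [abs_mul, abs_of_pos (by positivity : 0 < (s⁻¹ * vv n z) * (n * dd)), ← g2]
    have a1 : |(θ + r * θ ^ 2) ^ (n - 1) * (1 + 2 * r * θ)| ≤ 1 + D := by
      have : (θ + r * θ ^ 2) ^ (n - 1) * (1 + 2 * r * θ)
        = 1 + ((θ + r * θ ^ 2) ^ (n - 1) * (1 + 2 * r * θ) - 1) := by ring
      rw [this]
      refine (abs_add_le _ _).trans ?_
      rw [abs_one]
      have := mul_le_of_le_one_right hD.le hw1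
      linarith
    have a2 : |((θ + r * θ ^ 2) ^ (n - 1) * ((1 + 2 * r * θ) * p - 1 / 12 * θ) - (p - 1 / 12))
          + (θ + r * θ ^ 2) ^ (n - 1) * (1 + 2 * r * θ) * (q - p)| ≤ (D + (1 + D) * M') * T := by
      refine (abs_add_le _ _).trans ?_
      rw [abs_mul _ (q - p)]
      have b1 := mul_le_mul a1 (hqb.trans (mul_le_mul_of_nonneg_left hwT hM'.le)) (abs_nonneg _)
        (by positivity)
      have b2 := d2.trans (mul_le_mul_of_nonneg_left hwT hD.le)
      linarith
    refine (mul_le_mul_of_nonneg_left a2 (by positivity)).trans (le_of_eq ?_)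
    ring
  have t1' : |(s ^ 3)⁻¹ * (3 * gam n * (h z - p * (z ^ 2 * vv n z))
        + alph n * (z * (hd z - p * (2 - del n) * (z * vv n z))))|
      ≤ (3 * gam n + alph n) * M' * ((s ^ 3)⁻¹ * vv n z) := by
    rw [abs_mul, abs_of_pos (by positivity : 0 < (s ^ 3)⁻¹)]
    linarith
  refine (abs_add_le _ _).trans ?_
  refine (add_le_add ((abs_add_le _ _).trans (add_le_add (abs_add_le _ _) le_rfl)) le_rfl).trans ?_
  have p1 : 0 < (s ^ 3)⁻¹ * vv n z := by positivity
  have p2 : 0 < (s ^ 4)⁻¹ * (y ^ 2)⁻¹ := by positivity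
  have p3 : 0 ≤ ((3 * gam n + alph n) * M' + dd * D + n * dd * (D + (1 + D) * M')) * ((s ^ 4)⁻¹ * (y ^ 2)⁻¹) := by
    positivity
  have p4 : 0 ≤ C1 * ((s ^ 3)⁻¹ * vv n z) := by positivity
  linarith

end

section
open Filter Topology Set
set_option linter.unusedVariables false

lemma one_le_ker {d z : ℝ} (hd : 0 < d) (hz : 0 < z) (hz1 : z ≤ 1) :
    1 ≤ 2 ^ d * (1 + z) ^ (-d) := by
  rw [Real.rpow_neg (by linarith), ← div_eq_mul_inv, one_le_div (by positivity)]
  exact Real.rpow_le_rpow (by linarith) (by linarith) hd.le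

lemma rpow_le_ker {d z : ℝ} (hd : 0 < d) (hz : 1 ≤ z) :
    z ^ (-d) ≤ 2 ^ d * (1 + z) ^ (-d) := by
  have hz0 : 0 < z := by linarith
  rw [Real.rpow_neg (by linarith), Real.rpow_neg (by linarith), ← div_eq_mul_inv, inv_eq_one_div,
    div_le_div_iff₀ (by positivity) (by positivity), one_mul, ← Real.mul_rpow (by norm_num) hz0.le]
  exact Real.rpow_le_rpow (by linarith) (by linarith) hd.le

lemma JJ_bound {n : ℕ} (hn : 4 ≤ n) {η μ h hd : ℝ → ℝ} {C1 C2 C3 : ℝ} (h1 : 0 < C1) (h2 : 0 < C2)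
    (h3 : 0 < C3)
    (r1 : ∀ s e y, Sc n s e → 0 < y → s * y ≤ 1 → |JJ n η μ h hd s e y| ≤ C1 * (s ^ 3)⁻¹)
    (r2 : ∀ s e y, Sc n s e → 0 < y → y ≤ 1 → 1 ≤ s * y →
      |JJ n η μ h hd s e y| ≤ C2 * ((s ^ 3)⁻¹ * vv n (s * y)))
    (r3 : ∀ s e y, Sc n s e → 1 ≤ y →
      |JJ n η μ h hd s e y| ≤ C3 * ((s ^ 3)⁻¹ * vv n (s * y) + (s ^ 4)⁻¹ * (y ^ 2)⁻¹)) :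
    ∃ C > 0, ∀ s e y, Sc n s e → 0 < y → |JJ n η μ h hd s e y|
      ≤ C * ((s ^ 3)⁻¹ * (1 + s * y) ^ (-del n) + (s ^ 4)⁻¹ * (1 + y) ^ (-(2:ℝ))) := by
  have hl := lam_pos hn
  have hdg := del_gt hn
  have hd0 : 0 < del n := by linarith
  set K := (2:ℝ) ^ del n with hK
  have hK0 : 0 < K := by positivity
  refine ⟨C1 * K + C2 * (lam n * K) + C3 * (lam n * K) + C3 * 4, by positivity, ?_⟩
  intro s e y S hy
  have hs := S.hs
  have hs0 : 0 < s := by linarith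
  have hz0 : 0 < s * y := by positivity
  have q1 : 0 < (s ^ 3)⁻¹ := by positivity
  have q2 : 0 < (s ^ 4)⁻¹ := by positivity
  have k1 : 0 < (1 + s * y) ^ (-del n) := by positivity
  have k2 : 0 < (1 + y) ^ (-(2:ℝ)) := by positivity
  have P1 : 0 < (s ^ 3)⁻¹ * (1 + s * y) ^ (-del n) := by positivity
  have P2 : 0 < (s ^ 4)⁻¹ * (1 + y) ^ (-(2:ℝ)) := by positivity
  have e1 : 0 < C1 * K := by positivity
  have e2 : 0 < C2 * (lam n * K) := by positivity
  have e3 : 0 < C3 * (lam n * K) := by positivity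
  generalize hA : (s ^ 3)⁻¹ * (1 + s * y) ^ (-del n) = A1 at *
  generalize hB : (s ^ 4)⁻¹ * (1 + y) ^ (-(2:ℝ)) = A2 at *
  have f1 := mul_pos e1 P1
  have f2 := mul_pos e2 P1
  have f3 := mul_pos e3 P1
  have f4 := mul_pos e1 P2
  have f5 := mul_pos e2 P2
  have f6 := mul_pos e3 P2
  have f7 := mul_pos h3 P1
  have f8 := mul_pos h3 P2
  have hvz : 1 ≤ s * y → (s ^ 3)⁻¹ * vv n (s * y) ≤ lam n * K * A1 := by
    intro hz
    have := rpow_le_ker hd0 hz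
    unfold vv
    rw [← hA]
    calc (s ^ 3)⁻¹ * (lam n * (s * y) ^ (-del n))
        ≤ (s ^ 3)⁻¹ * (lam n * (2 ^ del n * (1 + s * y) ^ (-del n))) := by gcongr
      _ = _ := by rw [← hK]; ring
  rcases le_total (s * y) 1 with hz | hz
  · refine (r1 s e y S hy hz).trans ?_
    have := one_le_ker hd0 hz0 hz
    have i1 : (s ^ 3)⁻¹ ≤ K * A1 := by
      rw [← hA]
      have := mul_le_mul_of_nonneg_left this q1.le
      rw [← hK] at this
      linarith
    have := mul_le_mul_of_nonneg_left i1 h1.le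
    linarith
  · have hv := hvz hz
    rcases le_total y 1 with hy1 | hy1
    · refine (r2 s e y S hy hy1 hz).trans ?_
      have := mul_le_mul_of_nonneg_left hv h2.le
      linarith
    · refine (r3 s e y S hy1).trans ?_
      have i2 : (s ^ 4)⁻¹ * (y ^ 2)⁻¹ ≤ 4 * A2 := by
        have := rpow_le_ker (d := 2) (by norm_num) hy1
        rw [Real.rpow_neg hy.le, Real.rpow_two] at this
        have := mul_le_mul_of_nonneg_left this q2.le
        rw [← hB]
        norm_num at this ⊢
        linarith
      have a := mul_le_mul_of_nonneg_left hv h3.le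
      have b := mul_le_mul_of_nonneg_left i2 h3.le
      linarith

lemma Sc_of {n : ℕ} (hn : 4 ≤ n) {t : ℝ} (ht : 1 ≤ t) : Sc n (t ^ gam n) (t ^ (-eps n)) := by
  have ht0 : 0 < t := by linarith
  have hγ := gam_pos hn
  have hd := del_gt hn
  have he := eps_eq hn
  have hgn := gam_n hn
  have hen := eps_n hn
  refine ⟨Real.one_le_rpow ht hγ.le, by positivity, ?_, ?_, ?_⟩
  · intro y hy
    unfold vv
    rw [Real.mul_rpow (by positivity) hy.le, ← Real.rpow_neg ht0.le, ← Real.rpow_mul ht0.le]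
    have : t ^ (-eps n) = t ^ (-gam n) * t ^ (gam n * -del n) := by
      rw [← Real.rpow_add ht0]; congr 1; rw [he]; ring
    rw [this]; ring
  · rw [← Real.rpow_natCast, ← Real.rpow_mul ht0.le, ← Real.rpow_neg ht0.le]
    apply Real.rpow_le_rpow_of_exponent_le ht
    push_cast
    nlinarith
  · rw [← Real.rpow_natCast, ← Real.rpow_natCast, ← Real.rpow_mul ht0.le, ← Real.rpow_mul ht0.le,
      ← Real.rpow_add ht0]
    congr 1
    push_cast
    linarith

open MeasureTheory in
lemma ker_int {n : ℕ} (hn : 4 ≤ n) : ∃ I1 > 0, ∀ s > (0:ℝ),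
    Integrable (fun x : ℝ => (1 + s * |x|) ^ (-del n)) ∧
    ∫ x : ℝ, (1 + s * |x|) ^ (-del n) ≤ s⁻¹ * I1 := by
  have hd := del_gt hn
  have hi : Integrable (fun x : ℝ => (1 + ‖x‖) ^ (-del n)) :=
    integrable_one_add_norm (by simpa using hd)
  refine ⟨(∫ x : ℝ, (1 + ‖x‖) ^ (-del n)) + 1, ?_, ?_⟩
  · have : 0 ≤ ∫ x : ℝ, (1 + ‖x‖) ^ (-del n) := integral_nonneg (fun x => by positivity)
    linarith
  · intro s hs
    have e : (fun x : ℝ => (1 + s * |x|) ^ (-del n)) = fun x : ℝ => (1 + ‖s * x‖) ^ (-del n) := by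
      funext x
      rw [Real.norm_eq_abs, abs_mul, abs_of_pos hs]
    rw [e]
    refine ⟨hi.comp_mul_left' hs.ne', ?_⟩
    rw [Measure.integral_comp_mul_left (fun x : ℝ => (1 + ‖x‖) ^ (-del n)) s, abs_of_pos (by positivity), smul_eq_mul]
    apply mul_le_mul_of_nonneg_left _ (by positivity)
    linarith

open MeasureTheory in
lemma ker_int2 : ∃ I2 > 0, Integrable (fun x : ℝ => (1 + |x|) ^ (-(2:ℝ))) ∧
    ∫ x : ℝ, (1 + |x|) ^ (-(2:ℝ)) ≤ I2 := by
  have hi : Integrable (fun x : ℝ => (1 + ‖x‖) ^ (-(2:ℝ))) :=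
    integrable_one_add_norm (by simp)
  have : 0 ≤ ∫ x : ℝ, (1 + |x|) ^ (-(2:ℝ)) := integral_nonneg (fun x => by positivity)
  exact ⟨(∫ x : ℝ, (1 + |x|) ^ (-(2:ℝ))) + 1, by linarith, hi, by linarith⟩

open MeasureTheory in
lemma final_int {n : ℕ} (hn : 4 ≤ n) {η μ h hd : ℝ → ℝ} {C : ℝ} (hC : 0 < C)
    (hJ : ∀ x ≠ 0, ∀ t ≥ 1, t * IFun n η μ h x t
      = JJ n η μ h hd (t ^ gam n) (t ^ (-eps n)) (|x| / Real.sqrt t))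
    (hB : ∀ s e y, Sc n s e → 0 < y → |JJ n η μ h hd s e y|
      ≤ C * ((s ^ 3)⁻¹ * (1 + s * y) ^ (-del n) + (s ^ 4)⁻¹ * (1 + y) ^ (-(2:ℝ)))) :
    ∃ cI : ℝ, 0 < cI ∧ ∀ t ≥ (1 : ℝ),
      (∫ x : ℝ, |IFun n η μ h (Real.sqrt t * x) t|) ≤ cI * t ^ (-(1 + 4 * gam n)) := by
  obtain ⟨I1, hI1, hk1⟩ := ker_int hn
  obtain ⟨I2, hI2, hk2i, hk2⟩ := ker_int2
  refine ⟨C * (I1 + I2), by positivity, ?_⟩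
  intro t ht
  have ht0 : 0 < t := by linarith
  have S := Sc_of hn ht
  set s := t ^ gam n with hs
  have hs0 : 0 < s := by positivity
  obtain ⟨hk1i, hk1b⟩ := hk1 s hs0
  have hsq : 0 < Real.sqrt t := Real.sqrt_pos.mpr ht0
  have hpt : ∀ᵐ x : ℝ, |IFun n η μ h (Real.sqrt t * x) t|
      ≤ t⁻¹ * (C * ((s ^ 3)⁻¹ * (1 + s * |x|) ^ (-del n) + (s ^ 4)⁻¹ * (1 + |x|) ^ (-(2:ℝ)))) := by
    have hne : ∀ᵐ x : ℝ, x ≠ 0 := by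
      rw [ae_iff]; simp
    filter_upwards [hne] with x hx
    have h1 := hJ (Real.sqrt t * x) (mul_ne_zero hsq.ne' hx) t ht
    have h2 : |Real.sqrt t * x| / Real.sqrt t = |x| := by
      rw [abs_mul, abs_of_pos hsq]; field_simp
    rw [h2] at h1
    have h3 := hB s (t ^ (-eps n)) |x| S (abs_pos.mpr hx)
    rw [← h1, abs_mul, abs_of_pos ht0] at h3
    rw [le_inv_mul_iff₀ ht0]
    exact h3
  have hinteg : Integrable (fun x : ℝ => t⁻¹ * (C * ((s ^ 3)⁻¹ * (1 + s * |x|) ^ (-del n)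
      + (s ^ 4)⁻¹ * (1 + |x|) ^ (-(2:ℝ))))) :=
    (((hk1i.const_mul _).add (hk2i.const_mul _)).const_mul C).const_mul _
  refine (integral_mono_of_nonneg (Eventually.of_forall fun x => abs_nonneg _) hinteg hpt).trans ?_
  rw [integral_const_mul, integral_const_mul, integral_add (hk1i.const_mul _) (hk2i.const_mul _),
    integral_const_mul, integral_const_mul]
  have e1 : t ^ (-(1 + 4 * gam n)) = t⁻¹ * (s ^ 4)⁻¹ := by
    rw [hs, ← Real.rpow_natCast, ← Real.rpow_mul ht0.le, ← Real.rpow_neg ht0.le, ← Real.rpow_neg_one,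
      ← Real.rpow_add ht0]
    congr 1; push_cast; ring
  rw [e1]
  have a1 : (s ^ 3)⁻¹ * ∫ x : ℝ, (1 + s * |x|) ^ (-del n) ≤ (s ^ 4)⁻¹ * I1 := by
    refine (mul_le_mul_of_nonneg_left hk1b (by positivity)).trans (le_of_eq ?_)
    field_simp
  have a2 : (s ^ 4)⁻¹ * ∫ x : ℝ, (1 + |x|) ^ (-(2:ℝ)) ≤ (s ^ 4)⁻¹ * I2 :=
    mul_le_mul_of_nonneg_left hk2 (by positivity)
  calc _ ≤ t⁻¹ * (C * ((s ^ 4)⁻¹ * I1 + (s ^ 4)⁻¹ * I2)) := by gcongr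
    _ = _ := by ring

lemma mu_far {n : ℕ} (hn : 4 ≤ n) {μ : ℝ → ℝ} (hc : ContinuousOn μ (Ici 1))
    (hlim : Tendsto (fun y : ℝ => y ^ (2 * eps n) * μ y) atTop (𝓝 0)) :
    ∃ C > 0, ∀ y ≥ 1, |μ y| ≤ C * y ^ (-(2 * eps n)) := by
  have hev : ∀ᶠ y in atTop, |y ^ (2 * eps n) * μ y| < 1 := by
    have := hlim.abs
    rw [abs_zero] at this
    exact this.eventually_lt_const one_pos
  obtain ⟨a, ha⟩ := (hev.and (eventually_ge_atTop 1)).exists_forall_of_atTop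
  refine aux_ext_bound (f := μ) (w := fun y => y ^ (-(2 * eps n))) (C := 1) (a := a) hc ?_ ?_ ?_
  · exact ContinuousOn.rpow_const continuousOn_id
      (fun y hy => Or.inl (by have : (1:ℝ) ≤ y := hy
                              linarith))
  · intro z hz
    have : 0 < z := by linarith
    positivity
  · intro z hz
    obtain ⟨h1, h2⟩ := ha z hz
    have hz0 : 0 < z := by linarith
    rw [abs_mul, abs_of_pos (by positivity)] at h1
    rw [Real.rpow_neg hz0.le, one_mul, ← one_div, le_div_iff₀ (by positivity)]
    linarith

end

section
open Filter Topology Set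
lemma mu_facts {f : ℝ → ℝ} (hf : ContDiffOn ℝ 2 f (Ioi 0)) :
    (∀ y > 0, HasDerivAt f (deriv f y) y) ∧
    (∀ y > 0, HasDerivAt (deriv f) (deriv (deriv f) y) y) := by
  have h1 : ContDiffOn ℝ 1 (deriv f) (Ioi 0) := hf.deriv_of_isOpen isOpen_Ioi (by norm_num)
  refine ⟨fun y hy => ?_, fun y hy => ?_⟩
  · exact ((hf.differentiableOn (by norm_num) y hy).differentiableAt (Ioi_mem_nhds hy)).hasDerivAt
  · exact ((h1.differentiableOn (by norm_num) y hy).differentiableAt (Ioi_mem_nhds hy)).hasDerivAt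

lemma main_bound (n : ℕ) (hn : 4 ≤ n) (η μ h : ℝ → ℝ)
    (hη : IsReactiveProfile n η) (hμ : IsDiffusiveProfile n μ) (hh : IsCorrector n η h) :
    ∃ cI : ℝ, 0 < cI ∧ ∀ t ≥ (1 : ℝ),
      (∫ x : ℝ, |IFun n η μ h (Real.sqrt t * x) t|) ≤ cI * t ^ (-(1 + 4 * gam n)) := by
  obtain ⟨ηc, ηp, ηe, -, ηl⟩ := hη
  obtain ⟨μc, μp, μe, μl0, μl⟩ := hμ
  obtain ⟨hc, he, -, hl⟩ := hh
  obtain ⟨e1, e2, e3, e4⟩ := c2_facts ηc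
  obtain ⟨k1, k2, k3, k4⟩ := c2_facts hc
  obtain ⟨m1, m2⟩ := mu_facts μc
  have e2' : ∀ z > 0, HasDerivAt (derivWithin η (Ici 0)) ((2 * kap * z * η z + (η z) ^ 2) ^ n) z :=
    fun z hz => (e2 z hz).congr_deriv (ηe z (le_of_lt hz))
  have k2' : ∀ z > 0, HasDerivAt (derivWithin h (Ici 0))
      ((n : ℝ) * (2 * kap * z * η z + (η z) ^ 2) ^ (n - 1)
          * ((2 * kap * z + 2 * η z) * h z + 2 * kap3 * z ^ 3 * η z)
          - gam n * η z - alph n * z * derivWithin η (Ici 0) z) z :=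
    fun z hz => (k2 z hz).congr_deriv (by linarith [he z (le_of_lt hz)])
  have m2' : ∀ y > 0, HasDerivAt (deriv μ)
      ((2 * mu1 y * μ y) ^ n - y / 2 * deriv μ y - eps n * μ y) y :=
    fun y hy => (m2 y hy).congr_deriv (by linarith [μe y hy])
  obtain ⟨M, hM, hM2⟩ := eta_asymp hn e1 e2' (fun z hz => ηp z (le_of_lt hz)) ηl
  obtain ⟨M', hM', hM2'⟩ := phi2_asymp hn hM hM2 k1 k2' hl
  have A : Asy n η h (derivWithin h (Ici 0)) M M' :=
    ⟨hM, hM', fun z hz => (hM2 z hz).1, fun z hz => (hM2 z hz).2.1, fun z hz => (hM2 z hz).2.2.1,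
      fun z hz => (hM2 z hz).2.2.2.1, fun z hz => (hM2 z hz).2.2.2.2.1,
      fun z hz => (hM2 z hz).2.2.2.2.2.1, fun z hz => (hM2' z hz).1, fun z hz => (hM2' z hz).2⟩
  obtain ⟨Cμ, -, hCμ⟩ := mu_near hn μp m1 m2' μl0
  obtain ⟨Cm, hCm0, hCm⟩ := mu_far hn
    (μc.continuousOn.mono (fun y (hy : (1:ℝ) ≤ y) => (by linarith : (0:ℝ) < y))) μl
  obtain ⟨C1, hC1, r1⟩ := region1 hn e3 k3 k4 hCμ
  obtain ⟨C2, hC2, r2⟩ := region2 hn A hCμ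
  obtain ⟨C3, hC3, r3⟩ := region3 hn A hCm0 hCm
  obtain ⟨C, hC, hB⟩ := JJ_bound hn hC1 hC2 hC3 r1 r2 r3
  exact final_int hn hC (fun x hx t ht => J_eq hn e1 e2' m1 m2' k1 k2' hx ht) hB

end

/-- Bound on the inhomogeneous term: ∫ |I(√t x, t)| dx ≤ c_I t^{−1−4γ} for t ≥ 1. -/
theorem inhomogeneous_term_bound (n : ℕ) (hn : 4 ≤ n) (η μ h : ℝ → ℝ)
    (hη : IsReactiveProfile n η) (hμ : IsDiffusiveProfile n μ) (hh : IsCorrector n η h) :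
    ∃ cI : ℝ, 0 < cI ∧ ∀ t ≥ (1 : ℝ),
      (∫ x : ℝ, |IFun n η μ h (Real.sqrt t * x) t|) ≤ cI * t ^ (-(1 + 4 * gam n)) := by
  exact main_bound n hn η μ h hη hμ hh
end

section
/- Let n ≥ 4 be an integer and γ = 1/(2n+1). Let F₀, F₁, G₀, G₁ be real numbers with F₀ + F₁ ≥ 0 and G₀ + G₁ ≥ 0, and let F, G : [0,∞) → ℝ be continuous functions with sup_{x>0} |F(x)|(x^{−F₀} + x^{F₁}) < ∞ and sup_{x>0} |G(x)|(x^{−G₀} + x^{G₁}) < ∞. Assume 1 − G₁ < F₁, 1 + G₀ > −F₀, and F₁ ≠ 1 + G₀. Then there is a constant C > 0 such that for all t ≥ 1, ∫₀^∞ |G(x) F(t^γ x)| dx ≤ C t^{−ξ}, where ξ = γ · min{F₁, 1 + G₀}. -/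
open MeasureTheory in
lemma phi_int (a b : ℝ) (ha : -1 < a) (hb : b < -1) :
    IntegrableOn (fun x : ℝ => if x ≤ 1 then x ^ a else x ^ b) (Set.Ioi 0) := by
  rw [← Set.Ioc_union_Ioi_eq_Ioi (zero_le_one' ℝ)]
  apply IntegrableOn.union
  · have h : IntegrableOn (fun x : ℝ => x ^ a) (Set.Ioc 0 1) :=
      (intervalIntegrable_iff_integrableOn_Ioc_of_le zero_le_one).1
        (intervalIntegral.intervalIntegrable_rpow' ha)
    refine h.congr_fun (fun x hx => ?_) measurableSet_Ioc
    simp [hx.2]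
  · have h := integrableOn_Ioi_rpow_of_lt hb zero_lt_one
    refine h.congr_fun (fun x hx => ?_) measurableSet_Ioi
    simp [not_le.2 (Set.mem_Ioi.1 hx)]

lemma V_bd {f : ℝ → ℝ} {p q M : ℝ}
    (h : ∀ x > (0:ℝ), |f x| * (x ^ (-p) + x ^ q) ≤ M) :
    0 ≤ M ∧ ∀ x > (0:ℝ), |f x| ≤ M * x ^ p ∧ |f x| ≤ M * x ^ (-q) := by
  refine ⟨le_trans (by positivity) (h 1 one_pos), fun x hx => ?_⟩
  have h0 := h x hx
  have a1 : 0 < x ^ (-p) := Real.rpow_pos_of_pos hx _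
  have a2 : 0 < x ^ q := Real.rpow_pos_of_pos hx _
  have a3 : 0 < x ^ p := Real.rpow_pos_of_pos hx _
  have a4 : 0 < x ^ (-q) := Real.rpow_pos_of_pos hx _
  have e1 : x ^ (-p) * x ^ p = 1 := by rw [← Real.rpow_add hx]; simp
  have e2 : x ^ q * x ^ (-q) = 1 := by rw [← Real.rpow_add hx]; simp
  have hf := abs_nonneg (f x)
  constructor
  · calc |f x| = |f x| * x ^ (-p) * x ^ p := by rw [mul_assoc, e1, mul_one]
      _ ≤ M * x ^ p := by
        gcongr
        nlinarith [mul_nonneg hf a2.le]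
  · calc |f x| = |f x| * x ^ q * x ^ (-q) := by rw [mul_assoc, e2, mul_one]
      _ ≤ M * x ^ (-q) := by
        gcongr
        nlinarith [mul_nonneg hf a1.le]

/-- Integral estimate (Lemma 5.3 of the paper): if F ∈ 𝒱(F₀,F₁), G ∈ 𝒱(G₀,G₁) with
1 − G₁ < F₁, 1 + G₀ > −F₀ and F₁ ≠ 1 + G₀, then
∫₀^∞ |G(x) F(t^γ x)| dx ≤ C t^{−ξ} for all t ≥ 1, where ξ = γ·min{F₁, 1+G₀}. -/
theorem integral_scaling_estimate (n : ℕ) (hn : 4 ≤ n)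
    (F0 F1 G0 G1 : ℝ) (hF01 : 0 ≤ F0 + F1) (hG01 : 0 ≤ G0 + G1)
    (F G : ℝ → ℝ) (hFc : ContinuousOn F (Set.Ici 0)) (hGc : ContinuousOn G (Set.Ici 0))
    (hFb : ∃ M : ℝ, ∀ x > (0:ℝ), |F x| * (x ^ (-F0) + x ^ F1) ≤ M)
    (hGb : ∃ M : ℝ, ∀ x > (0:ℝ), |G x| * (x ^ (-G0) + x ^ G1) ≤ M)
    (h1 : 1 - G1 < F1) (h2 : -F0 < 1 + G0) (h3 : F1 ≠ 1 + G0) :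
    ∃ C : ℝ, 0 < C ∧ ∀ t ≥ (1:ℝ),
      (∫ x in Set.Ioi (0:ℝ), |G x * F (t ^ gam n * x)|)
        ≤ C * t ^ (-(gam n * min F1 (1 + G0))) := by
  obtain ⟨M, hM⟩ := hFb
  obtain ⟨N, hN⟩ := hGb
  obtain ⟨hM0, hF⟩ := V_bd hM
  obtain ⟨hN0, hG⟩ := V_bd hN
  have key : ∃ K : ℝ, 0 ≤ K ∧ ∀ s ≥ (1:ℝ),
      (∫ x in Set.Ioi (0:ℝ), |G x * F (s * x)|) ≤ K * s ^ (-(min F1 (1 + G0))) := by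
    rcases lt_or_gt_of_ne h3 with h | h
    · set φ : ℝ → ℝ := fun x => if x ≤ 1 then x ^ (G0 - F1) else x ^ (-G1 - F1) with hφ
      have hi := phi_int (G0 - F1) (-G1 - F1) (by linarith) (by linarith)
      have hφ0 : ∀ x ∈ Set.Ioi (0:ℝ), 0 ≤ φ x := by
        intro x hx
        have hx' : (0:ℝ) < x := hx
        simp only [hφ]
        split_ifs <;> positivity
      refine ⟨M * N * ∫ x in Set.Ioi (0:ℝ), φ x,
        mul_nonneg (mul_nonneg hM0 hN0)
          (MeasureTheory.setIntegral_nonneg measurableSet_Ioi hφ0), fun s hs => ?_⟩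
      have hs0 : 0 < s := by linarith
      rw [min_eq_left h.le]
      calc (∫ x in Set.Ioi (0:ℝ), |G x * F (s * x)|)
          ≤ ∫ x in Set.Ioi (0:ℝ), (M * N * s ^ (-F1)) * φ x := by
            apply MeasureTheory.integral_mono_of_nonneg
            · exact Filter.Eventually.of_forall fun x => abs_nonneg _
            · exact hi.const_mul _
            · refine (MeasureTheory.ae_restrict_iff' measurableSet_Ioi).2
                (Filter.Eventually.of_forall fun x hx => ?_)
              have hx' : (0:ℝ) < x := hx
              have hf := (hF (s * x) (by positivity)).2
              rw [Real.mul_rpow hs0.le hx'.le] at hf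
              obtain ⟨g1, g2⟩ := hG x hx'
              show |G x * F (s * x)| ≤ (M * N * s ^ (-F1)) * φ x
              rw [abs_mul]
              simp only [hφ]
              split_ifs
              · calc |G x| * |F (s * x)| ≤ (N * x ^ G0) * (M * (s ^ (-F1) * x ^ (-F1))) := by
                      gcongr
                  _ = _ := by rw [sub_eq_add_neg, Real.rpow_add hx']; ring
              · calc |G x| * |F (s * x)| ≤ (N * x ^ (-G1)) * (M * (s ^ (-F1) * x ^ (-F1))) := by
                      gcongr
                  _ = _ := by rw [sub_eq_add_neg (-G1), Real.rpow_add hx']; ring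
        _ = _ := by rw [MeasureTheory.integral_const_mul]; ring
    · set φ : ℝ → ℝ := fun x => if x ≤ 1 then x ^ (G0 + F0) else x ^ (G0 - F1) with hφ
      have hi := phi_int (G0 + F0) (G0 - F1) (by linarith) (by linarith)
      have hφ0 : ∀ x ∈ Set.Ioi (0:ℝ), 0 ≤ φ x := by
        intro x hx
        have hx' : (0:ℝ) < x := hx
        simp only [hφ]
        split_ifs <;> positivity
      refine ⟨M * N * ∫ x in Set.Ioi (0:ℝ), φ x,
        mul_nonneg (mul_nonneg hM0 hN0)
          (MeasureTheory.setIntegral_nonneg measurableSet_Ioi hφ0), fun s hs => ?_⟩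
      have hs0 : 0 < s := by linarith
      rw [min_eq_right h.le]
      have hi' : MeasureTheory.IntegrableOn (fun x => φ (s * x)) (Set.Ioi 0) := by
        rw [MeasureTheory.integrableOn_Ioi_comp_mul_left_iff φ 0 hs0, mul_zero]
        exact hi
      have hc := MeasureTheory.integral_comp_mul_left_Ioi φ 0 hs0
      rw [mul_zero, smul_eq_mul] at hc
      calc (∫ x in Set.Ioi (0:ℝ), |G x * F (s * x)|)
          ≤ ∫ x in Set.Ioi (0:ℝ), (M * N * s ^ (-G0)) * φ (s * x) := by
            apply MeasureTheory.integral_mono_of_nonneg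
            · exact Filter.Eventually.of_forall fun x => abs_nonneg _
            · exact hi'.const_mul _
            · refine (MeasureTheory.ae_restrict_iff' measurableSet_Ioi).2
                (Filter.Eventually.of_forall fun x hx => ?_)
              have hx' : (0:ℝ) < x := hx
              have hsx : 0 < s * x := by positivity
              obtain ⟨f1, f2⟩ := hF (s * x) hsx
              have g1 := (hG x hx').1
              have e : x ^ G0 = s ^ (-G0) * (s * x) ^ G0 := by
                rw [Real.mul_rpow hs0.le hx'.le, ← mul_assoc, ← Real.rpow_add hs0]
                simp
              rw [e] at g1
              show |G x * F (s * x)| ≤ (M * N * s ^ (-G0)) * φ (s * x)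
              rw [abs_mul]
              simp only [hφ]
              split_ifs
              · calc |G x| * |F (s * x)|
                      ≤ (N * (s ^ (-G0) * (s * x) ^ G0)) * (M * (s * x) ^ F0) := by
                      gcongr
                  _ = _ := by rw [Real.rpow_add hsx]; ring
              · calc |G x| * |F (s * x)|
                      ≤ (N * (s ^ (-G0) * (s * x) ^ G0)) * (M * (s * x) ^ (-F1)) := by
                      gcongr
                  _ = _ := by rw [sub_eq_add_neg, Real.rpow_add hsx]; ring
        _ = _ := by
            have e : s ^ (-(1 + G0)) = s⁻¹ * s ^ (-G0) := by
              rw [neg_add, Real.rpow_add hs0, Real.rpow_neg_one]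
            rw [MeasureTheory.integral_const_mul, hc, e]; ring
  obtain ⟨K, hK0, hK⟩ := key
  refine ⟨K + 1, by linarith, fun t ht => ?_⟩
  have ht0 : 0 ≤ t := by linarith
  have hg : 0 ≤ gam n := by unfold gam; positivity
  have := hK (t ^ gam n) (Real.one_le_rpow ht hg)
  rw [← Real.rpow_mul ht0, mul_neg] at this
  refine this.trans ?_
  gcongr
  linarith
end
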